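/- Assume, in addition to the standing assumptions for existence, that r ↦ g(t,x,r) is decreasing for every t ≥ 0 and x ∈ Bd(D), and that there is a continuous function m : [0,∞) → [0,∞) with m(0) = 0 such that |f(t,x,r,p) − f(t,y,r,p)| ≤ m(|x − y|(1 + |p|)) for all t ≥ 0, x, y ∈ cl(D), r ∈ ℝ, p ∈ ℝ^d. Let T > 0, let u be a viscosity subsolution and v a viscosity supersolution of the parabolic variational inequality with u(0,x) = v(0,x) = h(x) for all x ∈ cl(D). Then u(t,x) ≤ v(t,x) for all (t,x) ∈ [0,T]×cl(D). -/

import Mathlib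

open Filter Topology Matrix

noncomputable section

/-- Euclidean dot product on `Fin d → ℝ`. -/
def dotp {d : ℕ} (v w : Fin d → ℝ) : ℝ := ∑ i, v i * w i

/-- Euclidean norm on `Fin d → ℝ`. -/
def eunorm {d : ℕ} (v : Fin d → ℝ) : ℝ := Real.sqrt (∑ i, (v i)^2)

/-- Frobenius norm of a matrix. -/
def matNorm {d : ℕ} (M : Matrix (Fin d) (Fin d) ℝ) : ℝ :=
  Real.sqrt (∑ i, ∑ j, (M i j)^2)

/-- Gradient vector of a real function on `Fin d → ℝ`. -/
def gradVec {d : ℕ} (ℓ : (Fin d → ℝ) → ℝ) (x : Fin d → ℝ) : Fin d → ℝ :=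
  fun i => fderiv ℝ ℓ x (Pi.single i 1)

/-- Subdifferential of a proper convex function `φ : ℝ → EReal`. -/
def subd (φ : ℝ → EReal) (x : ℝ) : Set ℝ :=
  {v | ∀ y : ℝ, ((v * (y - x) : ℝ) : EReal) + φ x ≤ φ y}

/-- `φ : ℝ → (−∞,+∞]` is proper, convex and lower semicontinuous. -/
def ProperConvexLsc (φ : ℝ → EReal) : Prop :=
  (∃ r : ℝ, φ r ≠ ⊤) ∧ (∀ r : ℝ, φ r ≠ ⊥) ∧ LowerSemicontinuous φ ∧
    ∀ x y a b : ℝ, 0 ≤ a → 0 ≤ b → a + b = 1 →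
      φ (a * x + b * y) ≤ (a : EReal) * φ x + (b : EReal) * φ y

/-- Left derivative of a convex `φ : ℝ → EReal` (the limit as `h ↓ 0` of the
difference quotients `(φ(y) − φ(y−h))/h`, which is their supremum). -/
def leftD (φ : ℝ → EReal) (y : ℝ) : EReal :=
  ⨆ h : Set.Ioi (0:ℝ), (((1 : ℝ)/(h : ℝ)) : EReal) * (φ y - φ (y - (h:ℝ)))

/-- Right derivative of a convex `φ : ℝ → EReal` (the limit as `h ↓ 0` of the
difference quotients `(φ(y+h) − φ(y))/h`, which is their infimum). -/
def rightD (φ : ℝ → EReal) (y : ℝ) : EReal :=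
  ⨅ h : Set.Ioi (0:ℝ), (((1 : ℝ)/(h : ℝ)) : EReal) * (φ (y + (h:ℝ)) - φ y)

/-- `(p,q,X)` belongs to the parabolic superjet `P^{2,+}u(t,x)` relative to
`[0,∞) × clD`. -/
def InSuperjet {d : ℕ} (clD : Set (Fin d → ℝ)) (u : ℝ → (Fin d → ℝ) → ℝ)
    (t : ℝ) (x : Fin d → ℝ) (p : ℝ) (q : Fin d → ℝ)
    (X : Matrix (Fin d) (Fin d) ℝ) : Prop :=
  X.IsSymm ∧
  ∃ o : ℝ → ℝ, ContinuousOn o (Set.Ici 0) ∧ o 0 = 0 ∧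
    Tendsto (fun r => o r / r) (𝓝[>] (0:ℝ)) (𝓝 0) ∧
    ∃ δ > (0:ℝ), ∀ s : ℝ, 0 ≤ s → ∀ y ∈ clD,
      |s - t| < δ → eunorm (y - x) < δ →
      u s y ≤ u t x + p * (s - t) + dotp q (y - x)
        + (1/2) * dotp (X.mulVec (y - x)) (y - x)
        + o (|s - t| + (eunorm (y - x))^2)

/-- `(p,q,X)` belongs to the parabolic subjet `P^{2,−}u(t,x)` relative to
`[0,∞) × clD`. -/
def InSubjet {d : ℕ} (clD : Set (Fin d → ℝ)) (u : ℝ → (Fin d → ℝ) → ℝ)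
    (t : ℝ) (x : Fin d → ℝ) (p : ℝ) (q : Fin d → ℝ)
    (X : Matrix (Fin d) (Fin d) ℝ) : Prop :=
  X.IsSymm ∧
  ∃ o : ℝ → ℝ, ContinuousOn o (Set.Ici 0) ∧ o 0 = 0 ∧
    Tendsto (fun r => o r / r) (𝓝[>] (0:ℝ)) (𝓝 0) ∧
    ∃ δ > (0:ℝ), ∀ s : ℝ, 0 ≤ s → ∀ y ∈ clD,
      |s - t| < δ → eunorm (y - x) < δ →
      u t x + p * (s - t) + dotp q (y - x)
        + (1/2) * dotp (X.mulVec (y - x)) (y - x)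
        + o (|s - t| + (eunorm (y - x))^2) ≤ u s y

/-- `V(t,x,p,q,X) = p − ½Tr((σσ*)(t,x)X) − ⟨b(t,x),q⟩ − f(t,x,u(t,x),qσ(t,x))`. -/
def Vop {d : ℕ} (b : ℝ → (Fin d → ℝ) → (Fin d → ℝ))
    (σ : ℝ → (Fin d → ℝ) → Matrix (Fin d) (Fin d) ℝ)
    (f : ℝ → (Fin d → ℝ) → ℝ → (Fin d → ℝ) → ℝ)
    (u : ℝ → (Fin d → ℝ) → ℝ)
    (t : ℝ) (x : Fin d → ℝ) (p : ℝ) (q : Fin d → ℝ)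
    (X : Matrix (Fin d) (Fin d) ℝ) : ℝ :=
  p - (1/2) * Matrix.trace (σ t x * (σ t x)ᵀ * X) - dotp (b t x) q
    - f t x (u t x) (Matrix.vecMul q (σ t x))

/-- Viscosity subsolution of the parabolic variational inequality. -/
def IsViscSubsolution {d : ℕ} (ℓ : (Fin d → ℝ) → ℝ)
    (b : ℝ → (Fin d → ℝ) → (Fin d → ℝ))
    (σ : ℝ → (Fin d → ℝ) → Matrix (Fin d) (Fin d) ℝ)
    (f : ℝ → (Fin d → ℝ) → ℝ → (Fin d → ℝ) → ℝ)
    (g : ℝ → (Fin d → ℝ) → ℝ → ℝ)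
    (h : (Fin d → ℝ) → ℝ)
    (φ ψ : ℝ → EReal)
    (u : ℝ → (Fin d → ℝ) → ℝ) : Prop :=
  ContinuousOn (fun tx : ℝ × (Fin d → ℝ) => u tx.1 tx.2)
      (Set.Ici 0 ×ˢ {x | ℓ x ≤ 0}) ∧
  (∀ x, ℓ x ≤ 0 → u 0 x = h x) ∧
  (∀ t > (0:ℝ), ∀ x, ℓ x ≤ 0 → φ (u t x) ≠ ⊤) ∧
  (∀ t > (0:ℝ), ∀ x, ℓ x = 0 → ψ (u t x) ≠ ⊤) ∧
  (∀ t > (0:ℝ), ∀ x, ℓ x ≤ 0 → ∀ p q X,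
    InSuperjet {x | ℓ x ≤ 0} u t x p q X →
      (ℓ x < 0 →
        ((Vop b σ f u t x p q X : ℝ) : EReal) + leftD φ (u t x) ≤ 0) ∧
      (ℓ x = 0 →
        (((Vop b σ f u t x p q X : ℝ) : EReal) + leftD φ (u t x) ≤ 0 ∨
          ((dotp (gradVec ℓ x) q - g t x (u t x) : ℝ) : EReal)
            + leftD ψ (u t x) ≤ 0)))

/-- Viscosity supersolution of the parabolic variational inequality. -/
def IsViscSupersolution {d : ℕ} (ℓ : (Fin d → ℝ) → ℝ)
    (b : ℝ → (Fin d → ℝ) → (Fin d → ℝ))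
    (σ : ℝ → (Fin d → ℝ) → Matrix (Fin d) (Fin d) ℝ)
    (f : ℝ → (Fin d → ℝ) → ℝ → (Fin d → ℝ) → ℝ)
    (g : ℝ → (Fin d → ℝ) → ℝ → ℝ)
    (h : (Fin d → ℝ) → ℝ)
    (φ ψ : ℝ → EReal)
    (u : ℝ → (Fin d → ℝ) → ℝ) : Prop :=
  ContinuousOn (fun tx : ℝ × (Fin d → ℝ) => u tx.1 tx.2)
      (Set.Ici 0 ×ˢ {x | ℓ x ≤ 0}) ∧
  (∀ x, ℓ x ≤ 0 → u 0 x = h x) ∧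
  (∀ t > (0:ℝ), ∀ x, ℓ x ≤ 0 → φ (u t x) ≠ ⊤) ∧
  (∀ t > (0:ℝ), ∀ x, ℓ x = 0 → ψ (u t x) ≠ ⊤) ∧
  (∀ t > (0:ℝ), ∀ x, ℓ x ≤ 0 → ∀ p q X,
    InSubjet {x | ℓ x ≤ 0} u t x p q X →
      (ℓ x < 0 →
        0 ≤ ((Vop b σ f u t x p q X : ℝ) : EReal) + rightD φ (u t x)) ∧
      (ℓ x = 0 →
        (0 ≤ ((Vop b σ f u t x p q X : ℝ) : EReal) + rightD φ (u t x) ∨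
          0 ≤ ((dotp (gradVec ℓ x) q - g t x (u t x) : ℝ) : EReal)
            + rightD ψ (u t x))))

theorem sf_envelope {E : Type*} [NormedAddCommGroup E] [InnerProductSpace ℝ E]
    [FiniteDimensional ℝ E] (K : Set E) (hK : IsCompact K) (hne : K.Nonempty)
    (u : E → ℝ) (hu : ContinuousOn u K) (l : ℝ) (hl : 0 < l) :
    ∃ H : E → ℝ, ∃ DH : E → E,
      (∀ ξ, HasFDerivAt H (innerSL ℝ (DH ξ)) ξ) ∧
      (∃ C : NNReal, LipschitzWith C DH) ∧
      (∀ x ∈ K, ∀ ξ, u x - ‖x - ξ‖ ^ 2 / l ≤ H ξ) ∧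
      (∀ ξ, ∃ x ∈ K, H ξ ≤ u x - ‖x - ξ‖ ^ 2 / (2 * l)) ∧
      (∀ ξ : E, ∀ b : ℝ, b * l < 2 →
        (∀ ξ', H ξ' ≤ H ξ + inner ℝ (DH ξ) (ξ' - ξ) + b / 2 * ‖ξ' - ξ‖ ^ 2) →
        ∃ x ∈ K, x = ξ + (l / 2) • DH ξ ∧ H ξ = u x - ‖x - ξ‖ ^ 2 / l) := by
  have hsel : ∀ y : E, ∃ x ∈ K, ∀ x' ∈ K,
      u x' - ‖x' - y‖ ^ 2 / (2 * l) ≤ u x - ‖x - y‖ ^ 2 / (2 * l) := by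
    intro y
    obtain ⟨x, hx, hmax⟩ := hK.exists_isMaxOn (f := fun x => u x - ‖x - y‖ ^ 2 / (2 * l)) hne
      (hu.sub (by fun_prop))
    exact ⟨x, hx, fun x' hx' => hmax hx'⟩
  choose X hXK hX using hsel
  obtain ⟨G, hG⟩ : ∃ G : E → ℝ, ∀ y, G y = u (X y) - ‖X y - y‖ ^ 2 / (2 * l) := ⟨_, fun _ => rfl⟩
  have hGle : ∀ y, ∀ x ∈ K, u x - ‖x - y‖ ^ 2 / (2 * l) ≤ G y := by
    intro y x hx; rw [hG]; exact hX y x hx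
  have hGsub : ∀ y y', G y + inner ℝ (X y - y) (y' - y) / l - ‖y' - y‖ ^ 2 / (2 * l) ≤ G y' := by
    intro y y'
    have h1 := hGle y' (X y) (hXK y)
    have h2 : ‖X y - y'‖ ^ 2 = ‖X y - y‖ ^ 2 - 2 * inner ℝ (X y - y) (y' - y) + ‖y' - y‖ ^ 2 := by
      rw [← norm_sub_sq_real]; congr 2; abel
    rw [h2] at h1
    rw [hG y]
    have : (‖X y - y‖ ^ 2 - 2 * inner ℝ (X y - y) (y' - y) + ‖y' - y‖ ^ 2) / (2 * l)
      = ‖X y - y‖ ^ 2 / (2 * l) - inner ℝ (X y - y) (y' - y) / l + ‖y' - y‖ ^ 2 / (2 * l) := by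
      field_simp
    linarith
  have hGlsc : LowerSemicontinuous G := by
    intro y a ha
    have hc : Continuous fun y' : E =>
      G y + inner ℝ (X y - y) (y' - y) / l - ‖y' - y‖ ^ 2 / (2 * l) := by fun_prop
    have : ∀ᶠ y' in 𝓝 y, a < G y + inner ℝ (X y - y) (y' - y) / l - ‖y' - y‖ ^ 2 / (2 * l) := by
      apply hc.tendsto y |>.eventually_const_lt
      simpa using ha
    filter_upwards [this] with y' hy'
    exact hy'.trans_le (hGsub y y')
  have hmin : ∀ ξ : E, ∃ y, ∀ y', G y + ‖y - ξ‖ ^ 2 / l ≤ G y' + ‖y' - ξ‖ ^ 2 / l := by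
    intro ξ
    obtain ⟨y, hy, hm⟩ := LowerSemicontinuousOn.exists_isMinOn
      (f := fun y => G y + ‖y - ξ‖ ^ 2 / l) (s := Metric.closedBall (0:E) (2 * ‖X 0 - (2:ℝ) • ξ‖))
      ⟨0, by simp⟩ (isCompact_closedBall _ _)
      ((hGlsc.lowerSemicontinuousOn _).add (Continuous.lowerSemicontinuous (by fun_prop) |>.lowerSemicontinuousOn _))
    refine ⟨y, fun y' => ?_⟩
    by_cases hy' : y' ∈ Metric.closedBall (0:E) (2 * ‖X 0 - (2:ℝ) • ξ‖)
    · exact hm hy'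
    · have h0 : G y + ‖y - ξ‖ ^ 2 / l ≤ G 0 + ‖0 - ξ‖ ^ 2 / l := hm (by simp)
      refine h0.trans ?_
      have h1 := hGsub 0 y'
      simp only [Metric.mem_closedBall, dist_zero_right, not_le] at hy'
      simp only [sub_zero] at h1
      have h2 : ‖y' - ξ‖ ^ 2 = ‖y'‖ ^ 2 - 2 * inner ℝ y' ξ + ‖ξ‖ ^ 2 := norm_sub_sq_real _ _
      have h3 : inner ℝ (X 0 - (2:ℝ) • ξ) y' = inner ℝ (X 0) y' - 2 * inner ℝ y' ξ := by
        rw [inner_sub_left, real_inner_smul_left, real_inner_comm ξ y']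
      have h4 := abs_le.1 (abs_real_inner_le_norm (X 0 - (2:ℝ) • ξ) y')
      have h5 : 0 ≤ inner ℝ (X 0) y' - ‖y'‖ ^ 2 / 2 + ‖y'‖ ^ 2 - 2 * inner ℝ y' ξ := by
        nlinarith [norm_nonneg y']
      rw [zero_sub, norm_neg, h2]
      have h6 : 0 ≤ (inner ℝ (X 0) y' - ‖y'‖ ^ 2 / 2 + ‖y'‖ ^ 2 - 2 * inner ℝ y' ξ) / l :=
        div_nonneg h5 hl.le
      have h7 : (inner ℝ (X 0) y' - ‖y'‖ ^ 2 / 2 + ‖y'‖ ^ 2 - 2 * inner ℝ y' ξ) / l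
        = inner ℝ (X 0) y' / l - ‖y'‖ ^ 2 / (2 * l) +
          ((‖y'‖ ^ 2 - 2 * inner ℝ y' ξ + ‖ξ‖ ^ 2) / l - ‖ξ‖ ^ 2 / l) := by
        field_simp; ring
      linarith
  choose Y hY using hmin
  obtain ⟨H, hH⟩ : ∃ H : E → ℝ, ∀ ξ, H ξ = G (Y ξ) + ‖Y ξ - ξ‖ ^ 2 / l := ⟨_, fun _ => rfl⟩
  have hHle : ∀ ξ y, H ξ ≤ G y + ‖y - ξ‖ ^ 2 / l := by
    intro ξ y; rw [hH]; exact hY ξ y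
  -- strong growth at the minimiser
  have hgrow : ∀ ξ y, H ξ + ‖y - Y ξ‖ ^ 2 / (4 * l) ≤ G y + ‖y - ξ‖ ^ 2 / l := by
    intro ξ y
    obtain ⟨a, ha⟩ : ∃ a, a = Y ξ := ⟨_, rfl⟩
    obtain ⟨c, hc⟩ : ∃ c, c = (1/2:ℝ) • (a + y) := ⟨_, rfl⟩
    obtain ⟨D, hD⟩ : ∃ D, D = (1/2:ℝ) • (y - a) := ⟨_, rfl⟩
    have h1 := hGsub c a
    have h2 := hGsub c y
    have h3 := hHle ξ c
    have h4 := hH ξ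
    rw [← ha] at h4 ⊢
    have e1 : a - c = - D := by rw [hc, hD]; module
    have e2 : y - c = D := by rw [hc, hD]; module
    have e3 : a - ξ = (c - ξ) - D := by rw [hc, hD]; module
    have e4 : y - ξ = (c - ξ) + D := by rw [hc, hD]; module
    have e5 : y - a = (2:ℝ) • D := by rw [hD]; module
    rw [e1, inner_neg_right, norm_neg] at h1
    rw [e2] at h2
    rw [e3, norm_sub_sq_real] at h4
    rw [e4, e5, norm_add_sq_real, norm_smul, mul_pow]
    have n2 : ‖(2:ℝ)‖ ^ 2 = 4 := by norm_num
    rw [n2]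
    have g1 : (‖c - ξ‖ ^ 2 - 2 * inner ℝ (c - ξ) D + ‖D‖ ^ 2) / l =
      ‖c - ξ‖ ^ 2 / l - 2 * (inner ℝ (c - ξ) D / l) + ‖D‖ ^ 2 / l := by ring
    have g2 : (‖c - ξ‖ ^ 2 + 2 * inner ℝ (c - ξ) D + ‖D‖ ^ 2) / l =
      ‖c - ξ‖ ^ 2 / l + 2 * (inner ℝ (c - ξ) D / l) + ‖D‖ ^ 2 / l := by ring
    have g3 : 4 * ‖D‖ ^ 2 / (4 * l) = ‖D‖ ^ 2 / l := by field_simp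
    have g4 : ‖D‖ ^ 2 / (2 * l) = (‖D‖ ^ 2 / l) / 2 := by field_simp
    have g5 : -inner ℝ (X c - c) D / l = - (inner ℝ (X c - c) D / l) := by ring
    rw [g1] at h4
    rw [g4, g5] at h1
    rw [g4] at h2
    rw [g2, g3]
    linarith
  have hYlip : ∀ ξ ξ', ‖Y ξ - Y ξ'‖ ≤ 4 * ‖ξ - ξ'‖ := by
    intro ξ ξ'
    have h1 := hgrow ξ (Y ξ')
    have h2 := hgrow ξ' (Y ξ)
    rw [hH] at h1 h2
    have e : ‖Y ξ' - ξ‖ ^ 2 - ‖Y ξ - ξ‖ ^ 2 + ‖Y ξ - ξ'‖ ^ 2 - ‖Y ξ' - ξ'‖ ^ 2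
        = 2 * inner ℝ (Y ξ - Y ξ') (ξ - ξ') := by
      simp only [norm_sub_sq_real, inner_sub_left, inner_sub_right]; ring
    rw [norm_sub_rev (Y ξ') (Y ξ)] at h1
    have h3 : 2 * (‖Y ξ - Y ξ'‖ ^ 2 / (4 * l)) ≤
      (‖Y ξ' - ξ‖ ^ 2 - ‖Y ξ - ξ‖ ^ 2 + ‖Y ξ - ξ'‖ ^ 2 - ‖Y ξ' - ξ'‖ ^ 2) / l := by
      have : (‖Y ξ' - ξ‖ ^ 2 - ‖Y ξ - ξ‖ ^ 2 + ‖Y ξ - ξ'‖ ^ 2 - ‖Y ξ' - ξ'‖ ^ 2) / l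
        = ‖Y ξ' - ξ‖ ^ 2 / l - ‖Y ξ - ξ‖ ^ 2 / l + ‖Y ξ - ξ'‖ ^ 2 / l - ‖Y ξ' - ξ'‖ ^ 2 / l := by ring
      linarith
    rw [e] at h3
    have h4 : ‖Y ξ - Y ξ'‖ ^ 2 ≤ 4 * inner ℝ (Y ξ - Y ξ') (ξ - ξ') := by
      have h5 : 2 * (‖Y ξ - Y ξ'‖ ^ 2 / (4 * l)) = (‖Y ξ - Y ξ'‖ ^ 2 / 2) / l := by field_simp; ring
      rw [h5, div_le_div_iff_of_pos_right hl] at h3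
      linarith
    have h6 := real_inner_le_norm (Y ξ - Y ξ') (ξ - ξ')
    by_contra hcon
    push Not at hcon
    have : 0 < ‖Y ξ - Y ξ'‖ := lt_of_le_of_lt (by positivity) hcon
    nlinarith
  have hlow : ∀ x ∈ K, ∀ ξ, u x - ‖x - ξ‖ ^ 2 / l ≤ H ξ := by
    intro x hx ξ
    have h1 := hGle (Y ξ) x hx
    rw [hH]
    have h2 : ‖x - Y ξ‖ ^ 2 ≤ 2 * ‖x - ξ‖ ^ 2 + 2 * ‖Y ξ - ξ‖ ^ 2 := by
      have e : x - Y ξ = (x - ξ) - (Y ξ - ξ) := by abel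
      have := norm_sub_le (x - ξ) (Y ξ - ξ)
      rw [← e] at this
      nlinarith [norm_nonneg (x - Y ξ), sq_nonneg (‖x - ξ‖ - ‖Y ξ - ξ‖)]
    have h3 : ‖x - Y ξ‖ ^ 2 / (2 * l) ≤ ‖x - ξ‖ ^ 2 / l + ‖Y ξ - ξ‖ ^ 2 / l := by
      rw [← add_div, div_le_div_iff₀ (by positivity) hl]
      nlinarith
    linarith
  obtain ⟨DH, hDH⟩ : ∃ DH : E → E, ∀ ξ, DH ξ = (2 / l) • (ξ - Y ξ) := ⟨_, fun _ => rfl⟩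
  -- Taylor bound
  have hup : ∀ ξ ξ', H ξ' ≤ H ξ + inner ℝ (DH ξ) (ξ' - ξ) + ‖ξ' - ξ‖ ^ 2 / l := by
    intro ξ ξ'
    have h1 := hHle ξ' (Y ξ)
    have e : ‖Y ξ - ξ'‖ ^ 2 = ‖Y ξ - ξ‖ ^ 2 + 2 * inner ℝ (ξ - Y ξ) (ξ' - ξ) + ‖ξ' - ξ‖ ^ 2 := by
      have : Y ξ - ξ' = -((ξ - Y ξ) + (ξ' - ξ)) := by abel
      rw [this, norm_neg, norm_add_sq_real, norm_sub_rev ξ (Y ξ)]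
    rw [e] at h1
    rw [hH ξ, hDH, real_inner_smul_left]
    have : (‖Y ξ - ξ‖ ^ 2 + 2 * inner ℝ (ξ - Y ξ) (ξ' - ξ) + ‖ξ' - ξ‖ ^ 2) / l =
      ‖Y ξ - ξ‖ ^ 2 / l + 2 / l * inner ℝ (ξ - Y ξ) (ξ' - ξ) + ‖ξ' - ξ‖ ^ 2 / l := by ring
    linarith
  have hDHlip : ∀ ξ ξ', ‖DH ξ - DH ξ'‖ ≤ 10 / l * ‖ξ - ξ'‖ := by
    intro ξ ξ'
    have e : DH ξ - DH ξ' = (2 / l) • ((ξ - ξ') - (Y ξ - Y ξ')) := by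
      rw [hDH, hDH]; module
    rw [e, norm_smul, Real.norm_of_nonneg (by positivity)]
    have h1 := norm_sub_le (ξ - ξ') (Y ξ - Y ξ')
    have h2 := hYlip ξ ξ'
    have : 10 / l * ‖ξ - ξ'‖ = 2 / l * (5 * ‖ξ - ξ'‖) := by ring
    rw [this]
    gcongr
    linarith
  have hdn : ∀ ξ ξ', H ξ + inner ℝ (DH ξ) (ξ' - ξ) - 11 / l * ‖ξ' - ξ‖ ^ 2 ≤ H ξ' := by
    intro ξ ξ'
    have h1 := hup ξ' ξ
    have h2 := hDHlip ξ ξ'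
    have e : inner ℝ (DH ξ') (ξ - ξ') = - inner ℝ (DH ξ) (ξ' - ξ) + inner ℝ (DH ξ - DH ξ') (ξ' - ξ) := by
      rw [inner_sub_left, ← neg_sub ξ' ξ, inner_neg_right]; ring
    have h3 := real_inner_le_norm (DH ξ - DH ξ') (ξ' - ξ)
    rw [norm_sub_rev ξ ξ'] at h1 h2
    have h4 : ‖DH ξ - DH ξ'‖ * ‖ξ' - ξ‖ ≤ 10 / l * ‖ξ' - ξ‖ * ‖ξ' - ξ‖ := by gcongr
    have h5 : 11 / l * ‖ξ' - ξ‖ ^ 2 = 10 / l * ‖ξ' - ξ‖ * ‖ξ' - ξ‖ + ‖ξ' - ξ‖ ^ 2 / l := by ring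
    rw [e] at h1
    linarith
  refine ⟨H, DH, ?_, ⟨Real.toNNReal (10 / l), ?_⟩, hlow, ?_, ?_⟩
  · intro ξ
    rw [hasFDerivAt_iff_isLittleO_nhds_zero]
    have hO : (fun h => H (ξ + h) - H ξ - (innerSL ℝ (DH ξ)) h) =O[𝓝 0] fun h => ‖h‖ ^ 2 := by
      apply Asymptotics.IsBigO.of_bound (11 / l)
      refine Eventually.of_forall fun h => ?_
      have h1 := hup ξ (ξ + h)
      have h2 := hdn ξ (ξ + h)
      simp only [add_sub_cancel_left] at h1 h2
      simp only [innerSL_apply_apply, norm_pow, norm_norm]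
      rw [Real.norm_eq_abs, abs_le]
      have : ‖h‖ ^ 2 / l ≤ 11 / l * ‖h‖ ^ 2 := by
        have : 0 ≤ ‖h‖ ^ 2 / l := by positivity
        have e : 11 / l * ‖h‖ ^ 2 = 11 * (‖h‖ ^ 2 / l) := by ring
        linarith
      constructor <;> linarith
    refine hO.trans_isLittleO ?_
    have := Asymptotics.isLittleO_norm_pow_id (E' := E) (n := 2) (by norm_num)
    exact this
  · apply LipschitzWith.of_dist_le_mul
    intro a b
    rw [dist_eq_norm, dist_eq_norm, Real.coe_toNNReal _ (by positivity)]
    exact hDHlip a b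
  · intro ξ
    refine ⟨X ξ, hXK ξ, ?_⟩
    have := hHle ξ ξ
    rw [hG] at this
    simpa using this
  · intro ξ b hb hq
    obtain ⟨y, hy⟩ : ∃ y, y = Y ξ := ⟨_, rfl⟩
    obtain ⟨η, hη⟩ : ∃ η, η = (1/2:ℝ) • (X y + y) := ⟨_, rfl⟩
    -- `y` is a minimiser for `η`
    have hHη : H η = G y + ‖y - η‖ ^ 2 / l := by
      apply le_antisymm (hHle η y)
      rw [hH]
      have h1 := hGsub y (Y η)
      have e1 : X y - y = (2:ℝ) • (η - y) := by rw [hη]; module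
      have e2 : ‖Y η - η‖ ^ 2 = ‖Y η - y‖ ^ 2 - 2 * inner ℝ (η - y) (Y η - y) + ‖y - η‖ ^ 2 := by
        have : Y η - η = (Y η - y) - (η - y) := by abel
        rw [this, norm_sub_sq_real, norm_sub_rev η y, real_inner_comm]
      rw [e1, real_inner_smul_left] at h1
      rw [e2]
      have e3 : (‖Y η - y‖ ^ 2 - 2 * inner ℝ (η - y) (Y η - y) + ‖y - η‖ ^ 2) / l =
        ‖Y η - y‖ ^ 2 / l - 2 * inner ℝ (η - y) (Y η - y) / l + ‖y - η‖ ^ 2 / l := by ring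
      have e4 : ‖Y η - y‖ ^ 2 / (2 * l) ≤ ‖Y η - y‖ ^ 2 / l := by
        gcongr; linarith
      linarith
    have h1 := hq η
    have h2 := hH ξ
    rw [hHη, h2, hDH, ← hy, real_inner_smul_left] at h1
    have e5 : ‖y - η‖ ^ 2 = ‖y - ξ‖ ^ 2 + 2 * inner ℝ (ξ - y) (η - ξ) + ‖η - ξ‖ ^ 2 := by
      have : y - η = -((ξ - y) + (η - ξ)) := by abel
      rw [this, norm_neg, norm_add_sq_real, norm_sub_rev ξ y]
    rw [e5] at h1
    have h3 : ‖η - ξ‖ ^ 2 / l ≤ b / 2 * ‖η - ξ‖ ^ 2 := by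
      have : (‖y - ξ‖ ^ 2 + 2 * inner ℝ (ξ - y) (η - ξ) + ‖η - ξ‖ ^ 2) / l =
        ‖y - ξ‖ ^ 2 / l + 2 / l * inner ℝ (ξ - y) (η - ξ) + ‖η - ξ‖ ^ 2 / l := by ring
      linarith
    have h4 : η = ξ := by
      rw [div_le_iff₀ hl] at h3
      by_contra hne'
      have : 0 < ‖η - ξ‖ := norm_pos_iff.2 (sub_ne_zero.2 hne')
      have : 0 < ‖η - ξ‖ ^ 2 := by positivity
      nlinarith
    have e6 : X y = ξ + (l / 2) • DH ξ := by
      have : (l / 2) * (2 / l) = 1 := by field_simp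
      rw [hDH, smul_smul, this, ← h4, one_smul, h4, ← hy, ← h4, hη]; module
    refine ⟨X y, hXK y, e6, ?_⟩
    rw [h2, ← hy, hG y, ← h4]
    have e7 : X y - η = (1/2:ℝ) • (X y - y) := by rw [hη]; module
    have e8 : y - η = -((1/2:ℝ) • (X y - y)) := by rw [hη]; module
    rw [e7, e8, norm_neg, norm_smul]
    norm_num
    field_simp
    ring

theorem taylor_two {E : Type*} [NormedAddCommGroup E] [InnerProductSpace ℝ E]
    (H : E → ℝ) (DH : E → E) (hD : ∀ ξ, HasFDerivAt H (innerSL ℝ (DH ξ)) ξ)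
    (A : E →L[ℝ] E) (ξ : E) (hA : HasFDerivAt DH A ξ) (c : ℝ) (hc : 0 < c) :
    ∃ r > 0, ∀ h : E, ‖h‖ < r →
      |H (ξ + h) - H ξ - inner ℝ (DH ξ) h - 1 / 2 * inner ℝ (A h) h| ≤ c * ‖h‖ ^ 2 := by
  rw [hasFDerivAt_iff_isLittleO_nhds_zero, Asymptotics.isLittleO_iff] at hA
  obtain ⟨r, hr, hb⟩ := Metric.eventually_nhds_iff.1 (hA hc)
  refine ⟨r, hr, fun h hh => ?_⟩
  have hder : ∀ τ ∈ Set.Icc (0:ℝ) 1, HasDerivWithinAt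
      (fun τ : ℝ => H (ξ + τ • h) - τ * inner ℝ (DH ξ) h - τ ^ 2 / 2 * inner ℝ (A h) h)
      (inner ℝ (DH (ξ + τ • h) - DH ξ - A (τ • h)) h) (Set.Icc 0 1) τ := by
    intro τ _
    apply HasDerivAt.hasDerivWithinAt
    have h1 : HasDerivAt (fun τ : ℝ => ξ + τ • h) h τ := by
      simpa using ((hasDerivAt_id τ).smul_const h).const_add ξ
    have h2 : HasDerivAt (fun τ : ℝ => H (ξ + τ • h)) (inner ℝ (DH (ξ + τ • h)) h) τ :=
      HasFDerivAt.comp_hasDerivAt (l := H) (f := fun τ : ℝ => ξ + τ • h) τ (hD (ξ + τ • h)) h1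
    have h3 : HasDerivAt (fun τ : ℝ => τ * inner ℝ (DH ξ) h) (inner ℝ (DH ξ) h) τ := by
      simpa using (hasDerivAt_id τ).mul_const (inner ℝ (DH ξ) h)
    have h4 : HasDerivAt (fun τ : ℝ => τ ^ 2 / 2 * inner ℝ (A h) h) (τ * inner ℝ (A h) h) τ := by
      refine ((((hasDerivAt_id τ).pow 2).div_const 2).mul_const (inner ℝ (A h) h)).congr_deriv ?_
      simp
    refine ((h2.sub h3).sub h4).congr_deriv ?_
    rw [inner_sub_left, inner_sub_left, map_smul, real_inner_smul_left]
  have hbd : ∀ τ ∈ Set.Ico (0:ℝ) 1, ‖inner ℝ (DH (ξ + τ • h) - DH ξ - A (τ • h)) h‖ ≤ c * ‖h‖ ^ 2 := by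
    intro τ hτ
    have hn : ‖τ • h‖ ≤ ‖h‖ := by
      rw [norm_smul, Real.norm_of_nonneg hτ.1]
      nlinarith [norm_nonneg h, hτ.2]
    have h1 := hb (y := τ • h) (by rw [dist_zero_right]; exact hn.trans_lt hh)
    calc _ ≤ ‖DH (ξ + τ • h) - DH ξ - A (τ • h)‖ * ‖h‖ := norm_inner_le_norm _ _
      _ ≤ (c * ‖h‖) * ‖h‖ := by
        gcongr; exact h1.trans (by gcongr)
      _ = _ := by ring
  have := norm_image_sub_le_of_norm_deriv_le_segment_01' hder hbd
  simp only [one_smul, zero_smul, add_zero, Real.norm_eq_abs] at this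
  convert this using 2
  ring

theorem grad_of_upper {E : Type*} [NormedAddCommGroup E] [InnerProductSpace ℝ E]
    (H : E → ℝ) (g w ξ : E) (hD : HasFDerivAt H (innerSL ℝ g) ξ) (C : ℝ)
    (hub : ∀ v, H v ≤ H ξ + inner ℝ w (v - ξ) + C * ‖v - ξ‖ ^ 2) : g = w := by
  have hmx : IsLocalMax (fun v => H v - inner ℝ w v - C * ‖v - ξ‖ ^ 2) ξ := by
    refine Eventually.of_forall fun v => ?_
    have := hub v
    rw [inner_sub_right] at this
    simp; linarith
  have hd : HasFDerivAt (fun v => H v - inner ℝ w v - C * ‖v - ξ‖ ^ 2)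
      (innerSL ℝ g - innerSL ℝ w - C • (2 • innerSL ℝ (ξ - ξ))) ξ := by
    have h1 : HasFDerivAt (fun v : E => ‖v - ξ‖ ^ 2) (2 • innerSL ℝ (ξ - ξ)) ξ := by
      have := HasFDerivAt.comp (g := fun w : E => ‖w‖ ^ 2) (f := fun v : E => v - ξ) ξ
        (hasStrictFDerivAt_norm_sq (ξ - ξ)).hasFDerivAt ((hasFDerivAt_id ξ).sub_const ξ)
      exact this.congr_fderiv (by ext; simp)
    exact (hD.sub (innerSL ℝ w).hasFDerivAt).sub (h1.const_mul C)
  have h0 := hmx.hasFDerivAt_eq_zero hd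
  have h1 := congrArg (fun L : E →L[ℝ] ℝ => L (g - w)) h0
  simp only [sub_self, map_zero, smul_zero, sub_zero, _root_.sub_apply,
    innerSL_apply_apply, _root_.zero_apply] at h1
  rw [← inner_sub_left, inner_self_eq_zero, sub_eq_zero] at h1
  exact h1

theorem jensen_max {E : Type*} [NormedAddCommGroup E] [InnerProductSpace ℝ E]
    [FiniteDimensional ℝ E] (H1 H2 : E → ℝ) (DH1 DH2 : E → E)
    (hD1 : ∀ ξ, HasFDerivAt H1 (innerSL ℝ (DH1 ξ)) ξ)
    (hD2 : ∀ ξ, HasFDerivAt H2 (innerSL ℝ (DH2 ξ)) ξ)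
    (k : ℝ) (hkpos : 0 < k) (M : E →L[ℝ] E) (hM : ∀ x y, inner ℝ (M x) y = inner ℝ (M y) x)
    (hHub : ∀ ξ η, H1 ξ + H2 η ≤ 1 / 2 * inner ℝ (M (ξ - η)) (ξ - η)
      + k / 2 * (‖ξ‖ ^ 2 + ‖η‖ ^ 2))
    (hz1 : H1 0 = 0) (hz2 : H2 0 = 0) (ρ : ℝ) (hρpos : 0 < ρ) (p : E × E) (hp : ‖p‖ < ρ) :
    ∃ ξ η, ‖ξ‖ + ‖η‖ ≤ 4 * ρ / k ∧
      DH1 ξ = M (ξ - η) + (2 * k) • ξ + p.1 ∧ DH2 η = - M (ξ - η) + (2 * k) • η + p.2 ∧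
      ∀ a b, H1 (ξ + a) + H2 (η + b) ≤ H1 ξ + H2 η + inner ℝ (DH1 ξ) a + inner ℝ (DH2 η) b
        + 1 / 2 * inner ℝ (M (a - b)) (a - b) + k * (‖a‖ ^ 2 + ‖b‖ ^ 2) := by
  have hp1 : ‖p.1‖ < ρ := (norm_fst_le p).trans_lt hp
  have hp2 : ‖p.2‖ < ρ := (norm_snd_le p).trans_lt hp
  obtain ⟨J, hJ⟩ : ∃ J : E × E → ℝ, ∀ z, J z = H1 z.1 + H2 z.2 -
    1 / 2 * inner ℝ (M (z.1 - z.2)) (z.1 - z.2) - k * (‖z.1‖ ^ 2 + ‖z.2‖ ^ 2)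
        - inner ℝ p.1 z.1 - inner ℝ p.2 z.2 := ⟨_, fun _ => rfl⟩
  have hc1 : Continuous H1 := continuous_iff_continuousAt.2 fun ξ => (hD1 ξ).continuousAt
  have hc2 : Continuous H2 := continuous_iff_continuousAt.2 fun ξ => (hD2 ξ).continuousAt
  have hJc : Continuous J := by
    have : J = fun z => H1 z.1 + H2 z.2 -
    1 / 2 * inner ℝ (M (z.1 - z.2)) (z.1 - z.2) - k * (‖z.1‖ ^ 2 + ‖z.2‖ ^ 2)
        - inner ℝ p.1 z.1 - inner ℝ p.2 z.2 := funext hJ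
    rw [this]; fun_prop
  have hJ0 : J 0 = 0 := by rw [hJ]; simp [hz1, hz2]
  have hJpos : ∀ z, 0 ≤ J z → ‖z.1‖ + ‖z.2‖ ≤ 4 * ρ / k := by
    intro z hz
    rw [hJ] at hz
    have a1 := hHub z.1 z.2
    have a2 := abs_le.1 (abs_real_inner_le_norm p.1 z.1)
    have a3 := abs_le.1 (abs_real_inner_le_norm p.2 z.2)
    have a4 : ‖p.1‖ * ‖z.1‖ ≤ ρ * ‖z.1‖ := by gcongr
    have a5 : ‖p.2‖ * ‖z.2‖ ≤ ρ * ‖z.2‖ := by gcongr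
    have a6 : k / 2 * (‖z.1‖ ^ 2 + ‖z.2‖ ^ 2) ≤ ρ * (‖z.1‖ + ‖z.2‖) := by linarith
    have a7 : k * (‖z.1‖ + ‖z.2‖) ^ 2 ≤ 4 * ρ * (‖z.1‖ + ‖z.2‖) := by
      nlinarith [mul_nonneg hkpos.le (sq_nonneg (‖z.1‖ - ‖z.2‖))]
    rw [le_div_iff₀ hkpos]
    rcases eq_or_lt_of_le (show 0 ≤ ‖z.1‖ + ‖z.2‖ by positivity) with h | h
    · rw [← h]; simp; positivity
    · nlinarith
  obtain ⟨z, hzb, hzm⟩ := (isCompact_closedBall (0 : E × E) (4 * ρ / k)).exists_isMaxOn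
    ⟨0, by simp; positivity⟩ hJc.continuousOn
  have hz0 : 0 ≤ J z := by
    rw [← hJ0]; exact hzm (by simp; positivity)
  have hglob : ∀ z', J z' ≤ J z := by
    intro z'
    by_cases h : 0 ≤ J z'
    · apply hzm
      have := hJpos z' h
      simp only [Metric.mem_closedBall, dist_zero_right]
      rw [Prod.norm_def]
      exact max_le (by linarith [norm_nonneg z'.2]) (by linarith [norm_nonneg z'.1])
    · linarith
  obtain ⟨ξ, η⟩ := z
  have hJb := hJpos _ hz0
  dsimp only at hJb
  have key : ∀ a b, H1 (ξ + a) + H2 (η + b) ≤ H1 ξ + H2 η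
        + inner ℝ (M (ξ - η) + (2 * k) • ξ + p.1) a
        + inner ℝ (- M (ξ - η) + (2 * k) • η + p.2) b
        + 1 / 2 * inner ℝ (M (a - b)) (a - b) + k * (‖a‖ ^ 2 + ‖b‖ ^ 2) := by
    intro a b
    have h := hglob (ξ + a, η + b)
    rw [hJ, hJ] at h
    dsimp only at h
    have e1 : (ξ + a) - (η + b) = (ξ - η) + (a - b) := by abel
    rw [e1, map_add, inner_add_left, inner_add_right, inner_add_right, hM (a - b) (ξ - η),
      norm_add_sq_real, norm_add_sq_real, inner_add_right, inner_add_right] at h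
    rw [inner_add_left, inner_add_left, inner_add_left, inner_add_left, real_inner_smul_left,
      real_inner_smul_left, inner_neg_left]
    have e2 : inner ℝ (M (ξ - η)) (a - b) = inner ℝ (M (ξ - η)) a - inner ℝ (M (ξ - η)) b :=
      inner_sub_right _ _ _
    rw [e2] at h
    linarith
  have hMb : ∀ x : E, inner ℝ (M x) x ≤ ‖M‖ * ‖x‖ ^ 2 := by
    intro x
    calc _ ≤ ‖M x‖ * ‖x‖ := real_inner_le_norm _ _
      _ ≤ ‖M‖ * ‖x‖ * ‖x‖ := by gcongr; exact M.le_opNorm x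
      _ = _ := by ring
  have g1 : DH1 ξ = M (ξ - η) + (2 * k) • ξ + p.1 := by
    refine grad_of_upper H1 _ _ ξ (hD1 ξ) (‖M‖ / 2 + k) fun v => ?_
    have h := key (v - ξ) 0
    have h2 := hMb (v - ξ)
    simp only [add_sub_cancel, add_zero, inner_zero_right, sub_zero, norm_zero] at h
    linarith
  have g2 : DH2 η = - M (ξ - η) + (2 * k) • η + p.2 := by
    refine grad_of_upper H2 _ _ η (hD2 η) (‖M‖ / 2 + k) fun v => ?_
    have h := key 0 (v - η)
    have h2 := hMb (v - η)
    simp only [add_sub_cancel, add_zero, inner_zero_right, zero_sub, map_neg, inner_neg_neg,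
      norm_zero] at h
    linarith
  refine ⟨ξ, η, hJb, g1, g2, ?_⟩
  rw [g1, g2]; exact key

theorem jensen_diff {E : Type*} [NormedAddCommGroup E] [InnerProductSpace ℝ E]
    [FiniteDimensional ℝ E] (H1 H2 : E → ℝ) (DH1 DH2 : E → E)
    (hD1 : ∀ ξ, HasFDerivAt H1 (innerSL ℝ (DH1 ξ)) ξ)
    (hD2 : ∀ ξ, HasFDerivAt H2 (innerSL ℝ (DH2 ξ)) ξ)
    (C1 C2 : NNReal) (hL1 : LipschitzWith C1 DH1) (hL2 : LipschitzWith C2 DH2)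
    (k : ℝ) (hkpos : 0 < k) (M : E →L[ℝ] E) (hM : ∀ x y, inner ℝ (M x) y = inner ℝ (M y) x)
    (hHub : ∀ ξ η, H1 ξ + H2 η ≤ 1 / 2 * inner ℝ (M (ξ - η)) (ξ - η)
      + k / 2 * (‖ξ‖ ^ 2 + ‖η‖ ^ 2))
    (hz1 : H1 0 = 0) (hz2 : H2 0 = 0) (ρ : ℝ) (hρpos : 0 < ρ) :
    ∃ ξ η, ‖ξ‖ + ‖η‖ ≤ 4 * ρ / k ∧ DifferentiableAt ℝ DH1 ξ ∧ DifferentiableAt ℝ DH2 η ∧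
      ∀ a b, H1 (ξ + a) + H2 (η + b) ≤ H1 ξ + H2 η + inner ℝ (DH1 ξ) a + inner ℝ (DH2 η) b
        + 1 / 2 * inner ℝ (M (a - b)) (a - b) + k * (‖a‖ ^ 2 + ‖b‖ ^ 2) := by
  letI : MeasurableSpace (E × E) := borel _
  haveI : BorelSpace (E × E) := ⟨rfl⟩
  let P : E × E → E × E := fun z => (DH1 z.1, DH2 z.2)
  have hP : LipschitzWith (max (C1 * 1) (C2 * 1)) P :=
    (hL1.comp LipschitzWith.prod_fst).prodMk (hL2.comp LipschitzWith.prod_snd)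
  let F := ContinuousLinearMap.fst ℝ E E
  let S := ContinuousLinearMap.snd ℝ E E
  let L : (E × E) →L[ℝ] (E × E) :=
    (M.comp (F - S) + (2 * k) • F).prod (-(M.comp (F - S)) + (2 * k) • S)
  have hS : LipschitzWith (max (C1 * 1) (C2 * 1) + ‖L‖₊) (fun z => P z - L z) := hP.sub L.lipschitz
  let μ : MeasureTheory.Measure (E × E) := MeasureTheory.Measure.hausdorffMeasure (Module.finrank ℝ (E × E) : ℝ)
  haveI : μ.IsAddHaarMeasure := MeasureTheory.isAddHaarMeasure_hausdorffMeasure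
  have hae : μ {z | ¬ DifferentiableAt ℝ P z} = 0 := hP.ae_differentiableAt (μ := μ)
  have him : μ ((fun z => P z - L z) '' {z | ¬ DifferentiableAt ℝ P z}) = 0 := by
    have := hS.hausdorffMeasure_image_le (d := (Module.finrank ℝ (E × E) : ℝ)) (by positivity)
      {z | ¬ DifferentiableAt ℝ P z}
    refine le_antisymm (this.trans ?_) bot_le
    change _ * μ _ ≤ 0
    rw [hae, mul_zero]
  have hball : 0 < μ (Metric.ball (0 : E × E) ρ) := Metric.measure_ball_pos μ 0 hρpos
  obtain ⟨p, hp, hpn⟩ : ∃ p ∈ Metric.ball (0 : E × E) ρ,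
      p ∉ (fun z => P z - L z) '' {z | ¬ DifferentiableAt ℝ P z} := by
    by_contra hcon
    push Not at hcon
    have := MeasureTheory.measure_mono (μ := μ) (show Metric.ball (0 : E × E) ρ ⊆ _ from hcon)
    rw [him] at this
    exact absurd (hball.trans_le this) (lt_irrefl _)
  obtain ⟨ξ, η, hb, g1, g2, hmx⟩ := jensen_max H1 H2 DH1 DH2 hD1 hD2 k hkpos M hM hHub hz1 hz2 ρ hρpos p
    (by simpa using hp)
  have hd : DifferentiableAt ℝ P (ξ, η) := by
    by_contra hcon
    apply hpn
    refine ⟨(ξ, η), hcon, ?_⟩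
    have e : P (ξ, η) = (DH1 ξ, DH2 η) := rfl
    have e' : L (ξ, η) = (M (ξ - η) + (2 * k) • ξ, -M (ξ - η) + (2 * k) • η) := rfl
    show P (ξ, η) - L (ξ, η) = p
    rw [e, e', g1, g2]
    ext <;> simp
  refine ⟨ξ, η, hb, ?_, ?_, hmx⟩
  · have h1 : DifferentiableAt ℝ (fun x : E => (x, η)) ξ := by fun_prop
    have := (DifferentiableAt.comp (g := P) (f := fun x : E => (x, η)) ξ hd h1).fst
    exact this
  · have h1 : DifferentiableAt ℝ (fun x : E => (ξ, x)) η := by fun_prop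
    have := (DifferentiableAt.comp (g := P) (f := fun x : E => (ξ, x)) η hd h1).snd
    exact this

theorem hess_le {E : Type*} [NormedAddCommGroup E] [InnerProductSpace ℝ E]
    (H1 H2 : E → ℝ) (g1 g2 ξ η : E) (A1 A2 M : E →L[ℝ] E) (k : ℝ)
    (hmx : ∀ a b, H1 (ξ + a) + H2 (η + b) ≤ H1 ξ + H2 η + inner ℝ g1 a + inner ℝ g2 b
        + 1 / 2 * inner ℝ (M (a - b)) (a - b) + k * (‖a‖ ^ 2 + ‖b‖ ^ 2))
    (c r : ℝ) (hr : 0 < r)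
    (ht1 : ∀ h : E, ‖h‖ < r → |H1 (ξ + h) - H1 ξ - inner ℝ g1 h - 1 / 2 * inner ℝ (A1 h) h| ≤ c * ‖h‖ ^ 2)
    (ht2 : ∀ h : E, ‖h‖ < r → |H2 (η + h) - H2 η - inner ℝ g2 h - 1 / 2 * inner ℝ (A2 h) h| ≤ c * ‖h‖ ^ 2)
    (a b : E) :
    inner ℝ (A1 a) a + inner ℝ (A2 b) b ≤
        inner ℝ (M (a - b)) (a - b) + 2 * (k + c) * (‖a‖ ^ 2 + ‖b‖ ^ 2) := by
  obtain ⟨τ, hτ, hτa, hτb⟩ : ∃ τ : ℝ, 0 < τ ∧ τ * ‖a‖ < r ∧ τ * ‖b‖ < r := by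
    refine ⟨r / (1 + ‖a‖ + ‖b‖), by positivity, ?_, ?_⟩
    · rw [div_mul_eq_mul_div, div_lt_iff₀ (by positivity)]
      nlinarith [norm_nonneg a, norm_nonneg b]
    · rw [div_mul_eq_mul_div, div_lt_iff₀ (by positivity)]
      nlinarith [norm_nonneg a, norm_nonneg b]
  have na : ‖τ • a‖ = τ * ‖a‖ := by rw [norm_smul, Real.norm_of_nonneg hτ.le]
  have nb : ‖τ • b‖ = τ * ‖b‖ := by rw [norm_smul, Real.norm_of_nonneg hτ.le]
  have h1 := (abs_le.1 (ht1 (τ • a) (by rw [na]; exact hτa))).1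
  have h2 := (abs_le.1 (ht2 (τ • b) (by rw [nb]; exact hτb))).1
  have h3 := hmx (τ • a) (τ • b)
  rw [na] at h1 h3
  rw [nb] at h2 h3
  rw [← smul_sub] at h3
  simp only [map_smul, real_inner_smul_left, real_inner_smul_right] at h1 h2 h3
  have h4 : τ ^ 2 * (inner ℝ (A1 a) a + inner ℝ (A2 b) b) ≤
      τ ^ 2 * (inner ℝ (M (a - b)) (a - b) + 2 * (k + c) * (‖a‖ ^ 2 + ‖b‖ ^ 2)) := by
    nlinarith
  exact le_of_mul_le_mul_left h4 (by positivity)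

theorem contact_local {E : Type*} [NormedAddCommGroup E] [InnerProductSpace ℝ E]
    (K : Set E) (u H : E → ℝ) (g ξ x : E) (A : E →L[ℝ] E) (l c r k : ℝ) (hck : 2 * c = k)
    (hlow : ∀ x ∈ K, ∀ ξ, u x - ‖x - ξ‖ ^ 2 / l ≤ H ξ) (hx : H ξ = u x - ‖x - ξ‖ ^ 2 / l)
    (ht : ∀ h : E, ‖h‖ < r → |H (ξ + h) - H ξ - inner ℝ g h - 1 / 2 * inner ℝ (A h) h| ≤ c * ‖h‖ ^ 2) :
    ∀ x' ∈ K, ‖x' - x‖ < r →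
        u x' ≤ u x + inner ℝ g (x' - x) +
          1 / 2 * inner ℝ ((A + k • ContinuousLinearMap.id ℝ E) (x' - x)) (x' - x) := by
  intro x' hx' hr
  have h1 := hlow x' hx' (ξ + (x' - x))
  have e : x' - (ξ + (x' - x)) = x - ξ := by abel
  rw [e] at h1
  have h2 := (abs_le.1 (ht _ hr)).2
  have e2 : inner ℝ ((A + k • ContinuousLinearMap.id ℝ E) (x' - x)) (x' - x)
    = inner ℝ (A (x' - x)) (x' - x) + k * ‖x' - x‖ ^ 2 := by
    rw [_root_.add_apply, inner_add_left, _root_.smul_apply, real_inner_smul_left]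
    simp
  rw [e2, ← hck]
  linarith

set_option maxHeartbeats 2000000 in
theorem tos_base {E : Type*} [NormedAddCommGroup E] [InnerProductSpace ℝ E]
    [FiniteDimensional ℝ E] (K1 K2 : Set E) (hK1 : IsCompact K1) (hK2 : IsCompact K2)
    (h01 : (0:E) ∈ K1) (h02 : (0:E) ∈ K2)
    (u1 u2 : E → ℝ) (hu1 : ContinuousOn u1 K1) (hu2 : ContinuousOn u2 K2)
    (hz1 : u1 0 = 0) (hz2 : u2 0 = 0)
    (M : E →L[ℝ] E) (hM : ∀ x y, inner ℝ (M x) y = inner ℝ (M y) x)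
    (hmax : ∀ x ∈ K1, ∀ y ∈ K2, u1 x + u2 y ≤ 1 / 2 * inner ℝ (M (x - y)) (x - y))
    (κ : ℝ) (hκ : 0 < κ) :
    ∃ x ∈ K1, ∃ y ∈ K2, ‖x‖ < κ ∧ ‖y‖ < κ ∧ ∃ q1 q2 : E, ‖q1‖ < κ ∧ ‖q2‖ < κ ∧
      ∃ A1 A2 : E →L[ℝ] E, ∃ r > 0,
      (∀ x' ∈ K1, ‖x' - x‖ < r →
        u1 x' ≤ u1 x + inner ℝ q1 (x' - x) + 1 / 2 * inner ℝ (A1 (x' - x)) (x' - x)) ∧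
      (∀ y' ∈ K2, ‖y' - y‖ < r →
        u2 y' ≤ u2 y + inner ℝ q2 (y' - y) + 1 / 2 * inner ℝ (A2 (y' - y)) (y' - y)) ∧
      (∀ a b : E, inner ℝ (A1 a) a + inner ℝ (A2 b) b ≤
        inner ℝ (M (a - b)) (a - b) + κ * (‖a‖ ^ 2 + ‖b‖ ^ 2)) := by
  obtain ⟨k, hk⟩ : ∃ k, k = κ / 4 := ⟨_, rfl⟩
  have hkpos : 0 < k := by rw [hk]; positivity
  obtain ⟨m, hm⟩ : ∃ m, m = ‖M‖ := ⟨_, rfl⟩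
  have hm0 : 0 ≤ m := by rw [hm]; positivity
  have hMb : ∀ x y : E, inner ℝ (M x) y ≤ m * ‖x‖ * ‖y‖ := by
    intro x y
    calc _ ≤ ‖M x‖ * ‖y‖ := real_inner_le_norm _ _
      _ ≤ _ := by rw [hm]; gcongr; exact M.le_opNorm x
  obtain ⟨Z, hZ⟩ : ∃ Z, Z = 2 * (2 * m ^ 2 / k + m) + m + 2 * k + 1 := ⟨_, rfl⟩
  have hZ1 : 2 * (2 * m ^ 2 / k + m) ≤ Z := by rw [hZ]; linarith
  have hZ2 : m + 2 * k ≤ Z := by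
    have : 0 ≤ 2 * (2 * m ^ 2 / k + m) := by positivity
    rw [hZ]; linarith
  have hZpos : 0 < Z := by linarith
  obtain ⟨l, hl⟩ : ∃ l, l = 1 / Z := ⟨_, rfl⟩
  have hlpos : 0 < l := by rw [hl]; positivity
  have hlZ : l * Z = 1 := by rw [hl]; field_simp
  obtain ⟨H1, DH1, hD1, ⟨C1, hL1⟩, hlow1, hle1, hcon1⟩ := sf_envelope K1 hK1 ⟨0, h01⟩ u1 hu1 l hlpos
  obtain ⟨H2, DH2, hD2, ⟨C2, hL2⟩, hlow2, hle2, hcon2⟩ := sf_envelope K2 hK2 ⟨0, h02⟩ u2 hu2 l hlpos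
  -- upper bound
  have hHub : ∀ ξ η, H1 ξ + H2 η ≤ 1 / 2 * inner ℝ (M (ξ - η)) (ξ - η)
      + k / 2 * (‖ξ‖ ^ 2 + ‖η‖ ^ 2) := by
    intro ξ η
    obtain ⟨x, hx, h1⟩ := hle1 ξ
    obtain ⟨y, hy, h2⟩ := hle2 η
    have h3 := hmax x hx y hy
    obtain ⟨w, hw⟩ : ∃ w, w = ξ - η := ⟨_, rfl⟩
    obtain ⟨e, he⟩ : ∃ e, e = (x - ξ) - (y - η) := ⟨_, rfl⟩
    have e1 : x - y = w + e := by rw [hw, he]; abel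
    rw [e1, map_add, inner_add_left, inner_add_right, inner_add_right, hM e w] at h3
    rw [← hw]
    have b1 := hMb w e
    have b2 := hMb e e
    have nw : ‖w‖ ^ 2 ≤ 2 * (‖ξ‖ ^ 2 + ‖η‖ ^ 2) := by
      have := norm_sub_le ξ η
      rw [← hw] at this
      nlinarith [norm_nonneg w, sq_nonneg (‖ξ‖ - ‖η‖)]
    have ne : ‖e‖ ^ 2 ≤ 2 * (‖x - ξ‖ ^ 2 + ‖y - η‖ ^ 2) := by
      have := norm_sub_le (x - ξ) (y - η)
      rw [← he] at this
      nlinarith [norm_nonneg e, sq_nonneg (‖x - ξ‖ - ‖y - η‖)]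
    have yo : 2 * (m * ‖w‖ * ‖e‖) ≤ k / 2 * ‖w‖ ^ 2 + 2 * m ^ 2 / k * ‖e‖ ^ 2 := by
      have : k / 2 * ‖w‖ ^ 2 + 2 * m ^ 2 / k * ‖e‖ ^ 2 - 2 * (m * ‖w‖ * ‖e‖)
        = (k * ‖w‖ - 2 * m * ‖e‖) ^ 2 / (2 * k) := by field_simp; ring
      have h' : 0 ≤ (k * ‖w‖ - 2 * m * ‖e‖) ^ 2 / (2 * k) := by positivity
      linarith
    have ze : (2 * m ^ 2 / k + m) * ‖e‖ ^ 2 ≤ Z * (‖x - ξ‖ ^ 2 + ‖y - η‖ ^ 2) := by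
      calc _ ≤ (2 * m ^ 2 / k + m) * (2 * (‖x - ξ‖ ^ 2 + ‖y - η‖ ^ 2)) := by gcongr
        _ = (2 * (2 * m ^ 2 / k + m)) * (‖x - ξ‖ ^ 2 + ‖y - η‖ ^ 2) := by ring
        _ ≤ _ := by gcongr
    have l1 : ‖x - ξ‖ ^ 2 / (2 * l) = Z / 2 * ‖x - ξ‖ ^ 2 := by rw [hl]; field_simp
    have l2 : ‖y - η‖ ^ 2 / (2 * l) = Z / 2 * ‖y - η‖ ^ 2 := by rw [hl]; field_simp
    rw [l1] at h1; rw [l2] at h2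
    nlinarith
  have hH1z : H1 0 = 0 ∧ H2 0 = 0 := by
    have a1 := hlow1 0 h01 0
    have a2 := hlow2 0 h02 0
    have a3 := hHub 0 0
    simp [hz1] at a1
    simp [hz2] at a2
    simp at a3
    constructor <;> linarith
  have hgradz : ∀ (H : E → ℝ) (DH : E → E), (∀ ξ, HasFDerivAt H (innerSL ℝ (DH ξ)) ξ) → H 0 = 0 →
      (∀ ξ, H ξ ≤ (m / 2 + k / 2) * ‖ξ‖ ^ 2) → DH 0 = 0 := by
    intro H DH hD h0 hub
    refine grad_of_upper H _ 0 0 (hD 0) (m / 2 + k / 2) fun v => ?_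
    simpa [h0] using hub v
  have hDz1 : DH1 0 = 0 := by
    apply hgradz H1 DH1 hD1 hH1z.1
    intro ξ
    have a := hHub ξ 0
    have b := hMb ξ ξ
    simp [hH1z.2] at a
    nlinarith
  have hDz2 : DH2 0 = 0 := by
    apply hgradz H2 DH2 hD2 hH1z.2
    intro ξ
    have a := hHub 0 ξ
    have b := hMb ξ ξ
    simp [hH1z.1] at a
    nlinarith
  obtain ⟨C, hC⟩ : ∃ C : ℝ, C = C1 + C2 := ⟨_, rfl⟩
  have hC0 : 0 ≤ C := by rw [hC]; positivity
  have hDb1 : ∀ ξ, ‖DH1 ξ‖ ≤ C * ‖ξ‖ := by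
    intro ξ
    have := hL1.dist_le_mul ξ 0
    rw [hDz1, dist_zero_right, dist_zero_right] at this
    refine this.trans ?_
    gcongr
    rw [hC]; simp
  have hDb2 : ∀ ξ, ‖DH2 ξ‖ ≤ C * ‖ξ‖ := by
    intro ξ
    have := hL2.dist_le_mul ξ 0
    rw [hDz2, dist_zero_right, dist_zero_right] at this
    refine this.trans ?_
    gcongr
    rw [hC]; simp
  obtain ⟨ρ, hρ⟩ : ∃ ρ, ρ = κ * k / (8 * (1 + l / 2 * C + C)) := ⟨_, rfl⟩
  have hden : 0 < 1 + l / 2 * C + C := by positivity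
  have hρpos : 0 < ρ := by rw [hρ]; positivity
  have hρs : (1 + l / 2 * C + C) * (4 * ρ / k) < κ := by
    rw [hρ]; field_simp; linarith
  obtain ⟨ξ, η, hb, hd1, hd2, hmx⟩ := jensen_diff H1 H2 DH1 DH2 hD1 hD2 C1 C2 hL1 hL2 k hkpos M hM
    hHub hH1z.1 hH1z.2 ρ hρpos
  have hmt1 : (m + 2 * k) * l < 2 := by nlinarith
  obtain ⟨x, hx, hxe, hxc⟩ := hcon1 ξ (m + 2 * k) hmt1 (by
    intro ξ'
    have h := hmx (ξ' - ξ) 0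
    have h2 := hMb (ξ' - ξ) (ξ' - ξ)
    simp only [add_sub_cancel, add_zero, inner_zero_right, sub_zero, norm_zero] at h
    nlinarith)
  obtain ⟨y, hy, hye, hyc⟩ := hcon2 η (m + 2 * k) hmt1 (by
    intro ξ'
    have h := hmx 0 (ξ' - η)
    have h2 := hMb (ξ' - η) (ξ' - η)
    simp only [add_sub_cancel, add_zero, inner_zero_right, zero_sub, map_neg, inner_neg_neg,
      norm_zero] at h
    nlinarith)
  have hc : 0 < k / 2 := by positivity
  obtain ⟨r1, hr1, ht1⟩ := taylor_two H1 DH1 hD1 _ ξ hd1.hasFDerivAt (k / 2) hc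
  obtain ⟨r2, hr2, ht2⟩ := taylor_two H2 DH2 hD2 _ η hd2.hasFDerivAt (k / 2) hc
  have hn1 : ‖ξ‖ ≤ 4 * ρ / k := by linarith [norm_nonneg η]
  have hn2 : ‖η‖ ≤ 4 * ρ / k := by linarith [norm_nonneg ξ]
  have hR0 : 0 ≤ 4 * ρ / k := by positivity
  have q1 : ‖DH1 ξ‖ ≤ C * (4 * ρ / k) := (hDb1 ξ).trans (by gcongr)
  have q2 : ‖DH2 η‖ ≤ C * (4 * ρ / k) := (hDb2 η).trans (by gcongr)
  have hlC : 0 ≤ l / 2 * C * (4 * ρ / k) := by positivity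
  have hCC : 0 ≤ C * (4 * ρ / k) := by positivity
  have hx1 : ‖x‖ < κ := by
    rw [hxe]
    have := norm_add_le ξ ((l / 2) • DH1 ξ)
    rw [norm_smul, Real.norm_of_nonneg (by positivity)] at this
    have h' : l / 2 * ‖DH1 ξ‖ ≤ l / 2 * (C * (4 * ρ / k)) := by gcongr
    linarith
  have hy1 : ‖y‖ < κ := by
    rw [hye]
    have := norm_add_le η ((l / 2) • DH2 η)
    rw [norm_smul, Real.norm_of_nonneg (by positivity)] at this
    have h' : l / 2 * ‖DH2 η‖ ≤ l / 2 * (C * (4 * ρ / k)) := by gcongr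
    linarith
  refine ⟨x, hx, y, hy, hx1, hy1, DH1 ξ, DH2 η, by linarith, by linarith,
    fderiv ℝ DH1 ξ + k • ContinuousLinearMap.id ℝ E,
    fderiv ℝ DH2 η + k • ContinuousLinearMap.id ℝ E, min r1 r2, lt_min hr1 hr2, ?_, ?_, ?_⟩
  · intro x' hx' hr
    exact contact_local K1 u1 H1 (DH1 ξ) ξ x _ l (k / 2) r1 k (by ring) hlow1 hxc ht1 x' hx'
      (hr.trans_le (min_le_left _ _))
  · intro x' hx' hr
    exact contact_local K2 u2 H2 (DH2 η) η y _ l (k / 2) r2 k (by ring) hlow2 hyc ht2 x' hx'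
      (hr.trans_le (min_le_right _ _))
  · intro a b
    have h := hess_le H1 H2 (DH1 ξ) (DH2 η) ξ η _ _ M k hmx (k / 2) (min r1 r2) (lt_min hr1 hr2)
      (fun h hh => ht1 h (hh.trans_le (min_le_left _ _)))
      (fun h hh => ht2 h (hh.trans_le (min_le_right _ _))) a b
    rw [_root_.add_apply, inner_add_left, _root_.smul_apply, real_inner_smul_left,
      _root_.add_apply, inner_add_left, _root_.smul_apply, real_inner_smul_left]
    simp only [ContinuousLinearMap.id_apply, real_inner_self_eq_norm_sq]
    have : κ = 4 * k := by rw [hk]; ring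
    rw [this]
    linarith

theorem dotp_comm {d : ℕ} (v w : Fin d → ℝ) : dotp v w = dotp w v := by
  unfold dotp; exact Finset.sum_congr rfl fun i _ => mul_comm _ _

theorem dotp_add_left {d : ℕ} (v v' w : Fin d → ℝ) : dotp (v + v') w = dotp v w + dotp v' w := by
  unfold dotp; rw [← Finset.sum_add_distrib]; exact Finset.sum_congr rfl fun i _ => by simp; ring

theorem dotp_add_right {d : ℕ} (v w w' : Fin d → ℝ) : dotp v (w + w') = dotp v w + dotp v w' := by
  rw [dotp_comm, dotp_add_left, dotp_comm w, dotp_comm w']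

theorem dotp_smul_left {d : ℕ} (c : ℝ) (v w : Fin d → ℝ) : dotp (c • v) w = c * dotp v w := by
  unfold dotp; rw [Finset.mul_sum]; exact Finset.sum_congr rfl fun i _ => by simp; ring

theorem dotp_smul_right {d : ℕ} (c : ℝ) (v w : Fin d → ℝ) : dotp v (c • w) = c * dotp v w := by
  rw [dotp_comm, dotp_smul_left, dotp_comm]

theorem dotp_neg_left {d : ℕ} (v w : Fin d → ℝ) : dotp (-v) w = - dotp v w := by
  unfold dotp; simp

theorem dotp_neg_right {d : ℕ} (v w : Fin d → ℝ) : dotp v (-w) = - dotp v w := by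
  unfold dotp; simp

theorem dotp_sub_left {d : ℕ} (v v' w : Fin d → ℝ) : dotp (v - v') w = dotp v w - dotp v' w := by
  rw [sub_eq_add_neg, dotp_add_left, dotp_neg_left]; ring

theorem dotp_sub_right {d : ℕ} (v w w' : Fin d → ℝ) : dotp v (w - w') = dotp v w - dotp v w' := by
  rw [sub_eq_add_neg, dotp_add_right, dotp_neg_right]; ring

theorem dotp_zero_left {d : ℕ} (w : Fin d → ℝ) : dotp 0 w = 0 := by unfold dotp; simp

theorem dotp_zero_right {d : ℕ} (w : Fin d → ℝ) : dotp w 0 = 0 := by unfold dotp; simp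

theorem eunorm_nonneg {d : ℕ} (v : Fin d → ℝ) : 0 ≤ eunorm v := Real.sqrt_nonneg _

theorem eunorm_eq {d : ℕ} (v : Fin d → ℝ) : eunorm v = ‖WithLp.toLp 2 v‖ := by
  rw [EuclideanSpace.norm_eq]; unfold eunorm; simp

theorem dotp_eq {d : ℕ} (v w : Fin d → ℝ) :
    dotp v w = inner ℝ (WithLp.toLp 2 v) (WithLp.toLp 2 w) := by
  rw [PiLp.inner_apply]; unfold dotp
  exact Finset.sum_congr rfl fun i _ => by simp [mul_comm]

theorem eunorm_sq {d : ℕ} (v : Fin d → ℝ) : eunorm v ^ 2 = dotp v v := by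
  rw [eunorm_eq, dotp_eq, real_inner_self_eq_norm_sq]

theorem eunorm_add_le {d : ℕ} (v w : Fin d → ℝ) : eunorm (v + w) ≤ eunorm v + eunorm w := by
  simp only [eunorm_eq, WithLp.toLp_add]; exact norm_add_le _ _

theorem eunorm_sub_le {d : ℕ} (v w : Fin d → ℝ) : eunorm (v - w) ≤ eunorm v + eunorm w := by
  simp only [eunorm_eq, WithLp.toLp_sub]; exact norm_sub_le _ _

theorem eunorm_neg {d : ℕ} (v : Fin d → ℝ) : eunorm (-v) = eunorm v := by
  simp only [eunorm_eq, WithLp.toLp_neg, norm_neg]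

theorem eunorm_sub_comm {d : ℕ} (v w : Fin d → ℝ) : eunorm (v - w) = eunorm (w - v) := by
  rw [← eunorm_neg, neg_sub]

theorem eunorm_smul {d : ℕ} (c : ℝ) (v : Fin d → ℝ) : eunorm (c • v) = |c| * eunorm v := by
  simp only [eunorm_eq, WithLp.toLp_smul, norm_smul, Real.norm_eq_abs]

theorem eunorm_zero {d : ℕ} : eunorm (0 : Fin d → ℝ) = 0 := by
  rw [eunorm_eq]; simp

theorem abs_dotp_le {d : ℕ} (v w : Fin d → ℝ) : |dotp v w| ≤ eunorm v * eunorm w := by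
  simp only [eunorm_eq, dotp_eq]; exact abs_real_inner_le_norm _ _

theorem norm_le_eunorm {d : ℕ} (v : Fin d → ℝ) : ‖v‖ ≤ eunorm v := by
  rw [pi_norm_le_iff_of_nonneg (eunorm_nonneg v)]
  intro i
  rw [eunorm_eq]
  exact PiLp.norm_apply_le (WithLp.toLp 2 v) i

theorem continuous_eunorm {d : ℕ} : Continuous (eunorm : (Fin d → ℝ) → ℝ) := by
  unfold eunorm; fun_prop

theorem continuous_dotp {d : ℕ} {α : Type*} [TopologicalSpace α] {f g : α → Fin d → ℝ}
    (hf : Continuous f) (hg : Continuous g) : Continuous fun a => dotp (f a) (g a) := by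
  unfold dotp; fun_prop

/-- time-space model Hilbert space -/
abbrev TS (d : ℕ) := WithLp 2 (ℝ × EuclideanSpace ℝ (Fin d))

def pk {d : ℕ} (t : ℝ) (x : Fin d → ℝ) : TS d := WithLp.toLp 2 (t, WithLp.toLp 2 x)
def tc {d : ℕ} (e : TS d) : ℝ := e.fst
def xc {d : ℕ} (e : TS d) : Fin d → ℝ := e.snd.ofLp

theorem tc_pk {d : ℕ} (t : ℝ) (x : Fin d → ℝ) : tc (pk t x) = t := rfl
theorem xc_pk {d : ℕ} (t : ℝ) (x : Fin d → ℝ) : xc (pk t x) = x := rfl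
theorem pk_eta {d : ℕ} (e : TS d) : pk (tc e) (xc e) = e := rfl
theorem tc_sub {d : ℕ} (e e' : TS d) : tc (e - e') = tc e - tc e' := rfl
theorem xc_sub {d : ℕ} (e e' : TS d) : xc (e - e') = xc e - xc e' := rfl
theorem tc_add {d : ℕ} (e e' : TS d) : tc (e + e') = tc e + tc e' := rfl
theorem xc_add {d : ℕ} (e e' : TS d) : xc (e + e') = xc e + xc e' := rfl
theorem tc_smul {d : ℕ} (c : ℝ) (e : TS d) : tc (c • e) = c * tc e := rfl
theorem xc_smul {d : ℕ} (c : ℝ) (e : TS d) : xc (c • e) = c • xc e := rfl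
theorem tc_zero {d : ℕ} : tc (0 : TS d) = 0 := rfl
theorem xc_zero {d : ℕ} : xc (0 : TS d) = 0 := rfl
theorem pk_add {d : ℕ} (t t' : ℝ) (x x' : Fin d → ℝ) : pk (t + t') (x + x') = pk t x + pk t' x' := rfl
theorem pk_sub {d : ℕ} (t t' : ℝ) (x x' : Fin d → ℝ) : pk (t - t') (x - x') = pk t x - pk t' x' := rfl
theorem ts_inner {d : ℕ} (e e' : TS d) : inner ℝ e e' = tc e * tc e' + dotp (xc e) (xc e') := by
  rw [WithLp.prod_inner_apply, dotp_eq]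
  simp [tc, xc, mul_comm]
theorem ts_norm_sq {d : ℕ} (e : TS d) : ‖e‖ ^ 2 = tc e ^ 2 + eunorm (xc e) ^ 2 := by
  rw [← real_inner_self_eq_norm_sq, ts_inner, eunorm_sq]; ring
theorem continuous_tc {d : ℕ} : Continuous (tc : TS d → ℝ) := by
  unfold tc; fun_prop
theorem continuous_xc {d : ℕ} : Continuous (xc : TS d → Fin d → ℝ) := by
  unfold xc; fun_prop
theorem continuous_pk {d : ℕ} : Continuous (fun p : ℝ × (Fin d → ℝ) => pk p.1 p.2) := by
  unfold pk; fun_prop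

/-- diagonal operator -/
def diagOp {d : ℕ} (a b : ℝ) : TS d →L[ℝ] TS d :=
  { toFun := fun e => pk (a * tc e) (b • xc e)
    map_add' := fun e e' => by rw [tc_add, xc_add, mul_add, smul_add, pk_add]
    map_smul' := fun c e => by
      rw [tc_smul, xc_smul]
      show pk _ _ = c • pk _ _
      have : c • pk (a * tc e) (b • xc e) = pk (c * (a * tc e)) (c • b • xc e) := rfl
      rw [this, smul_comm c b, mul_left_comm]
    cont := by
      refine continuous_pk.comp (f := fun e : TS d => (a * tc e, b • xc e)) ?_
      have := continuous_tc (d := d)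
      have := continuous_xc (d := d)
      fun_prop }

theorem diagOp_inner {d : ℕ} (a b : ℝ) (e e' : TS d) :
    inner ℝ (diagOp a b e) e' = a * (tc e * tc e') + b * dotp (xc e) (xc e') := by
  have : diagOp a b e = pk (a * tc e) (b • xc e) := rfl
  rw [this, ts_inner, tc_pk, xc_pk, dotp_smul_left]; ring

theorem sym_matrix {d : ℕ} (A : TS d →L[ℝ] TS d) : ∃ X : Matrix (Fin d) (Fin d) ℝ, X.IsSymm ∧
    ∀ ζ, dotp (X.mulVec ζ) ζ = inner ℝ (A (pk 0 ζ)) (pk 0 ζ) := by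
  have hadd : ∀ ζ ζ' : Fin d → ℝ, pk 0 (ζ + ζ') = pk 0 ζ + pk 0 ζ' := by
    intro ζ ζ'; rw [← pk_add, add_zero]
  have hsm : ∀ (c : ℝ) (ζ : Fin d → ℝ), pk 0 (c • ζ) = c • pk 0 ζ := by
    intro c ζ
    have : c • pk 0 ζ = pk (c * 0) (c • ζ) := rfl
    rw [this, mul_zero]
  let B : LinearMap.BilinForm ℝ (Fin d → ℝ) := LinearMap.mk₂ ℝ
    (fun ζ ζ' => inner ℝ (A (pk 0 ζ)) (pk 0 ζ'))
    (fun a b c => by rw [hadd, map_add, inner_add_left])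
    (fun a b c => by rw [hsm, map_smul, real_inner_smul_left]; rfl)
    (fun a b c => by rw [hadd, inner_add_right])
    (fun a b c => by rw [hsm, real_inner_smul_right]; rfl)
  let N := LinearMap.BilinForm.toMatrix' B
  have hN : ∀ ζ, dotp (N.mulVec ζ) ζ = inner ℝ (A (pk 0 ζ)) (pk 0 ζ) := by
    intro ζ
    have h1 : Matrix.toBilin' N = B := Matrix.toBilin'_toMatrix' B
    have h2 := Matrix.toBilin'_apply' N ζ ζ
    rw [h1] at h2
    have h3 : B ζ ζ = inner ℝ (A (pk 0 ζ)) (pk 0 ζ) := rfl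
    rw [← h3, h2, dotp_comm]; rfl
  have hNt : ∀ ζ, dotp (Nᵀ.mulVec ζ) ζ = dotp (N.mulVec ζ) ζ := by
    intro ζ
    rw [dotp_comm, Matrix.mulVec_transpose]
    show ζ ⬝ᵥ (ζ ᵥ* N) = (N *ᵥ ζ) ⬝ᵥ ζ
    rw [dotProduct_comm, ← Matrix.dotProduct_mulVec, dotProduct_comm]
  refine ⟨(1 / 2 : ℝ) • (N + Nᵀ), ?_, fun ζ => ?_⟩
  · unfold Matrix.IsSymm
    rw [Matrix.transpose_smul, Matrix.transpose_add, Matrix.transpose_transpose, add_comm]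
  · rw [Matrix.smul_mulVec, Matrix.add_mulVec, dotp_smul_left, dotp_add_left, hNt, ← hN]; ring

theorem jet_core {d : ℕ} (K : Set (Fin d → ℝ)) (u : ℝ → (Fin d → ℝ) → ℝ) (T1 t : ℝ)
    (ht : t ∈ Set.Ioo 0 T1) (x : Fin d → ℝ) (p : ℝ) (q : Fin d → ℝ) (A : TS d →L[ℝ] TS d)
    (r : ℝ) (hr : 0 < r)
    (hloc : ∀ s ∈ Set.Icc 0 T1, ∀ y ∈ K, |s - t| < r → eunorm (y - x) < r →
      u s y ≤ u t x + p * (s - t) + dotp q (y - x) +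
        1 / 2 * inner ℝ (A (pk (s - t) (y - x))) (pk (s - t) (y - x))) :
    ∃ X, InSuperjet K u t x p q X ∧
      ∀ ζ, dotp (X.mulVec ζ) ζ = inner ℝ (A (pk 0 ζ)) (pk 0 ζ) := by
  obtain ⟨X, hX, hXq⟩ := sym_matrix A
  refine ⟨X, ⟨hX, fun R => ‖A‖ * (R * √R + R ^ 2), by fun_prop, by simp, ?_,
    min r (min t (T1 - t)), ?_, ?_⟩, hXq⟩
  · have h1 : Tendsto (fun R : ℝ => ‖A‖ * (√R + R)) (𝓝[>] (0:ℝ)) (𝓝 0) := by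
      have : Continuous (fun R : ℝ => ‖A‖ * (√R + R)) := by fun_prop
      have := this.tendsto 0
      simp only [Real.sqrt_zero, add_zero, mul_zero] at this
      exact this.mono_left nhdsWithin_le_nhds
    refine h1.congr' ?_
    filter_upwards [self_mem_nhdsWithin] with R hR
    have : (0:ℝ) < R := hR
    field_simp
  · exact lt_min hr (lt_min ht.1 (by linarith [ht.2]))
  · intro s hs y hy h1 h2
    have h1a := h1.trans_le (min_le_left _ _)
    have h1b := h1.trans_le ((min_le_right _ _).trans (min_le_right _ _))
    have h2a := h2.trans_le (min_le_left _ _)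
    have h := hloc s ⟨hs, by linarith [(abs_lt.1 h1b).2]⟩ y hy h1a h2a
    obtain ⟨τ, hτ⟩ : ∃ τ, τ = s - t := ⟨_, rfl⟩
    obtain ⟨ζ, hζ⟩ : ∃ ζ, ζ = y - x := ⟨_, rfl⟩
    rw [← hτ, ← hζ] at h ⊢
    have e : pk τ ζ = pk τ 0 + pk 0 ζ := by rw [← pk_add, add_zero, zero_add]
    have n1 : ‖pk τ (0 : Fin d → ℝ)‖ = |τ| := by
      have := ts_norm_sq (pk τ (0 : Fin d → ℝ))
      rw [tc_pk, xc_pk, eunorm_zero] at this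
      rw [← abs_of_nonneg (norm_nonneg (pk τ (0 : Fin d → ℝ))), ← sq_eq_sq_iff_abs_eq_abs]
      linarith
    have n2 : ‖pk 0 ζ‖ = eunorm ζ := by
      have := ts_norm_sq (pk 0 ζ)
      rw [tc_pk, xc_pk] at this
      rw [← abs_of_nonneg (norm_nonneg (pk 0 ζ)), ← abs_of_nonneg (eunorm_nonneg ζ),
        ← sq_eq_sq_iff_abs_eq_abs]
      linarith
    have hb : ∀ a b : TS d, inner ℝ (A a) b ≤ ‖A‖ * (‖a‖ * ‖b‖) := by
      intro a b
      calc _ ≤ ‖A a‖ * ‖b‖ := real_inner_le_norm _ _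
        _ ≤ ‖A‖ * ‖a‖ * ‖b‖ := by gcongr; exact A.le_opNorm a
        _ = _ := by ring
    have b1 := hb (pk τ 0) (pk τ 0)
    have b2 := hb (pk τ 0) (pk 0 ζ)
    have b3 := hb (pk 0 ζ) (pk τ 0)
    rw [e, map_add, inner_add_left, inner_add_right, inner_add_right, ← hXq] at h
    rw [n1] at b1 b2 b3
    rw [n2] at b2 b3
    have hA := norm_nonneg A
    have hz := eunorm_nonneg ζ
    have ha := abs_nonneg τ
    have e1 : |τ| * |τ| ≤ (|τ| + eunorm ζ ^ 2) ^ 2 := by nlinarith [sq_nonneg (eunorm ζ)]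
    have e2 : |τ| * eunorm ζ ≤ (|τ| + eunorm ζ ^ 2) * √(|τ| + eunorm ζ ^ 2) := by
      apply mul_le_mul _ _ hz (by positivity)
      · nlinarith
      · apply Real.le_sqrt_of_sq_le; linarith
    have f1 := mul_le_mul_of_nonneg_left e1 hA
    have f2 := mul_le_mul_of_nonneg_left e2 hA
    have f3 : 0 ≤ ‖A‖ * (|τ| * |τ|) := by positivity
    nlinarith

theorem subjet_of_neg {d : ℕ} (K : Set (Fin d → ℝ)) (v : ℝ → (Fin d → ℝ) → ℝ) (t : ℝ)
    (x : Fin d → ℝ) (p : ℝ) (q : Fin d → ℝ) (X : Matrix (Fin d) (Fin d) ℝ)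
    (h : InSuperjet K (fun t x => - v t x) t x p q X) : InSubjet K v t x (-p) (-q) (-X) := by
  obtain ⟨hX, o, ho, ho0, hol, δ, hδ, hj⟩ := h
  refine ⟨?_, fun r => - o r, ho.neg, by simp [ho0], ?_, δ, hδ, ?_⟩
  · unfold Matrix.IsSymm at *
    rw [Matrix.transpose_neg, hX]
  · simpa [neg_div] using hol.neg
  · intro s hs y hy h1 h2
    have := hj s hs y hy h1 h2
    rw [Matrix.neg_mulVec, dotp_neg_left, dotp_neg_left]
    linarith

theorem ts_bounds {d : ℕ} (e : TS d) : |tc e| ≤ ‖e‖ ∧ eunorm (xc e) ≤ ‖e‖ := by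
  have h := ts_norm_sq e
  constructor
  · apply abs_le_of_sq_le_sq _ (norm_nonneg e); nlinarith [sq_nonneg (eunorm (xc e))]
  · apply le_of_sq_le_sq _ (norm_nonneg e)
    nlinarith [sq_nonneg (tc e)]

theorem ts_norm_lt {d : ℕ} (t : ℝ) (x : Fin d → ℝ) (r : ℝ) (ht : |t| < r / 2) (hx : eunorm x < r / 2) :
    ‖pk t x‖ < r := by
  have h := ts_norm_sq (pk t x)
  rw [tc_pk, xc_pk] at h
  have h0 := eunorm_nonneg x
  have h1 := abs_nonneg t
  have h2 := sq_abs t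
  by_contra hc
  push Not at hc
  nlinarith

/-- one-sided data transformation for `para_tos` -/
def shifted {d : ℕ} (w : ℝ → (Fin d → ℝ) → ℝ) (t0 : ℝ) (x0 : Fin d → ℝ) (P : ℝ) (Q : Fin d → ℝ)
    (ct c : ℝ) (e : TS d) : ℝ :=
  w (t0 + tc e) (x0 + xc e) - w t0 x0 - P * tc e - dotp Q (xc e)
    - ct / 2 * tc e ^ 2 - c / 2 * eunorm (xc e) ^ 2

def shiftSet {d : ℕ} (K : Set (Fin d → ℝ)) (T1 t0 : ℝ) (x0 : Fin d → ℝ) : Set (TS d) :=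
  {e | t0 + tc e ∈ Set.Icc 0 T1 ∧ x0 + xc e ∈ K}

theorem shiftSet_compact {d : ℕ} (K : Set (Fin d → ℝ)) (hK : IsCompact K) (T1 t0 : ℝ)
    (x0 : Fin d → ℝ) : IsCompact (shiftSet K T1 t0 x0) := by
  have : shiftSet K T1 t0 x0 = (fun p : ℝ × (Fin d → ℝ) => pk (p.1 - t0) (p.2 - x0)) ''
      (Set.Icc 0 T1 ×ˢ K) := by
    ext e
    constructor
    · rintro ⟨h1, h2⟩
      refine ⟨(t0 + tc e, x0 + xc e), ⟨h1, h2⟩, ?_⟩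
      simp only [add_sub_cancel_left]
      exact pk_eta e
    · rintro ⟨⟨s, y⟩, ⟨h1, h2⟩, rfl⟩
      refine ⟨?_, ?_⟩
      · rw [tc_pk]; simpa using h1
      · rw [xc_pk]; simpa using h2
  rw [this]
  refine (isCompact_Icc.prod hK).image ?_
  exact continuous_pk.comp (f := fun p : ℝ × (Fin d → ℝ) => (p.1 - t0, p.2 - x0)) (by fun_prop)

theorem shifted_cont {d : ℕ} (K : Set (Fin d → ℝ)) (T1 : ℝ) (w : ℝ → (Fin d → ℝ) → ℝ)
    (hw : ContinuousOn (fun p : ℝ × (Fin d → ℝ) => w p.1 p.2) (Set.Icc 0 T1 ×ˢ K))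
    (t0 : ℝ) (x0 : Fin d → ℝ) (P : ℝ) (Q : Fin d → ℝ) (ct c : ℝ) :
    ContinuousOn (shifted w t0 x0 P Q ct c) (shiftSet K T1 t0 x0) := by
  have ht := continuous_tc (d := d)
  have hx := continuous_xc (d := d)
  have hd : Continuous fun e : TS d => dotp Q (xc e) := continuous_dotp continuous_const hx
  have he : Continuous fun e : TS d => eunorm (xc e) := continuous_eunorm.comp hx
  have h1 : ContinuousOn (fun e : TS d => w (t0 + tc e) (x0 + xc e)) (shiftSet K T1 t0 x0) := by
    refine hw.comp (f := fun e : TS d => (t0 + tc e, x0 + xc e)) ?_ ?_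
    · exact (by fun_prop : Continuous _).continuousOn
    · intro e he; exact he
  have h2 : Continuous (fun e : TS d => w t0 x0 + P * tc e + dotp Q (xc e)
    + ct / 2 * tc e ^ 2 + c / 2 * eunorm (xc e) ^ 2) := by fun_prop
  refine (h1.sub h2.continuousOn).congr fun e _ => ?_
  simp only [shifted, Pi.sub_apply]; ring

theorem shifted_jet {d : ℕ} (K : Set (Fin d → ℝ)) (w : ℝ → (Fin d → ℝ) → ℝ) (T1 t0 : ℝ)
    (x0 : Fin d → ℝ) (P : ℝ) (Q : Fin d → ℝ) (ct c : ℝ) (e q : TS d) (A : TS d →L[ℝ] TS d)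
    (r : ℝ) (hr : 0 < r) (ht : t0 + tc e ∈ Set.Ioo 0 T1)
    (hloc : ∀ e' ∈ shiftSet K T1 t0 x0, ‖e' - e‖ < r →
      shifted w t0 x0 P Q ct c e' ≤ shifted w t0 x0 P Q ct c e + inner ℝ q (e' - e)
        + 1 / 2 * inner ℝ (A (e' - e)) (e' - e)) :
    ∃ X, InSuperjet K w (t0 + tc e) (x0 + xc e) (P + ct * tc e + tc q)
        (Q + c • xc e + xc q) X ∧
      ∀ ζ, dotp (X.mulVec ζ) ζ = inner ℝ (A (pk 0 ζ)) (pk 0 ζ) + c * eunorm ζ ^ 2 := by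
  obtain ⟨X, hX, hXq⟩ := jet_core K w T1 (t0 + tc e) ht (x0 + xc e) (P + ct * tc e + tc q)
    (Q + c • xc e + xc q) (A + diagOp ct c) (r / 2) (by positivity) (by
      intro s hs y hy h1 h2
      obtain ⟨e', he'⟩ : ∃ e', e' = pk (s - t0) (y - x0) := ⟨_, rfl⟩
      have ed : pk (s - (t0 + tc e)) (y - (x0 + xc e)) = e' - e := by
        rw [he', ← sub_sub, ← sub_sub, pk_sub, pk_eta]
      have h := hloc e' (by
        rw [he']
        refine ⟨?_, ?_⟩
        · rw [tc_pk]; simpa using hs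
        · rw [xc_pk]; simpa using hy) (by rw [← ed]; exact ts_norm_lt _ _ _ h1 h2)
      rw [ed]
      have k1 : s - (t0 + tc e) = tc (e' - e) := by rw [← ed, tc_pk]
      have k2 : y - (x0 + xc e) = xc (e' - e) := by rw [← ed, xc_pk]
      rw [k1, k2, _root_.add_apply, inner_add_left, diagOp_inner]
      have f1 : t0 + tc e' = s := by rw [he', tc_pk]; ring
      have f2 : x0 + xc e' = y := by rw [he', xc_pk]; abel
      unfold shifted at h
      rw [f1, f2, ts_inner q] at h
      obtain ⟨w1, hw1⟩ : ∃ w1, w1 = e' - e := ⟨_, rfl⟩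
      rw [← hw1] at h ⊢
      have g1 : e' = e + w1 := by rw [hw1]; abel
      rw [g1, tc_add, xc_add, eunorm_sq, eunorm_sq, dotp_add_left, dotp_add_right, dotp_add_right,
        dotp_add_right, dotp_comm (xc w1) (xc e)] at h
      rw [dotp_add_left, dotp_add_left, dotp_smul_left]
      linarith)
  refine ⟨X, hX, fun ζ => ?_⟩
  rw [hXq, _root_.add_apply, inner_add_left, diagOp_inner, tc_pk, xc_pk, eunorm_sq]
  ring

set_option maxHeartbeats 1000000 in
theorem para_tos {d : ℕ} (K : Set (Fin d → ℝ)) (hK : IsCompact K) (T1 : ℝ)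
    (u v : ℝ → (Fin d → ℝ) → ℝ)
    (hu : ContinuousOn (fun p : ℝ × (Fin d → ℝ) => u p.1 p.2) (Set.Icc 0 T1 ×ˢ K))
    (hv : ContinuousOn (fun p : ℝ × (Fin d → ℝ) => v p.1 p.2) (Set.Icc 0 T1 ×ˢ K))
    (t0 s0 : ℝ) (ht0 : t0 ∈ Set.Ioo 0 T1) (hs0 : s0 ∈ Set.Ioo 0 T1)
    (x0 y0 : Fin d → ℝ) (hx0 : x0 ∈ K) (hy0 : y0 ∈ K)
    (P1 P2 : ℝ) (Q1 Q2 : Fin d → ℝ) (At A ct c : ℝ)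
    (hmax : ∀ t ∈ Set.Icc 0 T1, ∀ s ∈ Set.Icc 0 T1, ∀ x ∈ K, ∀ y ∈ K,
      u t x - v s y ≤ u t0 x0 - v s0 y0 + P1 * (t - t0) - P2 * (s - s0)
        + dotp Q1 (x - x0) - dotp Q2 (y - y0)
        + At / 2 * ((t - t0) - (s - s0)) ^ 2 + A / 2 * eunorm ((x - x0) - (y - y0)) ^ 2
        + ct / 2 * ((t - t0) ^ 2 + (s - s0) ^ 2)
        + c / 2 * (eunorm (x - x0) ^ 2 + eunorm (y - y0) ^ 2))
    (κ : ℝ) (hκ : 0 < κ) :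
    ∃ t ∈ Set.Ioo 0 T1, ∃ s ∈ Set.Ioo 0 T1, ∃ x ∈ K, ∃ y ∈ K, ∃ p1 p2 q1 q2 X Y,
      |t - t0| ≤ κ ∧ |s - s0| ≤ κ ∧ eunorm (x - x0) ≤ κ ∧ eunorm (y - y0) ≤ κ ∧
      |p1 - P1| ≤ κ ∧ |p2 - P2| ≤ κ ∧ eunorm (q1 - Q1) ≤ κ ∧ eunorm (q2 - Q2) ≤ κ ∧
      InSuperjet K u t x p1 q1 X ∧ InSubjet K v s y p2 q2 Y ∧
      ∀ ξ ζ, dotp (X.mulVec ξ) ξ - dotp (Y.mulVec ζ) ζ ≤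
        A * eunorm (ξ - ζ) ^ 2 + (c + κ) * (eunorm ξ ^ 2 + eunorm ζ ^ 2) := by
  obtain ⟨a, ha⟩ : ∃ a, a = min (min t0 (T1 - t0)) (min s0 (T1 - s0)) := ⟨_, rfl⟩
  have ha0 : 0 < a := by
    rw [ha]; exact lt_min (lt_min ht0.1 (by linarith [ht0.2])) (lt_min hs0.1 (by linarith [hs0.2]))
  have a1 : a ≤ t0 := by rw [ha]; exact (min_le_left _ _).trans (min_le_left _ _)
  have a2 : a ≤ T1 - t0 := by rw [ha]; exact (min_le_left _ _).trans (min_le_right _ _)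
  have a3 : a ≤ s0 := by rw [ha]; exact (min_le_right _ _).trans (min_le_left _ _)
  have a4 : a ≤ T1 - s0 := by rw [ha]; exact (min_le_right _ _).trans (min_le_right _ _)
  obtain ⟨k, hk⟩ : ∃ k, k = min a (κ / (1 + |ct| + |c|)) := ⟨_, rfl⟩
  have hk0 : 0 < k := by rw [hk]; exact lt_min ha0 (by positivity)
  have hka : k ≤ a := by rw [hk]; exact min_le_left _ _
  have hkκ : k * (1 + |ct| + |c|) ≤ κ := by
    rw [← le_div_iff₀ (by positivity), hk]; exact min_le_right _ _
  have hkct : 0 ≤ k * |ct| := by positivity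
  have hkc : 0 ≤ k * |c| := by positivity
  obtain ⟨e1, he1, e2, he2, n1, n2, q1, q2, m1, m2, A1, A2, r, hr, j1, j2, hA⟩ :=
    tos_base (shiftSet K T1 t0 x0) (shiftSet K T1 s0 y0) (shiftSet_compact K hK T1 t0 x0)
    (shiftSet_compact K hK T1 s0 y0)
    (by refine ⟨?_, ?_⟩
        · rw [tc_zero, add_zero]; exact ⟨ht0.1.le, ht0.2.le⟩
        · rw [xc_zero, add_zero]; exact hx0)
    (by refine ⟨?_, ?_⟩
        · rw [tc_zero, add_zero]; exact ⟨hs0.1.le, hs0.2.le⟩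
        · rw [xc_zero, add_zero]; exact hy0)
    (shifted u t0 x0 P1 Q1 ct c) (shifted (fun t x => - v t x) s0 y0 (-P2) (-Q2) ct c)
    (shifted_cont K T1 u hu _ _ _ _ _ _)
    (shifted_cont K T1 (fun t x => - v t x) hv.neg _ _ _ _ _ _)
    (by unfold shifted; rw [tc_zero, xc_zero, dotp_zero_right, eunorm_zero]; simp)
    (by unfold shifted; rw [tc_zero, xc_zero, dotp_zero_right, eunorm_zero]; simp)
    (diagOp At A) (by
      intro x y; rw [diagOp_inner, diagOp_inner, dotp_comm (xc x)]; ring)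
    (by
      intro e he e' he'
      have h := hmax _ he.1 _ he'.1 _ he.2 _ he'.2
      simp only [add_sub_cancel_left] at h
      rw [diagOp_inner, tc_sub, xc_sub, ← eunorm_sq]
      unfold shifted
      rw [dotp_neg_left]
      linarith) k hk0
  have b1 := ts_bounds e1
  have b2 := ts_bounds e2
  have b3 := ts_bounds q1
  have b4 := ts_bounds q2
  have t1 := abs_le.1 b1.1
  have t2 := abs_le.1 b2.1
  have ht : t0 + tc e1 ∈ Set.Ioo 0 T1 := ⟨by linarith, by linarith⟩
  have hs : s0 + tc e2 ∈ Set.Ioo 0 T1 := ⟨by linarith, by linarith⟩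
  obtain ⟨X, hX, hXq⟩ := shifted_jet K u T1 t0 x0 P1 Q1 ct c e1 q1 A1 r hr ht j1
  obtain ⟨Y, hY, hYq⟩ := shifted_jet K (fun t x => - v t x) T1 s0 y0 (-P2) (-Q2) ct c e2 q2 A2 r hr hs j2
  have hkk : k ≤ κ := by linarith
  refine ⟨_, ht, _, hs, _, he1.2, _, he2.2, _, _, _, _, X, -Y, ?_, ?_, ?_, ?_, ?_, ?_, ?_, ?_, hX,
    subjet_of_neg _ _ _ _ _ _ _ hY, ?_⟩
  · rw [add_sub_cancel_left]; linarith
  · rw [add_sub_cancel_left]; linarith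
  · rw [add_sub_cancel_left]; linarith
  · rw [add_sub_cancel_left]; linarith
  · have : |ct * tc e1| ≤ |ct| * k := by
      rw [abs_mul]; gcongr; linarith
    have h2 := abs_add_le (ct * tc e1) (tc q1)
    rw [show P1 + ct * tc e1 + tc q1 - P1 = ct * tc e1 + tc q1 by ring]
    linarith
  · have : |ct * tc e2| ≤ |ct| * k := by
      rw [abs_mul]; gcongr; linarith
    have h2 := abs_add_le (ct * tc e2) (tc q2)
    rw [show -(-P2 + ct * tc e2 + tc q2) - P2 = -(ct * tc e2 + tc q2) by ring, abs_neg]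
    linarith
  · have : eunorm (c • xc e1) ≤ |c| * k := by
      rw [eunorm_smul]; gcongr; linarith
    have h2 := eunorm_add_le (c • xc e1) (xc q1)
    rw [show Q1 + c • xc e1 + xc q1 - Q1 = c • xc e1 + xc q1 by abel]
    linarith
  · have : eunorm (c • xc e2) ≤ |c| * k := by
      rw [eunorm_smul]; gcongr; linarith
    have h2 := eunorm_add_le (c • xc e2) (xc q2)
    rw [show -(-Q2 + c • xc e2 + xc q2) - Q2 = -(c • xc e2 + xc q2) by abel, eunorm_neg]
    linarith
  · intro ξ ζ
    have h := hA (pk 0 ξ) (pk 0 ζ)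
    rw [diagOp_inner, ts_norm_sq, ts_norm_sq, ← pk_sub] at h
    simp only [tc_pk, xc_pk, sub_zero, mul_zero, zero_add] at h
    rw [Matrix.neg_mulVec, dotp_neg_left, hXq, hYq, eunorm_sq (ξ - ζ)]
    have h3 : k * (eunorm ξ ^ 2 + eunorm ζ ^ 2) ≤ κ * (eunorm ξ ^ 2 + eunorm ζ ^ 2) := by gcongr
    have h4 : (0:ℝ) ^ 2 = 0 := by norm_num
    simp only [h4, zero_add] at h
    linarith

theorem continuousOn_dotp_aux {d : ℕ} {α : Type*} [TopologicalSpace α] {f : α → Fin d → ℝ}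
    (hf : Continuous f) : Continuous fun a => eunorm (f a) := continuous_eunorm.comp hf

set_option maxHeartbeats 1000000 in
theorem doubling_max {d : ℕ} (K : Set (Fin d → ℝ)) (hK : IsCompact K) (T1 : ℝ)
    (u v : ℝ → (Fin d → ℝ) → ℝ)
    (hu : ContinuousOn (fun p : ℝ × (Fin d → ℝ) => u p.1 p.2) (Set.Icc 0 T1 ×ˢ K))
    (hv : ContinuousOn (fun p : ℝ × (Fin d → ℝ) => v p.1 p.2) (Set.Icc 0 T1 ×ˢ K))
    (th : ℝ) (hth : th ∈ Set.Icc 0 T1) (xh : Fin d → ℝ) (hxh : xh ∈ K)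
    (P : ℝ) (Q1 Q2 : Fin d → ℝ) (Ct c0 ct c : ℝ)
    (hstar : ∀ t ∈ Set.Icc 0 T1, ∀ x ∈ K, u t x - v t x ≤ u th xh - v th xh + P * (t - th)
      + dotp (Q1 - Q2) (x - xh) + Ct * (t - th) ^ 2 + c0 * eunorm (x - xh) ^ 2)
    (ε : ℝ) (hε : 0 < ε) (η : ℝ → ℝ) (hη : ∀ A, 0 < η A) (A1 : ℝ) :
    ∃ A At, A1 ≤ A ∧ 1 ≤ A ∧ ∃ t ∈ Set.Icc 0 T1, ∃ s ∈ Set.Icc 0 T1, ∃ x ∈ K, ∃ y ∈ K,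
      A / 2 * eunorm (x - y) ^ 2 + (ct - Ct) * (t - th) ^ 2 + (c - c0) * eunorm (x - xh) ^ 2 ≤ ε ∧
      ((ct - Ct) * (t - th) ^ 2 + (c - c0) * eunorm (x - xh) ^ 2 ≥ 0 → |t - s| ≤ η A) ∧
      ∀ t' ∈ Set.Icc 0 T1, ∀ s' ∈ Set.Icc 0 T1, ∀ x' ∈ K, ∀ y' ∈ K,
        u t' x' - v s' y' - P * (t' - th) - dotp Q1 (x' - xh) + dotp Q2 (y' - xh)
          - ct / 2 * ((t' - th) ^ 2 + (s' - th) ^ 2)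
          - c / 2 * (eunorm (x' - xh) ^ 2 + eunorm (y' - xh) ^ 2)
          - A / 2 * eunorm (x' - y') ^ 2 - At / 2 * (t' - s') ^ 2 ≤
        u t x - v s y - P * (t - th) - dotp Q1 (x - xh) + dotp Q2 (y - xh)
          - ct / 2 * ((t - th) ^ 2 + (s - th) ^ 2)
          - c / 2 * (eunorm (x - xh) ^ 2 + eunorm (y - xh) ^ 2)
          - A / 2 * eunorm (x - y) ^ 2 - At / 2 * (t - s) ^ 2 := by
  let S : Set (ℝ × (Fin d → ℝ)) := Set.Icc 0 T1 ×ˢ K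
  have hS : IsCompact S := isCompact_Icc.prod hK
  have hSS : IsCompact (S ×ˢ S) := hS.prod hS
  have hu1 : ContinuousOn (fun z : (ℝ × (Fin d → ℝ)) × (ℝ × (Fin d → ℝ)) => u z.1.1 z.1.2) (S ×ˢ S) :=
    hu.comp (f := fun z : (ℝ × (Fin d → ℝ)) × (ℝ × (Fin d → ℝ)) => z.1) continuousOn_fst (fun z hz => hz.1)
  have hv1 : ContinuousOn (fun z : (ℝ × (Fin d → ℝ)) × (ℝ × (Fin d → ℝ)) => v z.1.1 z.1.2) (S ×ˢ S) :=
    hv.comp (f := fun z : (ℝ × (Fin d → ℝ)) × (ℝ × (Fin d → ℝ)) => z.1) continuousOn_fst (fun z hz => hz.1)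
  have hv2 : ContinuousOn (fun z : (ℝ × (Fin d → ℝ)) × (ℝ × (Fin d → ℝ)) => v z.2.1 z.2.2) (S ×ˢ S) :=
    hv.comp (f := fun z : (ℝ × (Fin d → ℝ)) × (ℝ × (Fin d → ℝ)) => z.2) continuousOn_snd (fun z hz => hz.2)
  -- smooth pieces
  have d1 : Continuous (fun z : (ℝ × (Fin d → ℝ)) × (ℝ × (Fin d → ℝ)) => dotp Q1 (z.1.2 - xh)) :=
    continuous_dotp continuous_const (by fun_prop)
  have d2 : Continuous (fun z : (ℝ × (Fin d → ℝ)) × (ℝ × (Fin d → ℝ)) => dotp Q2 (z.2.2 - xh)) :=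
    continuous_dotp continuous_const (by fun_prop)
  have d3 : Continuous (fun z : (ℝ × (Fin d → ℝ)) × (ℝ × (Fin d → ℝ)) => dotp Q2 (z.1.2 - xh)) :=
    continuous_dotp continuous_const (by fun_prop)
  have n1 : Continuous (fun z : (ℝ × (Fin d → ℝ)) × (ℝ × (Fin d → ℝ)) => eunorm (z.1.2 - xh)) :=
    continuous_eunorm.comp (by fun_prop)
  have n2 : Continuous (fun z : (ℝ × (Fin d → ℝ)) × (ℝ × (Fin d → ℝ)) => eunorm (z.2.2 - xh)) :=
    continuous_eunorm.comp (by fun_prop)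
  have n3 : Continuous (fun z : (ℝ × (Fin d → ℝ)) × (ℝ × (Fin d → ℝ)) => eunorm (z.1.2 - z.2.2)) :=
    continuous_eunorm.comp (by fun_prop)
  -- base function
  obtain ⟨F, hF⟩ : ∃ F : (ℝ × (Fin d → ℝ)) × (ℝ × (Fin d → ℝ)) → ℝ, ∀ z, F z =
      u z.1.1 z.1.2 - v z.2.1 z.2.2 - (P * (z.1.1 - th) + dotp Q1 (z.1.2 - xh) - dotp Q2 (z.2.2 - xh)
          + ct / 2 * ((z.1.1 - th) ^ 2 + (z.2.1 - th) ^ 2)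
          + c / 2 * (eunorm (z.1.2 - xh) ^ 2 + eunorm (z.2.2 - xh) ^ 2)) := ⟨_, fun _ => rfl⟩
  have hFc : ContinuousOn F (S ×ˢ S) := by
    rw [funext hF]
    have h2 : Continuous (fun z : (ℝ × (Fin d → ℝ)) × (ℝ × (Fin d → ℝ)) =>
      (P * (z.1.1 - th) + dotp Q1 (z.1.2 - xh) - dotp Q2 (z.2.2 - xh)
          + ct / 2 * ((z.1.1 - th) ^ 2 + (z.2.1 - th) ^ 2)
          + c / 2 * (eunorm (z.1.2 - xh) ^ 2 + eunorm (z.2.2 - xh) ^ 2))) := by fun_prop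
    exact (hu1.sub hv2).sub h2.continuousOn
  obtain ⟨G, hG⟩ : ∃ G : (ℝ × (Fin d → ℝ)) × (ℝ × (Fin d → ℝ)) → ℝ, ∀ z, G z =
      v z.1.1 z.1.2 - v z.2.1 z.2.2 + (dotp Q2 (z.2.2 - xh) - dotp Q2 (z.1.2 - xh)
          + ct / 2 * ((z.1.1 - th) ^ 2 - (z.2.1 - th) ^ 2)
          + c / 2 * (eunorm (z.1.2 - xh) ^ 2 - eunorm (z.2.2 - xh) ^ 2)) := ⟨_, fun _ => rfl⟩
  have hGc : ContinuousOn G (S ×ˢ S) := by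
    rw [funext hG]
    have h2 : Continuous (fun z : (ℝ × (Fin d → ℝ)) × (ℝ × (Fin d → ℝ)) =>
      (dotp Q2 (z.2.2 - xh) - dotp Q2 (z.1.2 - xh)
          + ct / 2 * ((z.1.1 - th) ^ 2 - (z.2.1 - th) ^ 2)
          + c / 2 * (eunorm (z.1.2 - xh) ^ 2 - eunorm (z.2.2 - xh) ^ 2))) := by fun_prop
    exact (hv1.sub hv2).add h2.continuousOn
  have hhat : ((th, xh), (th, xh)) ∈ S ×ˢ S := ⟨⟨hth, hxh⟩, ⟨hth, hxh⟩⟩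
  obtain ⟨B, hB0, hB⟩ : ∃ B, 0 ≤ B ∧ ∀ z ∈ S ×ˢ S, F z - (u th xh - v th xh) ≤ B := by
    obtain ⟨z, hz, hzm⟩ := hSS.exists_isMaxOn ⟨_, hhat⟩ hFc
    refine ⟨F z - (u th xh - v th xh), ?_, fun z' hz' => ?_⟩
    · have h1 : F ((th, xh), (th, xh)) ≤ F z := hzm hhat
      rw [hF] at h1
      simp [dotp_zero_right, eunorm_zero] at h1
      linarith
    · have h1 : F z' ≤ F z := hzm hz'
      linarith
  have huc := hSS.uniformContinuousOn_of_continuous hGc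
  rw [Metric.uniformContinuousOn_iff] at huc
  obtain ⟨δ, hδ, huc⟩ := huc ε hε
  obtain ⟨A, hA⟩ : ∃ A, A = max A1 1 + 2 * (B + 1) / δ ^ 2 := ⟨_, rfl⟩
  have hpos : 0 < 2 * (B + 1) / δ ^ 2 := by positivity
  have hA1 : A1 ≤ A := by rw [hA]; linarith [le_max_left A1 1]
  have hA2 : 1 ≤ A := by rw [hA]; linarith [le_max_right A1 1]
  have hA3 : 2 * (B + 1) / δ ^ 2 ≤ A := by rw [hA]; linarith [le_max_right A1 1]
  obtain ⟨At, hAt⟩ : ∃ At, At = 2 * (B + 1) / δ ^ 2 + 2 * ε / (η A) ^ 2 := ⟨_, rfl⟩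
  have hηA := hη A
  have hpos2 : 0 < 2 * ε / (η A) ^ 2 := by positivity
  have hAt0 : 0 < At := by rw [hAt]; positivity
  have hAt1 : 2 * (B + 1) / δ ^ 2 ≤ At := by rw [hAt]; linarith
  have hAt2 : 2 * ε / (η A) ^ 2 ≤ At := by rw [hAt]; linarith
  rw [div_le_iff₀ (by positivity)] at hA3 hAt1 hAt2
  have hPc : ContinuousOn (fun z => F z - (A / 2 * eunorm (z.1.2 - z.2.2) ^ 2 + At / 2 * (z.1.1 - z.2.1) ^ 2))
      (S ×ˢ S) := by
    have h2 : Continuous (fun z : (ℝ × (Fin d → ℝ)) × (ℝ × (Fin d → ℝ)) =>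
      (A / 2 * eunorm (z.1.2 - z.2.2) ^ 2 + At / 2 * (z.1.1 - z.2.1) ^ 2)) := by fun_prop
    exact hFc.sub h2.continuousOn
  obtain ⟨⟨⟨t, x⟩, ⟨s, y⟩⟩, hz, hzm⟩ := hSS.exists_isMaxOn ⟨_, hhat⟩ hPc
  obtain ⟨⟨ht, hx⟩, ⟨hs, hy⟩⟩ := hz
  dsimp only at ht hx hs hy
  have hm0 : F ((th, xh), (th, xh)) - (A / 2 * eunorm (xh - xh) ^ 2 + At / 2 * (th - th) ^ 2) ≤
    F ((t, x), (s, y)) - (A / 2 * eunorm (x - y) ^ 2 + At / 2 * (t - s) ^ 2) := hzm hhat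
  have hF0 : F ((th, xh), (th, xh)) = u th xh - v th xh := by
    rw [hF]; simp [dotp_zero_right, eunorm_zero]
  rw [hF0] at hm0
  simp only [sub_self, eunorm_zero] at hm0
  have hBz := hB ((t, x), (s, y)) ⟨⟨ht, hx⟩, ⟨hs, hy⟩⟩
  have q1 : 0 ≤ A / 2 * eunorm (x - y) ^ 2 := by positivity
  have q2 : 0 ≤ At / 2 * (t - s) ^ 2 := by positivity
  have hxy : eunorm (x - y) < δ := by
    by_contra hcon
    push Not at hcon
    have : δ ^ 2 ≤ eunorm (x - y) ^ 2 := by gcongr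
    nlinarith
  have hts : |t - s| < δ := by
    by_contra hcon
    push Not at hcon
    have : δ ^ 2 ≤ |t - s| ^ 2 := by gcongr
    rw [sq_abs] at this
    nlinarith
  have hGz : G ((t, x), (s, y)) ≤ ε := by
    have h1 := huc ((t, x), (s, y)) ⟨⟨ht, hx⟩, ⟨hs, hy⟩⟩ ((t, x), (t, x)) ⟨⟨ht, hx⟩, ⟨ht, hx⟩⟩ (by
      rw [Prod.dist_eq, dist_self, Prod.dist_eq]
      simp only [sup_lt_iff]
      refine ⟨hδ, ?_, ?_⟩
      · rw [Real.dist_eq, abs_sub_comm]; exact hts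
      · rw [dist_comm, dist_eq_norm]; exact (norm_le_eunorm _).trans_lt hxy)
    have h0 : G ((t, x), (t, x)) = 0 := by rw [hG]; simp
    rw [h0, Real.dist_eq, sub_zero] at h1
    exact (abs_lt.1 h1).2.le
  have hst := hstar t ht x hx
  rw [hG] at hGz
  rw [hF] at hm0
  dsimp only at hGz hm0
  rw [dotp_sub_left] at hst
  have hfin : A / 2 * eunorm (x - y) ^ 2 + At / 2 * (t - s) ^ 2 + (ct - Ct) * (t - th) ^ 2 +
      (c - c0) * eunorm (x - xh) ^ 2 ≤ ε := by linarith
  refine ⟨A, At, hA1, hA2, t, ht, s, hs, x, hx, y, hy, by linarith, ?_, ?_⟩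
  · intro hnn
    apply abs_le_of_sq_le_sq _ hηA.le
    have h1 : At * (t - s) ^ 2 ≤ 2 * ε := by linarith
    have h2 : At * (t - s) ^ 2 ≤ At * (η A) ^ 2 := by linarith
    exact le_of_mul_le_mul_left h2 hAt0
  · intro t' ht' s' hs' x' hx' y' hy'
    have h1 : F ((t', x'), (s', y')) - (A / 2 * eunorm (x' - y') ^ 2 + At / 2 * (t' - s') ^ 2) ≤
      F ((t, x), (s, y)) - (A / 2 * eunorm (x - y) ^ 2 + At / 2 * (t - s) ^ 2) :=
      hzm (show ((t', x'), (s', y')) ∈ S ×ˢ S from ⟨⟨ht', hx'⟩, ⟨hs', hy'⟩⟩)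
    rw [hF, hF] at h1
    dsimp only at h1
    linarith

theorem eunorm_add_sq {d : ℕ} (a b : Fin d → ℝ) :
    eunorm (a + b) ^ 2 = eunorm a ^ 2 + 2 * dotp a b + eunorm b ^ 2 := by
  rw [eunorm_sq, eunorm_sq, eunorm_sq, dotp_add_left, dotp_add_right, dotp_add_right, dotp_comm b a]
  ring

set_option maxHeartbeats 2000000 in
theorem doubling {d : ℕ} (K : Set (Fin d → ℝ)) (hK : IsCompact K) (T1 : ℝ)
    (u v : ℝ → (Fin d → ℝ) → ℝ)
    (hu : ContinuousOn (fun p : ℝ × (Fin d → ℝ) => u p.1 p.2) (Set.Icc 0 T1 ×ˢ K))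
    (hv : ContinuousOn (fun p : ℝ × (Fin d → ℝ) => v p.1 p.2) (Set.Icc 0 T1 ×ˢ K))
    (th : ℝ) (hth : th ∈ Set.Ioo 0 T1) (xh : Fin d → ℝ) (hxh : xh ∈ K)
    (P : ℝ) (Q1 Q2 : Fin d → ℝ) (Ct c0 : ℝ) (hCt : 0 ≤ Ct) (hc0 : 0 ≤ c0)
    (hstar : ∀ t ∈ Set.Icc 0 T1, ∀ x ∈ K, u t x - v t x ≤ u th xh - v th xh + P * (t - th)
      + dotp (Q1 - Q2) (x - xh) + Ct * (t - th) ^ 2 + c0 * eunorm (x - xh) ^ 2)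
    (κ : ℝ) (hκ : 0 < κ) (η : ℝ → ℝ) (hη : ∀ A, 0 < η A) :
    ∃ A, 1 / κ ≤ A ∧ 1 ≤ A ∧
    ∃ t ∈ Set.Ioo 0 T1, ∃ s ∈ Set.Ioo 0 T1, ∃ x ∈ K, ∃ y ∈ K, ∃ p1 p2 q1 q2 X Y,
      |t - th| ≤ κ ∧ |s - th| ≤ κ ∧ eunorm (x - xh) ≤ κ ∧ eunorm (y - xh) ≤ κ ∧
      |t - s| ≤ η A ∧ A * eunorm (x - y) ^ 2 ≤ κ ∧
      eunorm (q1 - (A • (x - y) + Q1)) ≤ κ ∧ eunorm (q2 - (A • (x - y) + Q2)) ≤ κ ∧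
      P - κ ≤ p1 - p2 ∧
      InSuperjet K u t x p1 q1 X ∧ InSubjet K v s y p2 q2 Y ∧
      ∀ ξ ζ, dotp (X.mulVec ξ) ξ - dotp (Y.mulVec ζ) ζ ≤
        A * eunorm (ξ - ζ) ^ 2 + (c0 + κ) * (eunorm ξ ^ 2 + eunorm ζ ^ 2) := by
  obtain ⟨c, hc⟩ : ∃ c, c = c0 + κ / 2 := ⟨_, rfl⟩
  obtain ⟨ct, hct⟩ : ∃ ct, ct = Ct + 1 := ⟨_, rfl⟩
  have hcp : 0 < c := by rw [hc]; positivity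
  have hctp : 0 < ct := by rw [hct]; positivity
  obtain ⟨a, ha⟩ : ∃ a, a = min 1 (min (th / 4) ((T1 - th) / 4)) := ⟨_, rfl⟩
  have ha0 : 0 < a := by
    rw [ha]; exact lt_min one_pos (lt_min (by linarith [hth.1]) (by linarith [hth.2]))
  have ha1 : a ≤ 1 := by rw [ha]; exact min_le_left _ _
  have ha2 : a ≤ th / 4 := by rw [ha]; exact (min_le_right _ _).trans (min_le_left _ _)
  have ha3 : a ≤ (T1 - th) / 4 := by rw [ha]; exact (min_le_right _ _).trans (min_le_right _ _)
  obtain ⟨μ, hμ⟩ : ∃ μ, μ = min a (κ / (20 * (1 + c + ct))) := ⟨_, rfl⟩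
  have hμ0 : 0 < μ := by rw [hμ]; exact lt_min ha0 (by positivity)
  have hμa : μ ≤ a := by rw [hμ]; exact min_le_left _ _
  have hμκ : μ * (20 * (1 + c + ct)) ≤ κ := by
    rw [← le_div_iff₀ (by positivity), hμ]; exact min_le_right _ _
  have hμc : 0 < μ * c := by positivity
  have hμct : 0 < μ * ct := by positivity
  have hμsq : μ ^ 2 ≤ μ := by nlinarith
  obtain ⟨ε, hε⟩ : ∃ ε, ε = min (μ ^ 2 / 2) (κ * μ ^ 2 / 2) := ⟨_, rfl⟩
  have hε0 : 0 < ε := by rw [hε]; exact lt_min (by positivity) (by positivity)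
  have hε1 : ε ≤ μ ^ 2 / 2 := by rw [hε]; exact min_le_left _ _
  have hε2 : ε ≤ κ * μ ^ 2 / 2 := by rw [hε]; exact min_le_right _ _
  obtain ⟨A, At, hA1, hA2, t0, ht0, s0, hs0, x0, hx0, y0, hy0, hb, hts, hmax⟩ :=
    doubling_max K hK T1 u v hu hv th ⟨hth.1.le, hth.2.le⟩ xh hxh P Q1 Q2 Ct c0 ct c hstar ε hε0
      (fun A => min μ (η A / 2)) (fun A => lt_min hμ0 (half_pos (hη A))) (1 / κ)
  have e1 : ct - Ct = 1 := by rw [hct]; ring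
  have e2 : c - c0 = κ / 2 := by rw [hc]; ring
  rw [e1, e2] at hb hts
  have hts := hts (by positivity)
  have hts1 := hts.trans (min_le_left _ _)
  have hts2 := hts.trans (min_le_right _ _)
  have hAp : 0 < A := by linarith
  have z1 : 0 ≤ A / 2 * eunorm (x0 - y0) ^ 2 := by positivity
  have z2 : 0 ≤ 1 * (t0 - th) ^ 2 := by positivity
  have z3 : 0 ≤ κ / 2 * eunorm (x0 - xh) ^ 2 := by positivity
  have c1 : |t0 - th| ≤ μ := by
    apply abs_le_of_sq_le_sq _ hμ0.le; nlinarith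
  have c2 : eunorm (x0 - xh) ≤ μ := by
    apply le_of_sq_le_sq _ hμ0.le
    have : κ * eunorm (x0 - xh) ^ 2 ≤ κ * μ ^ 2 := by linarith
    exact le_of_mul_le_mul_left this hκ
  have c3 : A * eunorm (x0 - y0) ^ 2 ≤ μ ^ 2 := by linarith
  have c4 : eunorm (x0 - y0) ≤ μ := by
    apply le_of_sq_le_sq _ hμ0.le
    nlinarith [sq_nonneg (eunorm (x0 - y0))]
  have c5 : |s0 - th| ≤ 2 * μ := by
    have := abs_sub_le s0 t0 th
    rw [abs_sub_comm s0 t0] at this; linarith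
  have c6 : eunorm (y0 - xh) ≤ 2 * μ := by
    have := eunorm_add_le (y0 - x0) (x0 - xh)
    rw [sub_add_sub_cancel, eunorm_sub_comm y0 x0] at this; linarith
  obtain ⟨k, hk⟩ : ∃ k, k = min (μ / (1 + A)) (η A / 4) := ⟨_, rfl⟩
  have hk0 : 0 < k := by rw [hk]; exact lt_min (by positivity) (by linarith [hη A])
  have hk1 : k * (1 + A) ≤ μ := by
    rw [← le_div_iff₀ (by positivity), hk]; exact min_le_left _ _
  have hk2 : k ≤ η A / 4 := by rw [hk]; exact min_le_right _ _
  have hkA : 0 < k * A := by positivity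
  have hkμ : k ≤ μ := by linarith
  have d1 := abs_le.1 c1
  have d2 := abs_le.1 c5
  obtain ⟨t, ht, s, hs, x, hx, y, hy, p1, p2, q1, q2, X, Y, f1, f2, f3, f4, f5, f6, f7, f8, jX, jY, hXY⟩ :=
    para_tos K hK T1 u v hu hv t0 s0 ⟨by linarith, by linarith⟩ ⟨by linarith, by linarith⟩ x0 y0 hx0 hy0
      (P + ct * (t0 - th) + At * (t0 - s0)) (At * (t0 - s0) - ct * (s0 - th))
      (Q1 + c • (x0 - xh) + A • (x0 - y0)) (Q2 - c • (y0 - xh) + A • (x0 - y0)) At A ct c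
      (by
        intro t ht s hs x hx y hy
        have h := hmax t ht s hs x hx y hy
        obtain ⟨w, hw⟩ : ∃ w, w = x - x0 := ⟨_, rfl⟩
        obtain ⟨z, hz⟩ : ∃ z, z = y - y0 := ⟨_, rfl⟩
        have g1 : x - xh = (x0 - xh) + w := by rw [hw]; abel
        have g2 : y - xh = (y0 - xh) + z := by rw [hz]; abel
        have g3 : x - y = (x0 - y0) + (w - z) := by rw [hw, hz]; abel
        rw [g1, g2, g3, eunorm_add_sq, eunorm_add_sq, eunorm_add_sq, dotp_add_right, dotp_add_right,
          dotp_sub_right (x0 - y0)] at h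
        rw [← hw, ← hz, dotp_add_left, dotp_add_left, dotp_add_left, dotp_sub_left, dotp_smul_left,
          dotp_smul_left, dotp_smul_left, dotp_smul_left]
        linarith) k hk0
  refine ⟨A, hA1, hA2, t, ht, s, hs, x, hx, y, hy, p1, p2, q1, q2, X, Y, ?_, ?_, ?_, ?_, ?_, ?_, ?_, ?_,
    ?_, jX, jY, ?_⟩
  · have := abs_sub_le t t0 th; linarith
  · have := abs_sub_le s s0 th; linarith
  · have := eunorm_add_le (x - x0) (x0 - xh)
    rw [sub_add_sub_cancel] at this; linarith
  · have := eunorm_add_le (y - y0) (y0 - xh)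
    rw [sub_add_sub_cancel] at this; linarith
  · have h1 := abs_sub_le t t0 s
    have h2 := abs_sub_le t0 s0 s
    rw [abs_sub_comm s0 s] at h2
    linarith
  · have h1 := eunorm_add_le (x0 - y0) ((x - x0) - (y - y0))
    have h2 := eunorm_sub_le (x - x0) (y - y0)
    rw [show x0 - y0 + (x - x0 - (y - y0)) = x - y by abel] at h1
    have h3 : eunorm (x - y) ≤ eunorm (x0 - y0) + 2 * k := by linarith
    have h4 : eunorm (x - y) ^ 2 ≤ (eunorm (x0 - y0) + 2 * k) ^ 2 := by
      gcongr; exact eunorm_nonneg _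
    have h5 : (eunorm (x0 - y0) + 2 * k) ^ 2 ≤ 2 * eunorm (x0 - y0) ^ 2 + 8 * k ^ 2 := by
      nlinarith [sq_nonneg (eunorm (x0 - y0) - 2 * k)]
    have h6 : A * eunorm (x - y) ^ 2 ≤ A * (2 * eunorm (x0 - y0) ^ 2 + 8 * k ^ 2) := by
      gcongr; linarith
    have h7 : A * k * k ≤ μ * μ := by
      apply mul_le_mul _ hkμ hk0.le hμ0.le; linarith
    nlinarith
  · have h1 : q1 - (A • (x - y) + Q1) = (q1 - (Q1 + c • (x0 - xh) + A • (x0 - y0)))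
      + (c • (x0 - xh) - A • ((x - x0) - (y - y0))) := by
      simp only [smul_sub]; abel
    rw [h1]
    have h2 := eunorm_add_le (q1 - (Q1 + c • (x0 - xh) + A • (x0 - y0)))
      (c • (x0 - xh) - A • ((x - x0) - (y - y0)))
    have h3 := eunorm_sub_le (c • (x0 - xh)) (A • ((x - x0) - (y - y0)))
    rw [eunorm_smul, eunorm_smul, abs_of_pos hcp, abs_of_pos hAp] at h3
    have h4 := eunorm_sub_le (x - x0) (y - y0)
    have h5 : c * eunorm (x0 - xh) ≤ c * μ := by gcongr
    have h6 : A * eunorm ((x - x0) - (y - y0)) ≤ A * (2 * k) := by gcongr; linarith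
    linarith
  · have h1 : q2 - (A • (x - y) + Q2) = (q2 - (Q2 - c • (y0 - xh) + A • (x0 - y0)))
      - (c • (y0 - xh) + A • ((x - x0) - (y - y0))) := by
      simp only [smul_sub]; abel
    rw [h1]
    have h2 := eunorm_sub_le (q2 - (Q2 - c • (y0 - xh) + A • (x0 - y0)))
      (c • (y0 - xh) + A • ((x - x0) - (y - y0)))
    have h3 := eunorm_add_le (c • (y0 - xh)) (A • ((x - x0) - (y - y0)))
    rw [eunorm_smul, eunorm_smul, abs_of_pos hcp, abs_of_pos hAp] at h3
    have h4 := eunorm_sub_le (x - x0) (y - y0)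
    have h5 : c * eunorm (y0 - xh) ≤ c * (2 * μ) := by gcongr
    have h6 : A * eunorm ((x - x0) - (y - y0)) ≤ A * (2 * k) := by gcongr; linarith
    linarith
  · have g1 := (abs_le.1 f5).1
    have g2 := (abs_le.1 f6).2
    have g3 : ct * (-μ) ≤ ct * (t0 - th) := by gcongr; linarith
    have g4 : ct * (-(2 * μ)) ≤ ct * (s0 - th) := by gcongr; linarith
    linarith
  · intro ξ ζ
    have h := hXY ξ ζ
    have : (c + k) * (eunorm ξ ^ 2 + eunorm ζ ^ 2) ≤ (c0 + κ) * (eunorm ξ ^ 2 + eunorm ζ ^ 2) := by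
      gcongr ?_ * _
      rw [hc]; linarith
    linarith

theorem taylor_C2 {E : Type*} [NormedAddCommGroup E] [NormedSpace ℝ E] [FiniteDimensional ℝ E]
    (f : E → ℝ) (hf : ContDiff ℝ 2 f) (K : Set E) (hK : Bornology.IsBounded K) :
    ∃ C, 0 ≤ C ∧ ∀ x ∈ K, ∀ y ∈ K, |f y - f x - fderiv ℝ f x (y - x)| ≤ C * ‖y - x‖ ^ 2 := by
  obtain ⟨R, hR⟩ := hK.subset_closedBall 0
  have hc : Convex ℝ (Metric.closedBall (0:E) R) := convex_closedBall _ _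
  have h1 : ContDiff ℝ 1 (fderiv ℝ f) := hf.fderiv_right (by norm_num)
  have hcomp : IsCompact (Metric.closedBall (0:E) R) := isCompact_closedBall _ _
  obtain ⟨C, hC⟩ := hcomp.exists_bound_of_continuousOn
    (h1.continuous_fderiv (by norm_num)).continuousOn
  refine ⟨max C 0, le_max_right _ _, fun x hx y hy => ?_⟩
  have hx' := hR hx
  have hy' := hR hy
  have hseg : segment ℝ x y ⊆ Metric.closedBall (0:E) R := hc.segment_subset hx' hy'
  have hlip : ∀ z ∈ segment ℝ x y, ‖fderiv ℝ f z - fderiv ℝ f x‖ ≤ max C 0 * ‖y - x‖ := by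
    intro z hz
    have := hc.norm_image_sub_le_of_norm_fderiv_le (f := fderiv ℝ f) (C := max C 0) (𝕜 := ℝ)
      (fun w _ => (h1.differentiable (by norm_num)) w)
      (fun w hw => (hC w hw).trans (le_max_left _ _)) hx' (hseg hz)
    refine this.trans ?_
    gcongr
    obtain ⟨a, b, ha, hb, hab, rfl⟩ := hz
    have : a • x + b • y - x = b • (y - x) := by
      rw [show a = 1 - b by linarith]; module
    rw [this, norm_smul, Real.norm_of_nonneg hb]
    nlinarith [norm_nonneg (y - x)]
  have := (convex_segment x y).norm_image_sub_le_of_norm_fderiv_le' (f := f) (𝕜 := ℝ)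
    (φ := fderiv ℝ f x) (fun w _ => (hf.differentiable (by norm_num)) w) hlip
    (left_mem_segment ℝ x y) (right_mem_segment ℝ x y)
  rw [Real.norm_eq_abs] at this
  linarith

theorem fderiv_eq_dotp {d : ℕ} (ℓ : (Fin d → ℝ) → ℝ) (x w : Fin d → ℝ) :
    fderiv ℝ ℓ x w = dotp (gradVec ℓ x) w := by
  have : w = ∑ i, w i • (Pi.single i (1:ℝ) : Fin d → ℝ) := by
    ext j
    simp [Finset.sum_apply, Pi.single_apply]
  conv_lhs => rw [this]
  rw [map_sum]
  unfold dotp gradVec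
  exact Finset.sum_congr rfl fun i _ => by rw [map_smul, smul_eq_mul, mul_comm]

theorem ell_taylor {d : ℕ} (ℓ : (Fin d → ℝ) → ℝ) (hf : ContDiff ℝ 3 ℓ) (K : Set (Fin d → ℝ))
    (hK : Bornology.IsBounded K) :
    ∃ C, 0 ≤ C ∧ ∀ x ∈ K, ∀ y ∈ K,
      |ℓ y - ℓ x - dotp (gradVec ℓ x) (y - x)| ≤ C * eunorm (y - x) ^ 2 := by
  obtain ⟨C, hC, h⟩ := taylor_C2 ℓ (hf.of_le (by norm_num)) K hK
  refine ⟨C, hC, fun x hx y hy => ?_⟩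
  rw [← fderiv_eq_dotp]
  refine (h x hx y hy).trans ?_
  gcongr
  exact norm_le_eunorm _

theorem gradVec_cont {d : ℕ} (ℓ : (Fin d → ℝ) → ℝ) (hf : ContDiff ℝ 3 ℓ) :
    Continuous (gradVec ℓ) := by
  unfold gradVec
  have := hf.continuous_fderiv (by norm_num)
  exact continuous_pi fun i => this.clm_apply continuous_const

theorem closure_compact {d : ℕ} (ℓ : (Fin d → ℝ) → ℝ) (hf : ContDiff ℝ 3 ℓ)
    (hn : ∀ x, ℓ x = 0 → eunorm (gradVec ℓ x) = 1)
    (hD : Bornology.IsBounded {x : Fin d → ℝ | ℓ x < 0}) : IsCompact {x : Fin d → ℝ | ℓ x ≤ 0} := by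
  have hcl : IsClosed {x : Fin d → ℝ | ℓ x ≤ 0} := isClosed_le hf.continuous continuous_const
  have hsub : {x : Fin d → ℝ | ℓ x ≤ 0} ⊆ closure {x : Fin d → ℝ | ℓ x < 0} := by
    intro x hx
    rcases lt_or_eq_of_le (show ℓ x ≤ 0 from hx) with h | h
    · exact subset_closure h
    · obtain ⟨n, hnn⟩ : ∃ n, n = gradVec ℓ x := ⟨_, rfl⟩
      have h1 : HasDerivAt (fun τ : ℝ => x - τ • n) (-n) 0 := by
        simpa using ((hasDerivAt_id (0:ℝ)).smul_const n).const_sub x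
      have h2 : HasDerivAt (fun τ : ℝ => ℓ (x - τ • n)) (fderiv ℝ ℓ x (-n)) 0 := by
        have h3 : HasFDerivAt ℓ (fderiv ℝ ℓ x) (x - (0:ℝ) • n) := by
          simpa using ((hf.differentiable (by norm_num)) x).hasFDerivAt
        exact HasFDerivAt.comp_hasDerivAt (l := ℓ) (f := fun τ : ℝ => x - τ • n) 0 h3 h1
      have h3 : fderiv ℝ ℓ x (-n) = -1 := by
        rw [fderiv_eq_dotp, dotp_neg_right, hnn, ← eunorm_sq, hn x h]; norm_num
      rw [h3, hasDerivAt_iff_tendsto_slope] at h2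
      have h4 : ∀ᶠ τ in 𝓝[>] (0:ℝ), ℓ (x - τ • n) < 0 := by
        have h5 := h2.mono_left (nhdsWithin_mono 0 (show Set.Ioi (0:ℝ) ⊆ {0}ᶜ from
          fun y hy => ne_of_gt hy))
        filter_upwards [h5.eventually (gt_mem_nhds (show (-1:ℝ) < 0 by norm_num)),
          self_mem_nhdsWithin] with τ h6 h7
        rw [slope_def_field] at h6
        simp only [zero_smul, sub_zero, h] at h6
        have h7' : (0:ℝ) < τ := h7
        by_contra hc
        push Not at hc
        exact absurd h6 (not_lt.2 (div_nonneg hc h7'.le))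
      have h5 : Tendsto (fun τ : ℝ => x - τ • n) (𝓝[>] 0) (𝓝 x) := by
        have : Continuous (fun τ : ℝ => x - τ • n) := by fun_prop
        have := this.tendsto 0
        simp only [zero_smul, sub_zero] at this
        exact this.mono_left nhdsWithin_le_nhds
      exact mem_closure_of_tendsto h5 h4
  exact Metric.isCompact_of_isClosed_isBounded hcl (hD.closure.subset hsub)

theorem phi_real_convex (φ : ℝ → EReal) (hφ : ProperConvexLsc φ) (x y z : ℝ) (hx : φ x ≠ ⊤)
    (hy : φ y ≠ ⊤) (h1 : x < z) (h2 : z < y) :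
    φ z ≠ ⊤ ∧ (φ z).toReal * (y - x) ≤ (φ x).toReal * (y - z) + (φ y).toReal * (z - x) := by
  obtain ⟨_, hb, _, hc⟩ := hφ
  have hxy : 0 < y - x := by linarith
  have h := hc x y ((y - z) / (y - x)) ((z - x) / (y - x)) (by
    apply div_nonneg <;> linarith) (by apply div_nonneg <;> linarith) (by field_simp; ring)
  have e : (y - z) / (y - x) * x + (z - x) / (y - x) * y = z := by field_simp; ring
  rw [e, ← EReal.coe_toReal hx (hb x), ← EReal.coe_toReal hy (hb y)] at h
  have hz : φ z ≠ ⊤ := by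
    intro ht
    rw [ht] at h
    norm_cast at h
  refine ⟨hz, ?_⟩
  rw [← EReal.coe_toReal hz (hb z)] at h
  norm_cast at h
  have h' := mul_le_mul_of_nonneg_right h hxy.le
  have e2 : ((y - z) / (y - x) * (φ x).toReal + (z - x) / (y - x) * (φ y).toReal) * (y - x)
    = (φ x).toReal * (y - z) + (φ y).toReal * (z - x) := by field_simp
  linarith

theorem leftD_ge (φ : ℝ → EReal) (hb : ∀ r, φ r ≠ ⊥) (r a c : ℝ) (har : a < r) (hr : φ r ≠ ⊤)
    (ha : φ a ≠ ⊤) (hc : c * (r - a) ≤ (φ r).toReal - (φ a).toReal) : (c : EReal) ≤ leftD φ r := by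
  unfold leftD
  refine le_iSup_of_le (⟨r - a, by simpa using har⟩ : Set.Ioi (0:ℝ)) ?_
  simp only [sub_sub_cancel]
  rw [← EReal.coe_toReal hr (hb r), ← EReal.coe_toReal ha (hb a)]
  rw [← EReal.coe_div, ← EReal.coe_sub, ← EReal.coe_mul, EReal.coe_le_coe_iff]
  rw [one_div, ← div_eq_inv_mul, le_div_iff₀ (by linarith)]
  exact hc

theorem rightD_le (φ : ℝ → EReal) (hb : ∀ r, φ r ≠ ⊥) (r b c : ℝ) (hrb : r < b) (hr : φ r ≠ ⊤)
    (hb' : φ b ≠ ⊤) (hc : (φ b).toReal - (φ r).toReal ≤ c * (b - r)) : rightD φ r ≤ (c : EReal) := by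
  unfold rightD
  refine iInf_le_of_le (⟨b - r, by simpa using hrb⟩ : Set.Ioi (0:ℝ)) ?_
  simp only [add_sub_cancel]
  rw [← EReal.coe_toReal hr (hb r), ← EReal.coe_toReal hb' (hb b)]
  rw [← EReal.coe_div, ← EReal.coe_sub, ← EReal.coe_mul, EReal.coe_le_coe_iff]
  rw [one_div, ← div_eq_inv_mul, div_le_iff₀ (by linarith)]
  exact hc

theorem slope_lemma (φ : ℝ → EReal) (hφ : ProperConvexLsc φ) (p q : ℝ) (hp : φ p ≠ ⊤) (hq : φ q ≠ ⊤)
    (hpq : p < q) : ∃ a b c : ℝ, p < a ∧ a < b ∧ b < q ∧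
      (∀ r, b ≤ r → φ r ≠ ⊤ → (c : EReal) ≤ leftD φ r) ∧
      (∀ r, r ≤ a → φ r ≠ ⊤ → rightD φ r ≤ (c : EReal)) := by
  obtain ⟨a, ha⟩ : ∃ a, a = (2 * p + q) / 3 := ⟨_, rfl⟩
  obtain ⟨b, hb⟩ : ∃ b, b = (p + 2 * q) / 3 := ⟨_, rfl⟩
  have h1 : p < a := by rw [ha]; linarith
  have h2 : a < b := by rw [ha, hb]; linarith
  have h3 : b < q := by rw [hb]; linarith
  have fa := (phi_real_convex φ hφ p q a hp hq h1 (by linarith)).1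
  have fb := (phi_real_convex φ hφ p q b hp hq (by linarith) h3).1
  have hab : 0 < b - a := by linarith
  refine ⟨a, b, ((φ b).toReal - (φ a).toReal) / (b - a), h1, h2, h3, ?_, ?_⟩
  · intro r hr hfr
    refine leftD_ge φ hφ.2.1 r a _ (by linarith) hfr fa ?_
    rw [div_mul_eq_mul_div, div_le_iff₀ hab]
    rcases eq_or_lt_of_le hr with h | h
    · rw [h]
    · have := (phi_real_convex φ hφ a r b fa hfr h2 h).2
      linarith
  · intro r hr hfr
    refine rightD_le φ hφ.2.1 r b _ (by linarith) hfr fb ?_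
    rw [div_mul_eq_mul_div, le_div_iff₀ hab]
    rcases eq_or_lt_of_le hr with h | h
    · rw [h]
    · have := (phi_real_convex φ hφ r b a hfr fb h h2).2
      linarith

theorem ereal_real_add_le (a c : ℝ) (x : EReal) (hx : (c : EReal) ≤ x) (h : (a : EReal) + x ≤ 0) :
    a + c ≤ 0 := by
  have : (a : EReal) + (c : EReal) ≤ 0 := (add_le_add_right hx _).trans h
  exact_mod_cast this

theorem ereal_real_add_ge (a c : ℝ) (x : EReal) (hx : x ≤ (c : EReal)) (h : 0 ≤ (a : EReal) + x) :
    0 ≤ a + c := by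
  have : 0 ≤ (a : EReal) + (c : EReal) := h.trans (add_le_add_right hx _)
  exact_mod_cast this

theorem matNorm_eq {d : ℕ} (M : Matrix (Fin d) (Fin d) ℝ) :
    matNorm M = ‖(WithLp.toLp 2 (fun p : Fin d × Fin d => M p.1 p.2) : EuclideanSpace ℝ (Fin d × Fin d))‖ := by
  rw [EuclideanSpace.norm_eq]; unfold matNorm
  rw [Fintype.sum_prod_type]; simp

theorem matNorm_nonneg {d : ℕ} (M : Matrix (Fin d) (Fin d) ℝ) : 0 ≤ matNorm M := Real.sqrt_nonneg _

theorem matNorm_add_le {d : ℕ} (M N : Matrix (Fin d) (Fin d) ℝ) :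
    matNorm (M + N) ≤ matNorm M + matNorm N := by
  rw [matNorm_eq, matNorm_eq, matNorm_eq]
  exact norm_add_le (WithLp.toLp 2 (fun p : Fin d × Fin d => M p.1 p.2) : EuclideanSpace ℝ (Fin d × Fin d))
    (WithLp.toLp 2 (fun p : Fin d × Fin d => N p.1 p.2))

theorem matNorm_sq {d : ℕ} (M : Matrix (Fin d) (Fin d) ℝ) :
    matNorm M ^ 2 = ∑ j, eunorm (fun i => M i j) ^ 2 := by
  unfold matNorm eunorm
  rw [Real.sq_sqrt (by positivity), Finset.sum_comm]
  exact Finset.sum_congr rfl fun j _ => by rw [Real.sq_sqrt (by positivity)]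

theorem continuous_matNorm {d : ℕ} : Continuous (matNorm : Matrix (Fin d) (Fin d) ℝ → ℝ) := by
  unfold matNorm
  have : ∀ i j, Continuous fun M : Matrix (Fin d) (Fin d) ℝ => M i j := fun i j =>
    continuous_id.matrix_elem i j
  fun_prop

theorem vecMul_bound {d : ℕ} (q : Fin d → ℝ) (M : Matrix (Fin d) (Fin d) ℝ) :
    eunorm (Matrix.vecMul q M) ≤ eunorm q * matNorm M := by
  have h0 := eunorm_nonneg q
  have h1 := matNorm_nonneg M
  apply le_of_sq_le_sq _ (by positivity)
  rw [mul_pow, matNorm_sq, Finset.mul_sum]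
  have : eunorm (Matrix.vecMul q M) ^ 2 = ∑ j, (dotp q fun i => M i j) ^ 2 := by
    unfold eunorm
    rw [Real.sq_sqrt (by positivity)]
    rfl
  rw [this]
  refine Finset.sum_le_sum fun j _ => ?_
  rw [← mul_pow, ← sq_abs]
  have := abs_dotp_le q fun i => M i j
  gcongr

theorem trace_eq {d : ℕ} (S X : Matrix (Fin d) (Fin d) ℝ) :
    Matrix.trace (S * Sᵀ * X) = ∑ j, dotp (X.mulVec fun i => S i j) (fun i => S i j) := by
  rw [Matrix.mul_assoc, Matrix.trace_mul_comm, Matrix.mul_assoc, Matrix.trace]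
  refine Finset.sum_congr rfl fun j _ => ?_
  rw [Matrix.diag_apply, Matrix.mul_apply, dotp]
  refine Finset.sum_congr rfl fun i _ => ?_
  rw [Matrix.transpose_apply, mul_comm]
  rfl

theorem trace_est {d : ℕ} (S R X Y : Matrix (Fin d) (Fin d) ℝ) (A c : ℝ)
    (h : ∀ ξ ζ, dotp (X.mulVec ξ) ξ - dotp (Y.mulVec ζ) ζ ≤
        A * eunorm (ξ - ζ) ^ 2 + c * (eunorm ξ ^ 2 + eunorm ζ ^ 2)) :
    Matrix.trace (S * Sᵀ * X) - Matrix.trace (R * Rᵀ * Y) ≤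
      A * matNorm (S - R) ^ 2 + c * (matNorm S ^ 2 + matNorm R ^ 2) := by
  rw [trace_eq, trace_eq, matNorm_sq, matNorm_sq, matNorm_sq, ← Finset.sum_sub_distrib,
    ← Finset.sum_add_distrib, Finset.mul_sum, Finset.mul_sum, ← Finset.sum_add_distrib]
  exact Finset.sum_le_sum fun j _ => h _ _

theorem interior_est {d : ℕ} (S R X Y : Matrix (Fin d) (Fin d) ℝ) (b1 b2 q1 q2 Q1 Q2 w : Fin d → ℝ)
    (A κ c0 L Ss Sb Qm : ℝ) (hκ : 0 < κ) (hκ1 : κ ≤ 1) (hA : 1 ≤ A) (hAκ : 1 / A ≤ κ)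
    (hL : 0 ≤ L) (hQm : 0 ≤ Qm) (hc0 : 0 ≤ c0)
    (hw : eunorm w ≤ 2 * κ) (hAw : A * eunorm w ^ 2 ≤ κ)
    (hS : matNorm S ≤ Ss) (hR : matNorm R ≤ Ss) (hb2 : eunorm b2 ≤ Sb)
    (hSR : matNorm (S - R) ≤ L * eunorm w + 1 / A) (hbb : eunorm (b1 - b2) ≤ L * eunorm w + 1 / A)
    (hq1 : eunorm (q1 - (A • w + Q1)) ≤ κ) (hq2 : eunorm (q2 - (A • w + Q2)) ≤ κ)
    (hQ1 : eunorm Q1 ≤ Qm) (hQ2 : eunorm Q2 ≤ Qm)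
    (h : ∀ ξ ζ, dotp (X.mulVec ξ) ξ - dotp (Y.mulVec ζ) ζ ≤
        A * eunorm (ξ - ζ) ^ 2 + (c0 + κ) * (eunorm ξ ^ 2 + eunorm ζ ^ 2)) :
    1 / 2 * Matrix.trace (S * Sᵀ * X) - 1 / 2 * Matrix.trace (R * Rᵀ * Y) ≤
        c0 * Ss ^ 2 + (L ^ 2 + 1 + Ss ^ 2) * κ ∧
    dotp b1 q1 - dotp b2 q2 ≤ Sb * eunorm (Q1 - Q2) +
      (2 * Sb + (L + 2 * L * (Qm + 1) + 2 + (Qm + 1))) * κ ∧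
    eunorm (Matrix.vecMul q1 S - Matrix.vecMul q2 R) ≤ Ss * eunorm (Q1 - Q2) +
      (2 * Ss + (L + 2 * L * (Qm + 1) + 2 + (Qm + 1))) * κ ∧
    eunorm w * (1 + eunorm (Matrix.vecMul q2 R)) ≤ (2 + Ss * (1 + 2 * (Qm + 1))) * κ ∧
    eunorm (Matrix.vecMul q2 R) ≤ (A * eunorm w + Qm + 1) * Ss := by
  have hA0 : 0 < A := by linarith
  have w0 := eunorm_nonneg w
  have hAi : 0 < 1 / A := by positivity
  have hSs : 0 ≤ Ss := (matNorm_nonneg S).trans hS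
  have hSb : 0 ≤ Sb := (eunorm_nonneg b2).trans hb2
  have Q0 := eunorm_nonneg (Q1 - Q2)
  have hq : ∀ q Q : Fin d → ℝ, eunorm (q - (A • w + Q)) ≤ κ → eunorm Q ≤ Qm →
      eunorm q ≤ A * eunorm w + Qm + 1 := by
    intro q Q h1 h2
    have h3 := eunorm_add_le (q - (A • w + Q)) (A • w + Q)
    have h4 := eunorm_add_le (A • w) Q
    rw [eunorm_smul, abs_of_pos hA0] at h4
    rw [sub_add_cancel] at h3
    linarith
  have n1 := hq q1 Q1 hq1 hQ1
  have n2 := hq q2 Q2 hq2 hQ2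
  have hqq : eunorm (q1 - q2) ≤ eunorm (Q1 - Q2) + 2 * κ := by
    have h1 : q1 - q2 = (Q1 - Q2) + ((q1 - (A • w + Q1)) - (q2 - (A • w + Q2))) := by abel
    have h2 := eunorm_add_le (Q1 - Q2) ((q1 - (A • w + Q1)) - (q2 - (A • w + Q2)))
    have h3 := eunorm_sub_le (q1 - (A • w + Q1)) (q2 - (A • w + Q2))
    rw [h1]; linarith
  have hA1 : 1 / A * A = 1 := by field_simp
  have hBq : (L * eunorm w + 1 / A) * (A * eunorm w + Qm + 1) ≤
      (L + 2 * L * (Qm + 1) + 2 + (Qm + 1)) * κ := by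
    have e : (L * eunorm w + 1 / A) * (A * eunorm w + Qm + 1) =
      L * (A * eunorm w ^ 2) + L * (Qm + 1) * eunorm w + (1 / A * A) * eunorm w + (Qm + 1) * (1 / A) := by
      ring
    rw [e, hA1]
    have g1 : L * (A * eunorm w ^ 2) ≤ L * κ := by gcongr
    have g2 : L * (Qm + 1) * eunorm w ≤ L * (Qm + 1) * (2 * κ) := by gcongr
    have g3 : (Qm + 1) * (1 / A) ≤ (Qm + 1) * κ := by gcongr
    linarith
  refine ⟨?_, ?_, ?_, ?_, ?_⟩
  · have h1 := trace_est S R X Y A _ h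
    have h2 : A * matNorm (S - R) ^ 2 ≤ 2 * (L ^ 2 + 1) * κ := by
      have g1 : matNorm (S - R) ^ 2 ≤ (L * eunorm w + 1 / A) ^ 2 := by
        have := matNorm_nonneg (S - R)
        gcongr
      have g2 : (L * eunorm w + 1 / A) ^ 2 ≤ 2 * (L * eunorm w) ^ 2 + 2 * (1 / A) ^ 2 := by
        nlinarith [sq_nonneg (L * eunorm w - 1 / A)]
      have g3 : A * matNorm (S - R) ^ 2 ≤ A * (2 * (L * eunorm w) ^ 2 + 2 * (1 / A) ^ 2) := by
        gcongr; linarith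
      have g4 : A * (2 * (L * eunorm w) ^ 2 + 2 * (1 / A) ^ 2) =
        2 * L ^ 2 * (A * eunorm w ^ 2) + 2 * (1 / A * A) * (1 / A) := by ring
      rw [g4, hA1] at g3
      have g5 : 2 * L ^ 2 * (A * eunorm w ^ 2) ≤ 2 * L ^ 2 * κ := by gcongr
      linarith
    have h3 : (c0 + κ) * (matNorm S ^ 2 + matNorm R ^ 2) ≤ (c0 + κ) * (Ss ^ 2 + Ss ^ 2) := by
      have := matNorm_nonneg S
      have := matNorm_nonneg R
      gcongr
    linarith
  · have e : dotp b1 q1 - dotp b2 q2 = dotp (b1 - b2) q1 + dotp b2 (q1 - q2) := by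
      rw [dotp_sub_left, dotp_sub_right]; ring
    rw [e]
    have h1 := (abs_le.1 (abs_dotp_le (b1 - b2) q1)).2
    have h2 := (abs_le.1 (abs_dotp_le b2 (q1 - q2))).2
    have h3 : eunorm (b1 - b2) * eunorm q1 ≤ (L * eunorm w + 1 / A) * (A * eunorm w + Qm + 1) := by
      have := eunorm_nonneg q1
      gcongr
    have h4 : eunorm b2 * eunorm (q1 - q2) ≤ Sb * (eunorm (Q1 - Q2) + 2 * κ) := by
      have := eunorm_nonneg (q1 - q2)
      gcongr
    linarith
  · have e : Matrix.vecMul q1 S - Matrix.vecMul q2 R = Matrix.vecMul (q1 - q2) S + Matrix.vecMul q2 (S - R) := by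
      rw [Matrix.sub_vecMul, Matrix.vecMul_sub]; abel
    rw [e]
    have h1 := eunorm_add_le (Matrix.vecMul (q1 - q2) S) (Matrix.vecMul q2 (S - R))
    have h2 := vecMul_bound (q1 - q2) S
    have h3 := vecMul_bound q2 (S - R)
    have h4 : eunorm (q1 - q2) * matNorm S ≤ (eunorm (Q1 - Q2) + 2 * κ) * Ss := by
      have := matNorm_nonneg S
      gcongr
    have h5 : eunorm q2 * matNorm (S - R) ≤ (A * eunorm w + Qm + 1) * (L * eunorm w + 1 / A) := by
      have := matNorm_nonneg (S - R)
      gcongr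
    linarith
  · have h3 := vecMul_bound q2 R
    have h4 : eunorm q2 * matNorm R ≤ (A * eunorm w + Qm + 1) * Ss := by
      have := matNorm_nonneg R
      gcongr
    have h5 : eunorm w * (1 + eunorm (Matrix.vecMul q2 R)) ≤
      eunorm w * (1 + (A * eunorm w + Qm + 1) * Ss) := by gcongr; linarith
    have e : eunorm w * (1 + (A * eunorm w + Qm + 1) * Ss) =
      eunorm w + Ss * (A * eunorm w ^ 2 + (Qm + 1) * eunorm w) := by ring
    have h6 : Ss * (A * eunorm w ^ 2 + (Qm + 1) * eunorm w) ≤ Ss * (κ + (Qm + 1) * (2 * κ)) := by gcongr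
    linarith
  · have h3 := vecMul_bound q2 R
    have h4 : eunorm q2 * matNorm R ≤ (A * eunorm w + Qm + 1) * Ss := by
      have := matNorm_nonneg R
      gcongr
    linarith

theorem unif_diag {Z : Type*} [PseudoMetricSpace Z] (T1 : ℝ) (C : Set Z) (hC : IsCompact C)
    (G : ℝ × ℝ × Z → ℝ) (hG : ContinuousOn G (Set.Icc 0 T1 ×ˢ Set.Icc 0 T1 ×ˢ C))
    (h0 : ∀ t z, G (t, t, z) = 0) (ε : ℝ) (hε : 0 < ε) :
    ∃ δ, 0 < δ ∧ ∀ t ∈ Set.Icc 0 T1, ∀ s ∈ Set.Icc 0 T1, |t - s| ≤ δ → ∀ z ∈ C, G (t, s, z) ≤ ε := by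
  have hcomp : IsCompact (Set.Icc 0 T1 ×ˢ Set.Icc 0 T1 ×ˢ C) :=
    isCompact_Icc.prod (isCompact_Icc.prod hC)
  have hu := hcomp.uniformContinuousOn_of_continuous hG
  rw [Metric.uniformContinuousOn_iff] at hu
  obtain ⟨δ, hδ, h⟩ := hu ε hε
  refine ⟨δ / 2, half_pos hδ, fun t ht s hs hts z hz => ?_⟩
  have h1 := h (t, s, z) ⟨ht, hs, hz⟩ (s, s, z) ⟨hs, hs, hz⟩ (by
    simp only [Prod.dist_eq, dist_self, Real.dist_eq]
    exact max_lt (by linarith) (by simpa using hδ))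
  rw [h0, Real.dist_eq] at h1
  have := le_abs_self (G (t, s, z) - 0)
  linarith

theorem eta_exists {d : ℕ} (K : Set (Fin d → ℝ)) (hK : IsCompact K) (T1 : ℝ)
    (b : ℝ → (Fin d → ℝ) → (Fin d → ℝ))
    (σ : ℝ → (Fin d → ℝ) → Matrix (Fin d) (Fin d) ℝ)
    (f : ℝ → (Fin d → ℝ) → ℝ → (Fin d → ℝ) → ℝ)
    (hb : ContinuousOn (fun p : ℝ × (Fin d → ℝ) => b p.1 p.2) (Set.Ici 0 ×ˢ Set.univ))
    (hσ : ContinuousOn (fun p : ℝ × (Fin d → ℝ) => σ p.1 p.2) (Set.Ici 0 ×ˢ Set.univ))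
    (hf : ContinuousOn
      (fun p : ℝ × (Fin d → ℝ) × ℝ × (Fin d → ℝ) => f p.1 p.2.1 p.2.2.1 p.2.2.2)
      (Set.Ici 0 ×ˢ K ×ˢ Set.univ ×ˢ Set.univ)) (R : ℝ) (Rz : ℝ → ℝ) :
    ∃ η : ℝ → ℝ, (∀ A, 0 < η A) ∧ ∀ A, 1 ≤ A → ∀ t ∈ Set.Icc 0 T1, ∀ s ∈ Set.Icc 0 T1,
      |t - s| ≤ η A → ∀ y ∈ K, matNorm (σ t y - σ s y) ≤ 1 / A ∧ eunorm (b t y - b s y) ≤ 1 / A ∧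
        ∀ r, |r| ≤ R → ∀ z, eunorm z ≤ Rz A → |f t y r z - f s y r z| ≤ 1 / A := by
  have key : ∀ A, ∃ δ, 0 < δ ∧ (1 ≤ A → ∀ t ∈ Set.Icc 0 T1, ∀ s ∈ Set.Icc 0 T1,
      |t - s| ≤ δ → ∀ y ∈ K, matNorm (σ t y - σ s y) ≤ 1 / A ∧ eunorm (b t y - b s y) ≤ 1 / A ∧
        ∀ r, |r| ≤ R → ∀ z, eunorm z ≤ Rz A → |f t y r z - f s y r z| ≤ 1 / A) := by
    intro A
    by_cases hA : 1 ≤ A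
    swap
    · exact ⟨1, one_pos, fun h => absurd h hA⟩
    have hA' : 0 < 1 / A := by positivity
    have hσ1 : ContinuousOn (fun p : ℝ × ℝ × (Fin d → ℝ) => σ p.1 p.2.2)
        (Set.Icc 0 T1 ×ˢ Set.Icc 0 T1 ×ˢ K) :=
      hσ.comp (f := fun p : ℝ × ℝ × (Fin d → ℝ) => (p.1, p.2.2)) (by fun_prop)
        (fun p hp => ⟨hp.1.1, trivial⟩)
    have hσ2 : ContinuousOn (fun p : ℝ × ℝ × (Fin d → ℝ) => σ p.2.1 p.2.2)
        (Set.Icc 0 T1 ×ˢ Set.Icc 0 T1 ×ˢ K) :=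
      hσ.comp (f := fun p : ℝ × ℝ × (Fin d → ℝ) => (p.2.1, p.2.2)) (by fun_prop)
        (fun p hp => ⟨hp.2.1.1, trivial⟩)
    have hb1 : ContinuousOn (fun p : ℝ × ℝ × (Fin d → ℝ) => b p.1 p.2.2)
        (Set.Icc 0 T1 ×ˢ Set.Icc 0 T1 ×ˢ K) :=
      hb.comp (f := fun p : ℝ × ℝ × (Fin d → ℝ) => (p.1, p.2.2)) (by fun_prop)
        (fun p hp => ⟨hp.1.1, trivial⟩)
    have hb2 : ContinuousOn (fun p : ℝ × ℝ × (Fin d → ℝ) => b p.2.1 p.2.2)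
        (Set.Icc 0 T1 ×ˢ Set.Icc 0 T1 ×ˢ K) :=
      hb.comp (f := fun p : ℝ × ℝ × (Fin d → ℝ) => (p.2.1, p.2.2)) (by fun_prop)
        (fun p hp => ⟨hp.2.1.1, trivial⟩)
    have hCz : IsCompact (K ×ˢ Set.Icc (-R) R ×ˢ Metric.closedBall (0 : Fin d → ℝ) (Rz A)) :=
      hK.prod (isCompact_Icc.prod (isCompact_closedBall _ _))
    have hf1 : ContinuousOn (fun p : ℝ × ℝ × ((Fin d → ℝ) × ℝ × (Fin d → ℝ)) =>
        f p.1 p.2.2.1 p.2.2.2.1 p.2.2.2.2)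
        (Set.Icc 0 T1 ×ˢ Set.Icc 0 T1 ×ˢ (K ×ˢ Set.Icc (-R) R ×ˢ Metric.closedBall (0 : Fin d → ℝ) (Rz A))) :=
      hf.comp (f := fun p : ℝ × ℝ × ((Fin d → ℝ) × ℝ × (Fin d → ℝ)) => (p.1, p.2.2)) (by fun_prop)
        (fun p hp => ⟨hp.1.1, hp.2.2.1, trivial, trivial⟩)
    have hf2 : ContinuousOn (fun p : ℝ × ℝ × ((Fin d → ℝ) × ℝ × (Fin d → ℝ)) =>
        f p.2.1 p.2.2.1 p.2.2.2.1 p.2.2.2.2)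
        (Set.Icc 0 T1 ×ˢ Set.Icc 0 T1 ×ˢ (K ×ˢ Set.Icc (-R) R ×ˢ Metric.closedBall (0 : Fin d → ℝ) (Rz A))) :=
      hf.comp (f := fun p : ℝ × ℝ × ((Fin d → ℝ) × ℝ × (Fin d → ℝ)) => (p.2.1, p.2.2)) (by fun_prop)
        (fun p hp => ⟨hp.2.1.1, hp.2.2.1, trivial, trivial⟩)
    obtain ⟨δ1, hδ1, h1⟩ := unif_diag T1 K hK (fun p => matNorm (σ p.1 p.2.2 - σ p.2.1 p.2.2))
      (continuous_matNorm.comp_continuousOn (hσ1.sub hσ2)) (by intro t z; simp [matNorm]) _ hA'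
    obtain ⟨δ2, hδ2, h2⟩ := unif_diag T1 K hK (fun p => eunorm (b p.1 p.2.2 - b p.2.1 p.2.2))
      (continuous_eunorm.comp_continuousOn (hb1.sub hb2)) (by intro t z; simp [eunorm]) _ hA'
    obtain ⟨δ3, hδ3, h3⟩ := unif_diag T1 _ hCz
      (fun p => |f p.1 p.2.2.1 p.2.2.2.1 p.2.2.2.2 - f p.2.1 p.2.2.1 p.2.2.2.1 p.2.2.2.2|)
      ((hf1.sub hf2).abs) (by intro t z; simp) _ hA'
    refine ⟨min δ1 (min δ2 δ3), lt_min hδ1 (lt_min hδ2 hδ3), fun _ t ht s hs hts y hy => ?_⟩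
    refine ⟨h1 t ht s hs (hts.trans (min_le_left _ _)) y hy,
      h2 t ht s hs (hts.trans ((min_le_right _ _).trans (min_le_left _ _))) y hy, fun r hr z hz => ?_⟩
    refine h3 t ht s hs (hts.trans ((min_le_right _ _).trans (min_le_right _ _))) (y, r, z)
      ⟨hy, abs_le.1 hr, ?_⟩
    rw [mem_closedBall_zero_iff]
    exact (norm_le_eunorm z).trans hz
  choose η h1 h2 using key
  exact ⟨η, h1, h2⟩

theorem coef_bounds {d : ℕ} (K : Set (Fin d → ℝ)) (hK : IsCompact K) (T1 : ℝ)
    (b : ℝ → (Fin d → ℝ) → (Fin d → ℝ))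
    (σ : ℝ → (Fin d → ℝ) → Matrix (Fin d) (Fin d) ℝ)
    (hb : ContinuousOn (fun p : ℝ × (Fin d → ℝ) => b p.1 p.2) (Set.Ici 0 ×ˢ Set.univ))
    (hσ : ContinuousOn (fun p : ℝ × (Fin d → ℝ) => σ p.1 p.2) (Set.Ici 0 ×ˢ Set.univ)) :
    ∃ Ss Sb : ℝ, 0 ≤ Ss ∧ 0 ≤ Sb ∧ ∀ t ∈ Set.Icc 0 T1, ∀ y ∈ K,
      matNorm (σ t y) ≤ Ss ∧ eunorm (b t y) ≤ Sb := by
  have hc : IsCompact (Set.Icc 0 T1 ×ˢ K) := isCompact_Icc.prod hK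
  have hsub : (Set.Icc 0 T1 ×ˢ K) ⊆ (Set.Ici (0:ℝ) ×ˢ (Set.univ : Set (Fin d → ℝ))) :=
    fun p hp => ⟨hp.1.1, trivial⟩
  obtain ⟨S1, h1⟩ := hc.bddAbove_image (continuous_matNorm.comp_continuousOn (hσ.mono hsub))
  obtain ⟨S2, h2⟩ := hc.bddAbove_image (continuous_eunorm.comp_continuousOn (hb.mono hsub))
  refine ⟨max S1 0, max S2 0, le_max_right _ _, le_max_right _ _, fun t ht y hy => ⟨?_, ?_⟩⟩
  · exact (h1 ⟨(t, y), ⟨ht, hy⟩, rfl⟩).trans (le_max_left _ _)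
  · exact (h2 ⟨(t, y), ⟨ht, hy⟩, rfl⟩).trans (le_max_left _ _)

theorem bd_excl {d : ℕ} (ℓ : (Fin d → ℝ) → ℝ) (hℓ : ContDiff ℝ 3 ℓ)
    (hn : ∀ x, ℓ x = 0 → eunorm (gradVec ℓ x) = 1) (hK : IsCompact {x | ℓ x ≤ 0})
    (g : ℝ → (Fin d → ℝ) → ℝ → ℝ)
    (hg : ContinuousOn (fun p : ℝ × (Fin d → ℝ) × ℝ => g p.1 p.2.1 p.2.2)
      (Set.Ici 0 ×ˢ {x | ℓ x = 0} ×ˢ Set.univ))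
    (t r A κ : ℕ → ℝ) (x y q : ℕ → Fin d → ℝ) (th rh : ℝ) (xh : Fin d → ℝ)
    (ht : Tendsto t atTop (𝓝 th)) (hth : 0 < th) (hr : Tendsto r atTop (𝓝 rh))
    (hx : Tendsto x atTop (𝓝 xh)) (hκ : Tendsto κ atTop (𝓝 0)) (hxh : ℓ xh = 0)
    (hy : ∀ k, ℓ (y k) ≤ 0) (hA : ∀ k, 0 ≤ A k) (hAxy : ∀ k, A k * eunorm (x k - y k) ^ 2 ≤ κ k)
    (sg δ cψ : ℝ) (hδ : 0 < δ) (hsg : g th xh rh - cψ ≤ sg)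
    (hq : ∀ k, eunorm (q k - (A k • (x k - y k) + (sg + δ) • gradVec ℓ xh)) ≤ κ k) :
    ∀ᶠ k in atTop, ℓ (x k) = 0 →
      0 < dotp (gradVec ℓ (x k)) (q k) - g (t k) (x k) (r k) + cψ := by
  obtain ⟨C, hC, hT⟩ := ell_taylor ℓ hℓ _ hK.isBounded
  have hg1 : ∀ᶠ k in atTop, ℓ (x k) = 0 → g (t k) (x k) (r k) < g th xh rh + δ / 2 := by
    have hc := hg (th, xh, rh) ⟨hth.le, hxh, trivial⟩
    have h1 : ∀ᶠ p in 𝓝[Set.Ici 0 ×ˢ {x | ℓ x = 0} ×ˢ Set.univ] ((th, xh, rh) : ℝ × (Fin d → ℝ) × ℝ),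
        g p.1 p.2.1 p.2.2 < g th xh rh + δ / 2 :=
      hc.eventually (gt_mem_nhds (by linarith))
    rw [eventually_nhdsWithin_iff] at h1
    have h2 : Tendsto (fun k => (t k, x k, r k)) atTop (𝓝 (th, xh, rh)) :=
      ht.prodMk_nhds (hx.prodMk_nhds hr)
    filter_upwards [h2.eventually h1, ht.eventually (lt_mem_nhds hth)] with k hk hk2 hk3
    exact hk ⟨hk2.le, hk3, trivial⟩
  have hd : Tendsto (fun k => -(1 + C) * κ k + (sg + δ) * dotp (gradVec ℓ (x k)) (gradVec ℓ xh)) atTop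
      (𝓝 (-(1 + C) * 0 + (sg + δ) * dotp (gradVec ℓ xh) (gradVec ℓ xh))) := by
    refine (hκ.const_mul _).add (Tendsto.const_mul _ ?_)
    exact ((continuous_dotp (gradVec_cont ℓ hℓ) continuous_const).tendsto xh).comp hx
  have hnn : dotp (gradVec ℓ xh) (gradVec ℓ xh) = 1 := by rw [← eunorm_sq, hn xh hxh]; norm_num
  have hd1 : ∀ᶠ k in atTop, sg + δ / 2 <
      -(1 + C) * κ k + (sg + δ) * dotp (gradVec ℓ (x k)) (gradVec ℓ xh) :=
    hd.eventually (lt_mem_nhds (by rw [hnn]; linarith))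
  filter_upwards [hg1, hd1] with k hk1 hk2 hk3
  have e1 := hk1 hk3
  set N := gradVec ℓ (x k) with hN
  have hN1 : eunorm N = 1 := hn _ hk3
  set e := q k - (A k • (x k - y k) + (sg + δ) • gradVec ℓ xh) with he
  have hqe : q k = e + (A k • (x k - y k) + (sg + δ) • gradVec ℓ xh) := by rw [he]; abel
  have h3 : dotp N (q k) = dotp N e + (A k * dotp N (x k - y k) + (sg + δ) * dotp N (gradVec ℓ xh)) := by
    rw [hqe, dotp_add_right, dotp_add_right, dotp_smul_right, dotp_smul_right]
  have h4 : -κ k ≤ dotp N e := by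
    have := (abs_dotp_le N e)
    rw [hN1, one_mul] at this
    have h5 := neg_abs_le (dotp N e)
    have h6 : eunorm e ≤ κ k := hq k
    linarith
  have h5 : -(C * κ k) ≤ A k * dotp N (x k - y k) := by
    have h6 := hT (x k) (le_of_eq hk3) (y k) (hy k)
    have h7 : dotp N (x k - y k) = - dotp N (y k - x k) := by
      rw [← dotp_neg_right]; congr 1; abel
    rw [eunorm_sub_comm] at h6
    have h8 := (abs_le.1 h6).1
    have h9 := hy k
    rw [← hN] at h8
    have h8' := (abs_le.1 h6).2
    rw [← hN] at h8'
    have h10 : -(C * eunorm (x k - y k) ^ 2) ≤ dotp N (x k - y k) := by rw [h7]; linarith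
    have h11 := mul_le_mul_of_nonneg_left h10 (hA k)
    have h12 := mul_le_mul_of_nonneg_left (hAxy k) hC
    nlinarith
  rw [h3]
  nlinarith

theorem bd_excl_super {d : ℕ} (ℓ : (Fin d → ℝ) → ℝ) (hℓ : ContDiff ℝ 3 ℓ)
    (hn : ∀ x, ℓ x = 0 → eunorm (gradVec ℓ x) = 1) (hK : IsCompact {x | ℓ x ≤ 0})
    (g : ℝ → (Fin d → ℝ) → ℝ → ℝ)
    (hg : ContinuousOn (fun p : ℝ × (Fin d → ℝ) × ℝ => g p.1 p.2.1 p.2.2)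
      (Set.Ici 0 ×ˢ {x | ℓ x = 0} ×ˢ Set.univ))
    (t r A κ : ℕ → ℝ) (x y q : ℕ → Fin d → ℝ) (th rh : ℝ) (xh : Fin d → ℝ)
    (ht : Tendsto t atTop (𝓝 th)) (hth : 0 < th) (hr : Tendsto r atTop (𝓝 rh))
    (hy : Tendsto y atTop (𝓝 xh)) (hκ : Tendsto κ atTop (𝓝 0)) (hxh : ℓ xh = 0)
    (hx : ∀ k, ℓ (x k) ≤ 0) (hA : ∀ k, 0 ≤ A k) (hAxy : ∀ k, A k * eunorm (x k - y k) ^ 2 ≤ κ k)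
    (sg δ cψ : ℝ) (hδ : 0 < δ) (hsg : sg ≤ g th xh rh - cψ)
    (hq : ∀ k, eunorm (q k - (A k • (x k - y k) + (sg - δ) • gradVec ℓ xh)) ≤ κ k) :
    ∀ᶠ k in atTop, ℓ (y k) = 0 →
      dotp (gradVec ℓ (y k)) (q k) - g (t k) (y k) (r k) + cψ < 0 := by
  have := bd_excl ℓ hℓ hn hK (fun t x r => - g t x r) hg.neg t r A κ y x (fun k => - q k) th rh xh ht hth
    hr hy hκ hxh hx hA (fun k => by rw [eunorm_sub_comm]; exact hAxy k) (-sg) δ (-cψ) hδ (by linarith)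
    (fun k => by
      have := hq k
      rw [← eunorm_neg] at this
      convert this using 2
      module)
  filter_upwards [this] with k hk hk2
  have h3 := hk hk2
  rw [dotp_neg_right] at h3
  linarith

set_option maxHeartbeats 1000000 in
theorem point_est {d : ℕ} (ℓ : (Fin d → ℝ) → ℝ)
    (b : ℝ → (Fin d → ℝ) → (Fin d → ℝ))
    (σ : ℝ → (Fin d → ℝ) → Matrix (Fin d) (Fin d) ℝ)
    (f : ℝ → (Fin d → ℝ) → ℝ → (Fin d → ℝ) → ℝ)
    (T1 α L β : ℝ) (hL : 0 ≤ L) (hβ0 : 0 ≤ β)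
    (hLip : ∀ t ∈ Set.Icc (0:ℝ) T1, ∀ x x' : Fin d → ℝ,
        eunorm (b t x - b t x') + matNorm (σ t x - σ t x') ≤ L * eunorm (x - x'))
    (hα : ∀ t ∈ Set.Icc (0:ℝ) T1, ∀ x, ℓ x ≤ 0 → ∀ y y' : ℝ, ∀ z : Fin d → ℝ,
        (y - y') * (f t x y z - f t x y' z) ≤ α * (y - y')^2)
    (hβ : ∀ t ∈ Set.Icc (0:ℝ) T1, ∀ x, ℓ x ≤ 0 → ∀ y : ℝ, ∀ z z' : Fin d → ℝ,
        |f t x y z - f t x y z'| ≤ β * eunorm (z - z'))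
    (m : ℝ → ℝ)
    (hfm : ∀ t ≥ (0:ℝ), ∀ x y : Fin d → ℝ, ℓ x ≤ 0 → ℓ y ≤ 0 →
      ∀ r : ℝ, ∀ p : Fin d → ℝ,
        |f t x r p - f t y r p| ≤ m (eunorm (x - y) * (1 + eunorm p)))
    (Ss Sb : ℝ)
    (hS : ∀ t ∈ Set.Icc 0 T1, ∀ y, ℓ y ≤ 0 → matNorm (σ t y) ≤ Ss ∧ eunorm (b t y) ≤ Sb)
    (u v : ℝ → (Fin d → ℝ) → ℝ)
    (t s : ℝ) (ht : t ∈ Set.Icc 0 T1) (hs : s ∈ Set.Icc 0 T1) (x y : Fin d → ℝ) (hx : ℓ x ≤ 0)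
    (hy : ℓ y ≤ 0) (p1 p2 : ℝ) (q1 q2 Q1 Q2 : Fin d → ℝ) (X Y : Matrix (Fin d) (Fin d) ℝ)
    (A κ c0 Qm R RA cφ : ℝ) (hκ : 0 < κ) (hκ1 : κ ≤ 1) (hA : 1 ≤ A) (hAκ : 1 / A ≤ κ)
    (hQm : 0 ≤ Qm) (hc0 : 0 ≤ c0) (hw : eunorm (x - y) ≤ 2 * κ)
    (hAw : A * eunorm (x - y) ^ 2 ≤ κ)
    (hq1 : eunorm (q1 - (A • (x - y) + Q1)) ≤ κ) (hq2 : eunorm (q2 - (A • (x - y) + Q2)) ≤ κ)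
    (hQ1 : eunorm Q1 ≤ Qm) (hQ2 : eunorm Q2 ≤ Qm)
    (hXY : ∀ ξ ζ, dotp (X.mulVec ξ) ξ - dotp (Y.mulVec ζ) ζ ≤
        A * eunorm (ξ - ζ) ^ 2 + (c0 + κ) * (eunorm ξ ^ 2 + eunorm ζ ^ 2))
    (hη1 : matNorm (σ t y - σ s y) ≤ 1 / A) (hη2 : eunorm (b t y - b s y) ≤ 1 / A)
    (hη3 : ∀ r, |r| ≤ R → ∀ z, eunorm z ≤ RA → |f t y r z - f s y r z| ≤ 1 / A)
    (hR : |v s y| ≤ R) (hRA : (A * 2 + Qm + 1) * Ss ≤ RA)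
    (hlt : v s y < u t x)
    (hV1 : Vop b σ f u t x p1 q1 X + cφ ≤ 0) (hV2 : 0 ≤ Vop b σ f v s y p2 q2 Y + cφ) :
    ∃ W, 0 ≤ W ∧ W ≤ (2 + Ss * (1 + 2 * (Qm + 1))) * κ ∧
    p1 - p2 ≤ c0 * Ss ^ 2 + eunorm (Q1 - Q2) * (Sb + β * Ss) + α * (u t x - v s y) +
      ((L ^ 2 + 1 + Ss ^ 2) + (2 * Sb + (L + 2 * L * (Qm + 1) + 2 + (Qm + 1))) +
       β * (2 * Ss + (L + 2 * L * (Qm + 1) + 2 + (Qm + 1))) + 1) * κ + m W := by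
  have hl := hLip t ht x y
  have n1 := eunorm_nonneg (b t x - b t y)
  have n2 := matNorm_nonneg (σ t x - σ t y)
  have hSR : matNorm (σ t x - σ s y) ≤ L * eunorm (x - y) + 1 / A := by
    have := matNorm_add_le (σ t x - σ t y) (σ t y - σ s y)
    rw [sub_add_sub_cancel] at this
    linarith
  have hbb : eunorm (b t x - b s y) ≤ L * eunorm (x - y) + 1 / A := by
    have := eunorm_add_le (b t x - b t y) (b t y - b s y)
    rw [sub_add_sub_cancel] at this
    linarith
  obtain ⟨i1, i2, i3, i4, i5⟩ := interior_est (σ t x) (σ s y) X Y (b t x) (b s y) q1 q2 Q1 Q2 (x - y)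
    A κ c0 L Ss Sb Qm hκ hκ1 hA hAκ hL hQm hc0 hw hAw (hS t ht x hx).1 (hS s hs y hy).1 (hS s hs y hy).2
    hSR hbb hq1 hq2 hQ1 hQ2 hXY
  have hSs : 0 ≤ Ss := (matNorm_nonneg _).trans (hS t ht x hx).1
  set z1 := Matrix.vecMul q1 (σ t x) with hz1
  set z2 := Matrix.vecMul q2 (σ s y) with hz2
  refine ⟨eunorm (x - y) * (1 + eunorm z2), ?_, i4, ?_⟩
  · have := eunorm_nonneg (x - y)
    have := eunorm_nonneg z2
    positivity
  have hz2R : eunorm z2 ≤ RA := by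
    refine i5.trans (le_trans ?_ hRA)
    have : eunorm (x - y) ≤ 2 := by linarith
    gcongr
  have f1 := (abs_le.1 (hβ t ht x hx (u t x) z1 z2)).2
  have f2 : f t x (u t x) z2 - f t x (v s y) z2 ≤ α * (u t x - v s y) := by
    have h := hα t ht x hx (u t x) (v s y) z2
    have hp : 0 < u t x - v s y := by linarith
    refine le_of_mul_le_mul_left ?_ hp
    nlinarith
  have f3 := (abs_le.1 (hfm t ht.1 x y hx hy (v s y) z2)).2
  have f4 := (abs_le.1 (hη3 (v s y) hR z2 hz2R)).2
  have f5 := mul_le_mul_of_nonneg_left i3 hβ0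
  unfold Vop at hV1 hV2
  rw [← hz1] at hV1
  rw [← hz2] at hV2
  linarith

theorem tendsto_of_eunorm_le {d : ℕ} (x : ℕ → Fin d → ℝ) (xh : Fin d → ℝ) (κ : ℕ → ℝ)
    (hκ : Tendsto κ atTop (𝓝 0)) (h : ∀ k, eunorm (x k - xh) ≤ κ k) : Tendsto x atTop (𝓝 xh) := by
  rw [tendsto_iff_dist_tendsto_zero]
  refine squeeze_zero (fun k => dist_nonneg) (fun k => ?_) hκ
  rw [dist_eq_norm]
  exact (norm_le_eunorm _).trans (h k)

theorem tendsto_of_abs_le (x : ℕ → ℝ) (xh : ℝ) (κ : ℕ → ℝ)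
    (hκ : Tendsto κ atTop (𝓝 0)) (h : ∀ k, |x k - xh| ≤ κ k) : Tendsto x atTop (𝓝 xh) := by
  rw [tendsto_iff_dist_tendsto_zero]
  exact squeeze_zero (fun k => dist_nonneg) (fun k => h k) hκ

set_option maxHeartbeats 2000000 in
theorem key_ineq {d : ℕ} (ℓ : (Fin d → ℝ) → ℝ)
    (b : ℝ → (Fin d → ℝ) → (Fin d → ℝ))
    (σ : ℝ → (Fin d → ℝ) → Matrix (Fin d) (Fin d) ℝ)
    (f : ℝ → (Fin d → ℝ) → ℝ → (Fin d → ℝ) → ℝ)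
    (g : ℝ → (Fin d → ℝ) → ℝ → ℝ)
    (h : (Fin d → ℝ) → ℝ)
    (φ ψ : ℝ → EReal)
    (hℓreg : ContDiff ℝ 3 ℓ)
    (hℓnorm : ∀ x, ℓ x = 0 → eunorm (gradVec ℓ x) = 1)
    (hK : IsCompact {x : Fin d → ℝ | ℓ x ≤ 0})
    (hb : ContinuousOn (fun p : ℝ × (Fin d → ℝ) => b p.1 p.2)
      (Set.Ici 0 ×ˢ Set.univ))
    (hσ : ContinuousOn (fun p : ℝ × (Fin d → ℝ) => σ p.1 p.2)
      (Set.Ici 0 ×ˢ Set.univ))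
    (hf : ContinuousOn
      (fun p : ℝ × (Fin d → ℝ) × ℝ × (Fin d → ℝ) => f p.1 p.2.1 p.2.2.1 p.2.2.2)
      (Set.Ici 0 ×ˢ {x | ℓ x ≤ 0} ×ˢ Set.univ ×ˢ Set.univ))
    (hg : ContinuousOn (fun p : ℝ × (Fin d → ℝ) × ℝ => g p.1 p.2.1 p.2.2)
      (Set.Ici 0 ×ˢ {x | ℓ x = 0} ×ˢ Set.univ))
    (T1 α L β : ℝ) (hL : 0 ≤ L) (hβ0 : 0 ≤ β)
    (hLip : ∀ t ∈ Set.Icc (0:ℝ) T1, ∀ x x' : Fin d → ℝ,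
        eunorm (b t x - b t x') + matNorm (σ t x - σ t x') ≤ L * eunorm (x - x'))
    (hα : ∀ t ∈ Set.Icc (0:ℝ) T1, ∀ x, ℓ x ≤ 0 → ∀ y y' : ℝ, ∀ z : Fin d → ℝ,
        (y - y') * (f t x y z - f t x y' z) ≤ α * (y - y')^2)
    (hβ : ∀ t ∈ Set.Icc (0:ℝ) T1, ∀ x, ℓ x ≤ 0 → ∀ y : ℝ, ∀ z z' : Fin d → ℝ,
        |f t x y z - f t x y z'| ≤ β * eunorm (z - z'))
    (hφ : ProperConvexLsc φ) (hψ : ProperConvexLsc ψ)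
    (hgdec : ∀ t ≥ (0:ℝ), ∀ x, ℓ x = 0 → ∀ r r' : ℝ, r ≤ r' → g t x r' ≤ g t x r)
    (m : ℝ → ℝ)
    (hmcont : ContinuousOn m (Set.Ici 0)) (hm0 : m 0 = 0)
    (hfm : ∀ t ≥ (0:ℝ), ∀ x y : Fin d → ℝ, ℓ x ≤ 0 → ℓ y ≤ 0 →
      ∀ r : ℝ, ∀ p : Fin d → ℝ,
        |f t x r p - f t y r p| ≤ m (eunorm (x - y) * (1 + eunorm p)))
    (Ss Sb : ℝ)
    (hS : ∀ t ∈ Set.Icc 0 T1, ∀ y, ℓ y ≤ 0 → matNorm (σ t y) ≤ Ss ∧ eunorm (b t y) ≤ Sb)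
    (u v : ℝ → (Fin d → ℝ) → ℝ)
    (hu : IsViscSubsolution ℓ b σ f g h φ ψ u)
    (hv : IsViscSupersolution ℓ b σ f g h φ ψ v)
    (th : ℝ) (hth : th ∈ Set.Ioo 0 T1) (xh : Fin d → ℝ) (hxh : ℓ xh ≤ 0)
    (hlt : v th xh < u th xh) (P δ Ct c0 : ℝ) (hδ : 0 < δ) (hCt : 0 ≤ Ct) (hc0 : 0 ≤ c0)
    (hstar : ∀ t ∈ Set.Icc 0 T1, ∀ x, ℓ x ≤ 0 → u t x - v t x ≤ u th xh - v th xh + P * (t - th)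
      + dotp ((2 * δ) • gradVec ℓ xh) (x - xh) + Ct * (t - th) ^ 2 + c0 * eunorm (x - xh) ^ 2) :
    P ≤ c0 * Ss ^ 2 + eunorm ((2 * δ) • gradVec ℓ xh) * (Sb + β * Ss) + α * (u th xh - v th xh) := by
  obtain ⟨huc, -, huφ, huψ, huV⟩ := hu
  obtain ⟨hvc, -, hvφ, hvψ, hvV⟩ := hv
  obtain ⟨aφ, bφ, cφ, hφ1, hφ2, hφ3, hφ4, hφ5⟩ := slope_lemma φ hφ _ _ (hvφ th hth.1 xh hxh)
    (huφ th hth.1 xh hxh) hlt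
  obtain ⟨sg, cψ, aψ, bψ, hsg⟩ : ∃ sg cψ aψ bψ : ℝ, ℓ xh = 0 → v th xh < aψ ∧ bψ < u th xh ∧
      (∀ r, bψ ≤ r → ψ r ≠ ⊤ → (cψ : EReal) ≤ leftD ψ r) ∧
      (∀ r, r ≤ aψ → ψ r ≠ ⊤ → rightD ψ r ≤ (cψ : EReal)) ∧
      g th xh (u th xh) - cψ ≤ sg ∧ sg ≤ g th xh (v th xh) - cψ := by
    by_cases h0 : ℓ xh = 0
    · obtain ⟨aψ, bψ, cψ, hψ1, hψ2, hψ3, hψ4, hψ5⟩ := slope_lemma ψ hψ _ _ (hvψ th hth.1 xh h0)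
        (huψ th hth.1 xh h0) hlt
      refine ⟨g th xh (u th xh) - cψ, cψ, aψ, bψ, fun _ => ⟨hψ1, hψ3, hψ4, hψ5, le_rfl, ?_⟩⟩
      have := hgdec th hth.1.le xh h0 _ _ hlt.le
      linarith
    · exact ⟨0, 0, 0, 0, fun h => absurd h h0⟩
  have hsub : (Set.Icc 0 T1 ×ˢ {x : Fin d → ℝ | ℓ x ≤ 0}) ⊆ (Set.Ici (0:ℝ) ×ˢ {x | ℓ x ≤ 0}) :=
    fun p hp => ⟨hp.1.1, hp.2⟩
  obtain ⟨R, hR⟩ : ∃ R, ∀ t ∈ Set.Icc 0 T1, ∀ x, ℓ x ≤ 0 → |v t x| ≤ R := by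
    obtain ⟨S1, h1⟩ := (isCompact_Icc.prod hK).bddAbove_image (hvc.mono hsub).abs
    exact ⟨S1, fun t ht x hx => h1 ⟨(t, x), ⟨ht, hx⟩, rfl⟩⟩
  set n := gradVec ℓ xh with hn
  set Q1 := (sg + δ) • n with hQ1
  set Q2 := (sg - δ) • n with hQ2
  have hQ12 : Q1 - Q2 = (2 * δ) • n := by rw [hQ1, hQ2]; module
  set Qm := max (eunorm Q1) (eunorm Q2) with hQm
  have hQm0 : 0 ≤ Qm := (eunorm_nonneg Q1).trans (le_max_left _ _)
  obtain ⟨η, hη0, hη⟩ := eta_exists _ hK T1 b σ f hb hσ hf R (fun A => (A * 2 + Qm + 1) * Ss)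
  rw [← hQ12] at hstar
  have D := fun k : ℕ => doubling _ hK T1 u v (huc.mono hsub) (hvc.mono hsub) th hth xh hxh P Q1 Q2 Ct c0
    hCt hc0 hstar (1 / ((k : ℝ) + 1)) (by positivity) η hη0
  choose A hA1 hA2 t ht s hs x hx y hy p1 p2 q1 q2 X Y e1 e2 e3 e4 e5 e6 e7 e8 e9 e10 e11 e12 using D
  have hκ : Tendsto (fun k : ℕ => 1 / ((k : ℝ) + 1)) atTop (𝓝 0) := tendsto_one_div_add_atTop_nhds_zero_nat
  have tt : Tendsto t atTop (𝓝 th) := tendsto_of_abs_le _ _ _ hκ e1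
  have ts : Tendsto s atTop (𝓝 th) := tendsto_of_abs_le _ _ _ hκ e2
  have tx : Tendsto x atTop (𝓝 xh) := tendsto_of_eunorm_le _ _ _ hκ e3
  have ty : Tendsto y atTop (𝓝 xh) := tendsto_of_eunorm_le _ _ _ hκ e4
  have tu : Tendsto (fun k => u (t k) (x k)) atTop (𝓝 (u th xh)) := by
    have hc := huc (th, xh) ⟨hth.1.le, hxh⟩
    have h2 : Tendsto (fun k => (t k, x k)) atTop (𝓝[Set.Ici (0:ℝ) ×ˢ {x | ℓ x ≤ 0}] (th, xh)) :=
      tendsto_nhdsWithin_iff.2 ⟨tt.prodMk_nhds tx, Eventually.of_forall fun k => ⟨(ht k).1.le, hx k⟩⟩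
    exact hc.tendsto.comp h2
  have tv : Tendsto (fun k => v (s k) (y k)) atTop (𝓝 (v th xh)) := by
    have hc := hvc (th, xh) ⟨hth.1.le, hxh⟩
    have h2 : Tendsto (fun k => (s k, y k)) atTop (𝓝[Set.Ici (0:ℝ) ×ˢ {x | ℓ x ≤ 0}] (th, xh)) :=
      tendsto_nhdsWithin_iff.2 ⟨ts.prodMk_nhds ty, Eventually.of_forall fun k => ⟨(hs k).1.le, hy k⟩⟩
    exact hc.tendsto.comp h2
  have hℓc : Continuous ℓ := hℓreg.continuous
  have hV1 : ∀ᶠ k in atTop, Vop b σ f u (t k) (x k) (p1 k) (q1 k) (X k) + cφ ≤ 0 := by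
    have main : ∀ᶠ k in atTop, ((Vop b σ f u (t k) (x k) (p1 k) (q1 k) (X k) : ℝ) : EReal)
        + leftD φ (u (t k) (x k)) ≤ 0 := by
      rcases lt_or_eq_of_le hxh with h0 | h0
      · filter_upwards [((hℓc.tendsto xh).comp tx).eventually (gt_mem_nhds h0)] with k hk
        exact (huV (t k) (ht k).1 (x k) (hx k) _ _ _ (e10 k)).1 hk
      · obtain ⟨g1, g2, g3, g4, g5, g6⟩ := hsg h0
        have hex := bd_excl ℓ hℓreg hℓnorm hK g hg t (fun k => u (t k) (x k)) A
          (fun k : ℕ => 1 / ((k : ℝ) + 1)) x y q1 th (u th xh) xh tt hth.1 tu tx hκ h0 hy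
          (fun k => zero_le_one.trans (hA2 k)) e6 sg δ cψ hδ g5 e7
        filter_upwards [hex, tu.eventually (lt_mem_nhds g2)] with k hk hk2
        rcases lt_or_eq_of_le (show ℓ (x k) ≤ 0 from hx k) with h1 | h1
        · exact (huV (t k) (ht k).1 (x k) (hx k) _ _ _ (e10 k)).1 h1
        · rcases (huV (t k) (ht k).1 (x k) (hx k) _ _ _ (e10 k)).2 h1 with h2 | h2
          · exact h2
          · exfalso
            have h3 := ereal_real_add_le _ cψ _ (g3 _ hk2.le (huψ _ (ht k).1 _ h1)) h2
            exact absurd (hk h1) (not_lt.2 h3)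
    filter_upwards [main, tu.eventually (lt_mem_nhds hφ3)] with k hk hk2
    exact ereal_real_add_le _ cφ _ (hφ4 _ hk2.le (huφ _ (ht k).1 _ (hx k))) hk
  have hV2 : ∀ᶠ k in atTop, 0 ≤ Vop b σ f v (s k) (y k) (p2 k) (q2 k) (Y k) + cφ := by
    have main : ∀ᶠ k in atTop, 0 ≤ ((Vop b σ f v (s k) (y k) (p2 k) (q2 k) (Y k) : ℝ) : EReal)
        + rightD φ (v (s k) (y k)) := by
      rcases lt_or_eq_of_le hxh with h0 | h0
      · filter_upwards [((hℓc.tendsto xh).comp ty).eventually (gt_mem_nhds h0)] with k hk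
        exact (hvV (s k) (hs k).1 (y k) (hy k) _ _ _ (e11 k)).1 hk
      · obtain ⟨g1, g2, g3, g4, g5, g6⟩ := hsg h0
        have hex := bd_excl_super ℓ hℓreg hℓnorm hK g hg s (fun k => v (s k) (y k)) A
          (fun k : ℕ => 1 / ((k : ℝ) + 1)) x y q2 th (v th xh) xh ts hth.1 tv ty hκ h0 hx
          (fun k => zero_le_one.trans (hA2 k)) e6 sg δ cψ hδ g6 e8
        filter_upwards [hex, tv.eventually (gt_mem_nhds g1)] with k hk hk2
        rcases lt_or_eq_of_le (show ℓ (y k) ≤ 0 from hy k) with h1 | h1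
        · exact (hvV (s k) (hs k).1 (y k) (hy k) _ _ _ (e11 k)).1 h1
        · rcases (hvV (s k) (hs k).1 (y k) (hy k) _ _ _ (e11 k)).2 h1 with h2 | h2
          · exact h2
          · exfalso
            have h3 := ereal_real_add_ge _ cψ _ (g4 _ hk2.le (hvψ _ (hs k).1 _ h1)) h2
            exact absurd (hk h1) (not_lt.2 h3)
    filter_upwards [main, tv.eventually (gt_mem_nhds hφ1)] with k hk hk2
    exact ereal_real_add_ge _ cφ _ (hφ5 _ hk2.le (hvφ _ (hs k).1 _ (hy k))) hk
  refine le_of_forall_pos_le_add fun ε hε => ?_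
  set M1 := ((L ^ 2 + 1 + Ss ^ 2) + (2 * Sb + (L + 2 * L * (Qm + 1) + 2 + (Qm + 1))) +
       β * (2 * Ss + (L + 2 * L * (Qm + 1) + 2 + (Qm + 1))) + 1) with hM1
  obtain ⟨ρ, hρ, hmρ⟩ : ∃ ρ > 0, ∀ w, 0 ≤ w → w < ρ → m w ≤ ε := by
    have hc := hmcont 0 (Set.mem_Ici.2 le_rfl)
    have h1 : ∀ᶠ w in 𝓝[Set.Ici 0] (0:ℝ), m w < ε := hc.eventually (gt_mem_nhds (by rw [hm0]; exact hε))
    rw [eventually_nhdsWithin_iff, Metric.eventually_nhds_iff] at h1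
    obtain ⟨ρ, hρ, h2⟩ := h1
    refine ⟨ρ, hρ, fun w hw hw2 => (h2 ?_ hw).le⟩
    rw [Real.dist_eq, sub_zero, abs_of_nonneg hw]; exact hw2
  have hWlim : Tendsto (fun k : ℕ => (2 + Ss * (1 + 2 * (Qm + 1))) * (1 / ((k : ℝ) + 1))) atTop (𝓝 0) := by
    have := hκ.const_mul (2 + Ss * (1 + 2 * (Qm + 1)))
    rwa [mul_zero] at this
  have hlim : Tendsto (fun k : ℕ => c0 * Ss ^ 2 + eunorm (Q1 - Q2) * (Sb + β * Ss)
      + α * (u (t k) (x k) - v (s k) (y k)) + M1 * (1 / ((k : ℝ) + 1)) + ε + 1 / ((k : ℝ) + 1)) atTop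
      (𝓝 (c0 * Ss ^ 2 + eunorm (Q1 - Q2) * (Sb + β * Ss)
      + α * (u th xh - v th xh) + M1 * 0 + ε + 0)) :=
    ((((((tu.sub tv).const_mul α).const_add _).add (hκ.const_mul M1)).add_const ε).add hκ)
  have hfin : P ≤ c0 * Ss ^ 2 + eunorm (Q1 - Q2) * (Sb + β * Ss)
      + α * (u th xh - v th xh) + M1 * 0 + ε + 0 := by
    refine ge_of_tendsto hlim ?_
    filter_upwards [hV1, hV2, tu.eventually (lt_mem_nhds hφ3), tv.eventually (gt_mem_nhds hφ1),
      hWlim.eventually (gt_mem_nhds hρ)] with k k1 k2 k3 k4 k5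
    have htk : t k ∈ Set.Icc 0 T1 := ⟨(ht k).1.le, (ht k).2.le⟩
    have hsk : s k ∈ Set.Icc 0 T1 := ⟨(hs k).1.le, (hs k).2.le⟩
    obtain ⟨η1, η2, η3⟩ := hη (A k) (hA2 k) (t k) htk (s k) hsk (e5 k) (y k) (hy k)
    have hκ0 : (0:ℝ) < 1 / ((k:ℝ) + 1) := by positivity
    have hκ1 : 1 / ((k:ℝ) + 1) ≤ 1 := by
      rw [div_le_one (by positivity)]
      have : (0:ℝ) ≤ k := Nat.cast_nonneg k
      linarith
    have hAκ : 1 / A k ≤ 1 / ((k:ℝ) + 1) := by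
      have := hA1 k
      rw [one_div_one_div] at this
      exact one_div_le_one_div_of_le (by positivity) this
    have hw : eunorm (x k - y k) ≤ 2 * (1 / ((k:ℝ) + 1)) := by
      have h1 := eunorm_add_le (x k - xh) (xh - y k)
      rw [sub_add_sub_cancel, eunorm_sub_comm xh] at h1
      have := e3 k
      have := e4 k
      linarith
    obtain ⟨W, W1, W2, W3⟩ := point_est ℓ b σ f T1 α L β hL hβ0 hLip hα hβ m hfm Ss Sb hS u v (t k) (s k)
      htk hsk (x k) (y k) (hx k) (hy k) (p1 k) (p2 k) (q1 k) (q2 k) Q1 Q2 (X k) (Y k) (A k) _ c0 Qm R _ cφ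
      hκ0 hκ1 (hA2 k) hAκ hQm0 hc0 hw (e6 k) (e7 k) (e8 k) (le_max_left _ _) (le_max_right _ _) (e12 k)
      η1 η2 η3 (hR _ hsk _ (hy k)) le_rfl (by linarith) k1 k2
    have hm1 := hmρ W W1 (lt_of_le_of_lt W2 k5)
    have := e9 k
    rw [← hM1] at W3
    linarith
  rw [hQ12] at hfin
  linarith

theorem exp_taylor (ρ T1 : ℝ) : ∃ C, 0 ≤ C ∧ ∀ t ∈ Set.Icc 0 T1, ∀ s ∈ Set.Icc 0 T1,
    Real.exp (ρ * s) ≤ Real.exp (ρ * t) + ρ * Real.exp (ρ * t) * (s - t) + C * (s - t) ^ 2 := by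
  obtain ⟨C, hC, h⟩ := taylor_C2 (fun t : ℝ => Real.exp (ρ * t)) (by fun_prop) (Set.Icc 0 T1)
    (Metric.isBounded_Icc 0 T1)
  refine ⟨C, hC, fun t ht s hs => ?_⟩
  have h1 := (abs_le.1 (h t ht s hs)).2
  have hd : HasDerivAt (fun t : ℝ => Real.exp (ρ * t)) (Real.exp (ρ * t) * ρ) t := by
    have := ((hasDerivAt_id t).const_mul ρ).exp
    simpa using this
  rw [hd.hasFDerivAt.fderiv, Real.norm_eq_abs, sq_abs] at h1
  simp at h1
  linarith

/-- **Comparison principle** (proof of Theorem 3 of Maticiuc–Răşcanu): under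
the standing assumptions together with the decreasingness of `r ↦ g(t,x,r)` and
a modulus of continuity for `f` in the space variable, any viscosity
subsolution `u` lies below any viscosity supersolution `v` on `[0,T] × cl(D)`
(both starting from the same initial datum `h`). -/
theorem pvi_comparison
    {d : ℕ}
    (ℓ : (Fin d → ℝ) → ℝ)
    (b : ℝ → (Fin d → ℝ) → (Fin d → ℝ))
    (σ : ℝ → (Fin d → ℝ) → Matrix (Fin d) (Fin d) ℝ)
    (f : ℝ → (Fin d → ℝ) → ℝ → (Fin d → ℝ) → ℝ)
    (g : ℝ → (Fin d → ℝ) → ℝ → ℝ)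
    (h : (Fin d → ℝ) → ℝ)
    (φ ψ : ℝ → EReal)
    -- the domain `D = {ℓ < 0}`, with boundary `Bd(D) = {ℓ = 0}`
    (hℓreg : ContDiff ℝ 3 ℓ) (hℓbdd : ∃ C : ℝ, ∀ x, |ℓ x| ≤ C)
    (hℓnorm : ∀ x, ℓ x = 0 → eunorm (gradVec ℓ x) = 1)
    (hDconn : IsConnected {x : Fin d → ℝ | ℓ x < 0})
    (hDbdd : Bornology.IsBounded {x : Fin d → ℝ | ℓ x < 0})
    -- continuity of the data
    (hb : ContinuousOn (fun p : ℝ × (Fin d → ℝ) => b p.1 p.2)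
      (Set.Ici 0 ×ˢ Set.univ))
    (hσ : ContinuousOn (fun p : ℝ × (Fin d → ℝ) => σ p.1 p.2)
      (Set.Ici 0 ×ˢ Set.univ))
    (hf : ContinuousOn
      (fun p : ℝ × (Fin d → ℝ) × ℝ × (Fin d → ℝ) => f p.1 p.2.1 p.2.2.1 p.2.2.2)
      (Set.Ici 0 ×ˢ {x | ℓ x ≤ 0} ×ˢ Set.univ ×ˢ Set.univ))
    (hg : ContinuousOn (fun p : ℝ × (Fin d → ℝ) × ℝ => g p.1 p.2.1 p.2.2)
      (Set.Ici 0 ×ˢ {x | ℓ x = 0} ×ˢ Set.univ))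
    (hh : ContinuousOn h {x | ℓ x ≤ 0})
    -- quantitative assumptions on `b, σ, f, g`
    (hq : ∀ T > (0:ℝ), ∃ α L β γ : ℝ, 0 ≤ L ∧ 0 ≤ β ∧ 0 ≤ γ ∧
      (∀ t ∈ Set.Icc (0:ℝ) T, ∀ x x' : Fin d → ℝ,
        eunorm (b t x - b t x') + matNorm (σ t x - σ t x') ≤ L * eunorm (x - x')) ∧
      (∀ t ∈ Set.Icc (0:ℝ) T, ∀ x, ℓ x ≤ 0 → ∀ y y' : ℝ, ∀ z : Fin d → ℝ,
        (y - y') * (f t x y z - f t x y' z) ≤ α * (y - y')^2) ∧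
      (∀ t ∈ Set.Icc (0:ℝ) T, ∀ x, ℓ x ≤ 0 → ∀ y : ℝ, ∀ z z' : Fin d → ℝ,
        |f t x y z - f t x y z'| ≤ β * eunorm (z - z')) ∧
      (∀ t ∈ Set.Icc (0:ℝ) T, ∀ x, ℓ x ≤ 0 → ∀ y : ℝ,
        |f t x y 0| ≤ γ * (1 + |y|)) ∧
      (∀ t ∈ Set.Icc (0:ℝ) T, ∀ x, ℓ x = 0 → ∀ y y' : ℝ,
        (y - y') * (g t x y - g t x y') ≤ α * (y - y')^2) ∧
      (∀ t ∈ Set.Icc (0:ℝ) T, ∀ x, ℓ x = 0 → ∀ y : ℝ,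
        |g t x y| ≤ γ * (1 + |y|)))
    -- assumptions on `φ, ψ`
    (hφ : ProperConvexLsc φ) (hψ : ProperConvexLsc ψ)
    (hφ0 : φ 0 = 0) (hψ0 : ψ 0 = 0)
    (hφpos : ∀ y : ℝ, 0 ≤ φ y) (hψpos : ∀ y : ℝ, 0 ≤ ψ y)
    (hM : ∃ M : ℝ, 0 < M ∧ (∀ x, ℓ x ≤ 0 → φ (h x) ≤ (M : EReal)) ∧
      (∀ x, ℓ x = 0 → ψ (h x) ≤ (M : EReal)))
    -- compatibility assumptions, expressed through the Yosida approximations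
    -- `U = ∇φ_ε(y)`, `V = ∇ψ_ε(y)` (the unique solutions of `U ∈ ∂φ(y−εU)`,
    -- `V ∈ ∂ψ(y−εV)`)
    (hcompat : ∀ ε > (0:ℝ), ∀ t ≥ (0:ℝ), ∀ x, ℓ x = 0 → ∀ x', ℓ x' ≤ 0 →
      ∀ y : ℝ, ∀ zv : Fin d → ℝ, ∀ U V : ℝ,
        U ∈ subd φ (y - ε * U) → V ∈ subd ψ (y - ε * V) →
        U * g t x y ≤ max 0 (V * g t x y) ∧
        V * f t x' y zv ≤ max 0 (U * f t x' y zv))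
    (hgdec : ∀ t ≥ (0:ℝ), ∀ x, ℓ x = 0 → ∀ r r' : ℝ, r ≤ r' → g t x r' ≤ g t x r)
    (m : ℝ → ℝ)
    (hmcont : ContinuousOn m (Set.Ici 0)) (hm0 : m 0 = 0)
    (hmpos : ∀ r : ℝ, 0 ≤ r → 0 ≤ m r)
    (hfm : ∀ t ≥ (0:ℝ), ∀ x y : Fin d → ℝ, ℓ x ≤ 0 → ℓ y ≤ 0 →
      ∀ r : ℝ, ∀ p : Fin d → ℝ,
        |f t x r p - f t y r p| ≤ m (eunorm (x - y) * (1 + eunorm p)))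
    (T : ℝ) (hT : 0 < T)
    (u v : ℝ → (Fin d → ℝ) → ℝ)
    (hu : IsViscSubsolution ℓ b σ f g h φ ψ u)
    (hv : IsViscSupersolution ℓ b σ f g h φ ψ v) :
    ∀ t ∈ Set.Icc (0:ℝ) T, ∀ x : Fin d → ℝ, ℓ x ≤ 0 → u t x ≤ v t x := by
  intro t0 ht0 x0 hx0
  by_contra hcon
  have hlt0 : 0 < u t0 x0 - v t0 x0 := by push Not at hcon; linarith
  have hK := closure_compact ℓ hℓreg hℓnorm hDbdd
  set T1 := T + 1 with hT1
  obtain ⟨α, L, β, γ, hL, hβ0, -, hLip, hα, hβ, -, -, -⟩ := hq T1 (by linarith)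
  obtain ⟨Ss, Sb, hSs, hSb, hS⟩ := coef_bounds _ hK T1 b σ hb hσ
  obtain ⟨C, hC, hTay⟩ := ell_taylor ℓ hℓreg _ hK.isBounded
  obtain ⟨Gn, hGn⟩ := hK.bddAbove_image (continuous_eunorm.comp (gradVec_cont ℓ hℓreg)).continuousOn
  have hGn' : ∀ x, ℓ x ≤ 0 → eunorm (gradVec ℓ x) ≤ Gn := fun x hx => hGn ⟨x, hx, rfl⟩
  have hGn0 : 0 ≤ Gn := (eunorm_nonneg _).trans (hGn' x0 hx0)
  obtain ⟨Cl, hCl⟩ := hℓbdd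
  have hCl0 : 0 ≤ Cl := (abs_nonneg _).trans (hCl x0)
  have huc := hu.1
  have hvc := hv.1
  have hsub : (Set.Icc 0 T1 ×ˢ {x : Fin d → ℝ | ℓ x ≤ 0}) ⊆ (Set.Ici (0:ℝ) ×ˢ {x | ℓ x ≤ 0}) :=
    fun p hp => ⟨hp.1.1, hp.2⟩
  have hKT : IsCompact (Set.Icc 0 T1 ×ˢ {x : Fin d → ℝ | ℓ x ≤ 0}) := isCompact_Icc.prod hK
  obtain ⟨M, hMb⟩ := hKT.bddAbove_image ((huc.mono hsub).sub (hvc.mono hsub))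
  have hMb' : ∀ t ∈ Set.Icc 0 T1, ∀ x, ℓ x ≤ 0 → u t x - v t x ≤ M :=
    fun t ht x hx => hMb ⟨(t, x), ⟨ht, hx⟩, rfl⟩
  set m0 := u t0 x0 - v t0 x0 with hm0'
  have ht01 : t0 ∈ Set.Icc 0 T1 := ⟨ht0.1, by linarith [ht0.2]⟩
  obtain ⟨ρ, hρ1, hρ2⟩ : ∃ ρ, |α| + 1 ≤ ρ ∧ M + 1 < Real.exp ρ * m0 := by
    refine ⟨max (|α| + 1) ((M + 1) / m0), le_max_left _ _, ?_⟩
    rw [← div_lt_iff₀ hlt0]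
    have := Real.add_one_le_exp (max (|α| + 1) ((M + 1) / m0))
    have := le_max_right (|α| + 1) ((M + 1) / m0)
    linarith
  have hρ0 : 0 < ρ := by have := abs_nonneg α; linarith
  set θ0 := Real.exp (-(ρ * T)) * m0 with hθ0
  have hthetaPos : 0 < θ0 := mul_pos (Real.exp_pos _) hlt0
  set B := C * Ss ^ 2 + Gn * (Sb + β * Ss) with hB
  have hB0 : 0 ≤ B := by positivity
  obtain ⟨δ, hδ, hδ1, hδ2, hδ3⟩ : ∃ δ > 0, 2 * δ * Cl < θ0 ∧ 2 * δ * Cl ≤ 1 ∧ 2 * δ * B < θ0 := by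
    have hmin : 0 < min θ0 1 := lt_min hthetaPos one_pos
    have hden : 0 < Cl + B + 1 := by linarith
    refine ⟨min θ0 1 / (4 * (Cl + B + 1)), by positivity, ?_⟩
    set δ := min θ0 1 / (4 * (Cl + B + 1)) with hδ
    have hδp : 0 < δ := by positivity
    have e : 2 * δ * (Cl + B + 1) = min θ0 1 / 2 := by rw [hδ]; field_simp; ring
    have e1 := min_le_left θ0 1
    have e2 := min_le_right θ0 1
    have e3 : 0 ≤ δ * Cl := by positivity
    have e4 : 0 ≤ δ * B := by positivity
    refine ⟨by nlinarith, by nlinarith, by nlinarith⟩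
  have hFc : ContinuousOn (fun p : ℝ × (Fin d → ℝ) =>
      Real.exp (-(ρ * p.1)) * (u p.1 p.2 - v p.1 p.2 - 2 * δ * ℓ p.2))
      (Set.Icc 0 T1 ×ˢ {x : Fin d → ℝ | ℓ x ≤ 0}) := by
    have hℓc : Continuous ℓ := hℓreg.continuous
    have c1 : Continuous (fun p : ℝ × (Fin d → ℝ) => Real.exp (-(ρ * p.1))) := by fun_prop
    have c2 : Continuous (fun p : ℝ × (Fin d → ℝ) => 2 * δ * ℓ p.2) := by fun_prop
    exact c1.continuousOn.mul (((huc.mono hsub).sub (hvc.mono hsub)).sub c2.continuousOn)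
  obtain ⟨⟨th, xh⟩, ⟨hth, hxh⟩, hmax⟩ := hKT.exists_isMaxOn ⟨(t0, x0), ⟨ht01, hx0⟩⟩ hFc
  have hxh' : ℓ xh ≤ 0 := hxh
  have hth' : th ∈ Set.Icc 0 T1 := hth
  have hmax' : ∀ t ∈ Set.Icc 0 T1, ∀ x, ℓ x ≤ 0 →
      Real.exp (-(ρ * t)) * (u t x - v t x - 2 * δ * ℓ x) ≤
      Real.exp (-(ρ * th)) * (u th xh - v th xh - 2 * δ * ℓ xh) :=
    fun t ht x hx => hmax (a := (t, x)) ⟨ht, hx⟩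
  set θ := Real.exp (-(ρ * th)) * (u th xh - v th xh - 2 * δ * ℓ xh) with hθ
  have hthetaLe : θ0 ≤ θ := by
    refine le_trans ?_ (hmax' t0 ht01 x0 hx0)
    have h1 : Real.exp (-(ρ * T)) ≤ Real.exp (-(ρ * t0)) := by
      apply Real.exp_le_exp.2
      have := mul_le_mul_of_nonneg_left ht0.2 hρ0.le
      linarith
    have h2 : m0 ≤ m0 - 2 * δ * ℓ x0 := by nlinarith
    exact mul_le_mul h1 h2 hlt0.le (Real.exp_pos _).le
  have hθpos : 0 < θ := lt_of_lt_of_le hthetaPos hthetaLe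
  have hℓlow : ∀ x, -(2 * δ * ℓ x) ≤ 2 * δ * Cl := by
    intro x
    have := (abs_le.1 (hCl x)).1
    nlinarith
  have hth0 : 0 < th := by
    rcases lt_or_eq_of_le hth'.1 with h1 | h1
    · exact h1
    · exfalso
      have h2 := hu.2.1 xh hxh'
      have h3 := hv.2.1 xh hxh'
      rw [← h1, h2, h3] at hθ
      simp only [mul_zero, neg_zero, Real.exp_zero, one_mul, sub_self, zero_sub] at hθ
      have := hℓlow xh
      linarith
  have hthT : th < T1 := by
    rcases lt_or_eq_of_le hth'.2 with h1 | h1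
    · exact h1
    · exfalso
      have h2 := hMb' th hth' xh hxh'
      have h3 : u th xh - v th xh - 2 * δ * ℓ xh ≤ M + 1 := by
        have := hℓlow xh
        linarith
      have h4 : θ ≤ Real.exp (-(ρ * th)) * (M + 1) := mul_le_mul_of_nonneg_left h3 (Real.exp_pos _).le
      have h5 : Real.exp (-(ρ * th)) * (M + 1) < Real.exp (-(ρ * th)) * (Real.exp ρ * m0) :=
        mul_lt_mul_of_pos_left hρ2 (Real.exp_pos _)
      have h6 : Real.exp (-(ρ * th)) * (Real.exp ρ * m0) = θ0 := by
        rw [← mul_assoc, ← Real.exp_add, hθ0, h1, hT1]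
        congr 2
        ring
      linarith
  have hmul : ∀ t, Real.exp (ρ * t) * Real.exp (-(ρ * t)) = 1 := by
    intro t
    rw [← Real.exp_add]; simp
  have hub : ∀ t ∈ Set.Icc 0 T1, ∀ x, ℓ x ≤ 0 → u t x - v t x ≤ θ * Real.exp (ρ * t) + 2 * δ * ℓ x := by
    intro t ht x hx
    have h1 := mul_le_mul_of_nonneg_left (hmax' t ht x hx) (Real.exp_pos (ρ * t)).le
    rw [← mul_assoc, hmul, one_mul] at h1
    linarith
  have huv : u th xh - v th xh = θ * Real.exp (ρ * th) + 2 * δ * ℓ xh := by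
    have h1 : Real.exp (ρ * th) * θ = u th xh - v th xh - 2 * δ * ℓ xh := by
      rw [hθ, ← mul_assoc, hmul, one_mul]
    linarith
  set E := Real.exp (ρ * th) with hE
  have hE1 : 1 ≤ E := Real.one_le_exp (by positivity)
  have hθE : θ ≤ θ * E := le_mul_of_one_le_right hθpos.le hE1
  obtain ⟨Ce, hCe, hexp⟩ := exp_taylor ρ T1
  have hlt : v th xh < u th xh := by
    have := hℓlow xh
    linarith
  have key := key_ineq ℓ b σ f g h φ ψ hℓreg hℓnorm hK hb hσ hf hg T1 α L β hL hβ0 hLip hα hβ hφ hψ hgdec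
    m hmcont hm0 hfm Ss Sb hS u v hu hv th ⟨hth0, hthT⟩ xh hxh' hlt (θ * (ρ * E)) δ (θ * Ce) (2 * δ * C)
    hδ (by positivity) (by positivity) (by
      intro t ht x hx
      have h1 := hub t ht x hx
      have h2 := mul_le_mul_of_nonneg_left (hexp th hth' t ht) hθpos.le
      have h3 := (abs_le.1 (hTay xh hxh' x hx)).2
      have h4 := mul_le_mul_of_nonneg_left h3 (by positivity : (0:ℝ) ≤ 2 * δ)
      rw [dotp_smul_left, huv]
      rw [← hE] at h2
      linarith)
  have hn1 : eunorm ((2 * δ) • gradVec ℓ xh) ≤ 2 * δ * Gn := by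
    rw [eunorm_smul, abs_of_pos (by positivity)]
    exact mul_le_mul_of_nonneg_left (hGn' xh hxh') (by positivity)
  have hn2 := mul_le_mul_of_nonneg_right hn1 (by positivity : 0 ≤ Sb + β * Ss)
  have ha : α * (u th xh - v th xh) ≤ |α| * (θ * E) := by
    have h1 : u th xh - v th xh ≤ θ * E := by
      have : 0 ≤ δ * (-ℓ xh) := mul_nonneg hδ.le (by linarith)
      rw [huv]; linarith
    have h2 : 0 ≤ u th xh - v th xh := by linarith
    calc α * (u th xh - v th xh) ≤ |α| * (u th xh - v th xh) :=
          mul_le_mul_of_nonneg_right (le_abs_self α) h2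
      _ ≤ |α| * (θ * E) := mul_le_mul_of_nonneg_left h1 (abs_nonneg α)
  have hfin : θ * E ≤ (ρ - |α|) * (θ * E) :=
    le_mul_of_one_le_left (by positivity) (by linarith)
  have hBe : 2 * δ * B = 2 * δ * C * Ss ^ 2 + 2 * δ * Gn * (Sb + β * Ss) := by rw [hB]; ring
  linarith
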